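/- arXiv:2108.09230 — 2 statements merged into one kernel-verified Lean document; each statement's English description precedes it below -/
import Mathlib

section
/- There exists a constant C > 0 such that the following holds. Let G be a graph with d(G) ≥ C, let D > 0 be a real number, let s = D/d(G), and let g(s) = C·(1 + log s)^5. Then G contains at least one of the following: (i) a minor J with d(J) ≥ D, or (ii) a subgraph H with v(H) ≤ g(s) · D^2 / d(G) and d(H) ≥ d(G) / g(s). -/
open SimpleGraph

/-- Density of a graph: `e(G) / v(G)`. -/
noncomputable def SimpleGraph.density {V : Type*} (G : SimpleGraph V) : ℝ :=
  (Nat.card G.edgeSet : ℝ) / (Nat.card V : ℝ)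

/-- Density of a subgraph: its number of edges divided by its number of vertices. -/
noncomputable def SimpleGraph.Subgraph.density {V : Type*} {G : SimpleGraph V}
    (H : G.Subgraph) : ℝ :=
  (Nat.card H.edgeSet : ℝ) / (Nat.card H.verts : ℝ)

/-- A model of `H` in `G`: pairwise disjoint branch sets, each inducing a connected
subgraph of `G`, with an edge of `G` between branch sets of adjacent vertices of `H`. -/
def SimpleGraph.IsMinorModel {V : Type*} {W : Type*} (G : SimpleGraph V) (H : SimpleGraph W)
    (X : W → Set V) : Prop :=
  (Pairwise fun i j => Disjoint (X i) (X j)) ∧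
  (∀ i, (G.induce (X i)).Connected) ∧
  (∀ i j, H.Adj i j → ∃ u ∈ X i, ∃ v ∈ X j, G.Adj u v)

/-- `G` has an `H` minor iff `G` contains a model of `H`. -/
def SimpleGraph.HasMinor {V : Type*} {W : Type*} (G : SimpleGraph V) (H : SimpleGraph W) : Prop :=
  ∃ X : W → Set V, G.IsMinorModel H X

namespace DI
open Finset Classical

noncomputable def nb {V : Type} [Fintype V] (G : SimpleGraph V) (v : V) : Finset V :=
  univ.filter (fun w => G.Adj v w)

lemma mem_nb {V : Type} [Fintype V] {G : SimpleGraph V} {v w : V} : w ∈ nb G v ↔ G.Adj v w := by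
  simp [nb]

/-- balanced colouring -/
lemma coloring_aux {α ι : Type} [Fintype ι] (S : ι → Finset α) (m : ℕ) (hm : 0 < m)
    (s : Finset α) : ∃ f : α → Fin m,
      (m:ℝ) * ∑ i, ∑ j, (((S i ∩ s).filter (fun b => f b = j)).card : ℝ) ^ 2
        ≤ ∑ i, (((S i ∩ s).card : ℝ) ^ 2 + m * ((S i ∩ s).card : ℝ)) := by
  induction s using Finset.induction_on with
  | empty => exact ⟨fun _ => ⟨0, hm⟩, by simp⟩
  | insert a s ha ih =>
    obtain ⟨f, hf⟩ := ih
    set x : ι → Fin m → ℝ := fun i j => (((S i ∩ s).filter (fun b => f b = j)).card : ℝ) with hx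
    set T : Finset ι := univ.filter (fun i => a ∈ S i) with hT
    have hne : (univ : Finset (Fin m)).Nonempty := ⟨⟨0, hm⟩, mem_univ _⟩
    obtain ⟨j0, -, hj0⟩ := Finset.exists_min_image univ (fun j => ∑ i ∈ T, x i j) hne
    have hsumx : ∀ i, ∑ j, x i j = ((S i ∩ s).card : ℝ) := by
      intro i
      have := Finset.card_eq_sum_card_fiberwise (s := S i ∩ s) (t := univ) (f := f) (by simp)
      rw [this]; push_cast; rfl
    have havg : (m:ℝ) * ∑ i ∈ T, x i j0 ≤ ∑ i ∈ T, ((S i ∩ s).card : ℝ) := by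
      calc (m:ℝ) * ∑ i ∈ T, x i j0 = ∑ j : Fin m, ∑ i ∈ T, x i j0 := by simp
        _ ≤ ∑ j : Fin m, ∑ i ∈ T, x i j := Finset.sum_le_sum (fun j hj => hj0 j hj)
        _ = ∑ i ∈ T, ∑ j, x i j := Finset.sum_comm
        _ = _ := by simp only [hsumx]
    refine ⟨Function.update f a j0, ?_⟩
    have hxn : ∀ i j, ((((S i ∩ insert a s).filter (fun b => Function.update f a j0 b = j)).card : ℝ))
        = x i j + if (a ∈ S i ∧ j = j0) then 1 else 0 := by
      intro i j
      have key : (S i ∩ insert a s).filter (fun b => Function.update f a j0 b = j)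
          = if (a ∈ S i ∧ j = j0) then insert a ((S i ∩ s).filter (fun b => f b = j))
            else ((S i ∩ s).filter (fun b => f b = j)) := by
        ext b
        by_cases hb : b = a
        · subst hb
          by_cases h : b ∈ S i <;> by_cases h2 : j = j0 <;> simp [h, h2, ha, eq_comm] 
        · by_cases h : (a ∈ S i ∧ j = j0) <;> simp [h, hb, Function.update_of_ne] 
      rw [key]
      by_cases h : (a ∈ S i ∧ j = j0)
      · rw [if_pos h, if_pos h, card_insert_of_notMem (by simp [ha])]; push_cast; rfl
      · rw [if_neg h, if_neg h]; simp [hx]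
    have hcn : ∀ i, ((S i ∩ insert a s).card : ℝ) = ((S i ∩ s).card : ℝ) + if a ∈ S i then 1 else 0 := by
      intro i
      by_cases h : a ∈ S i
      · rw [if_pos h, inter_insert_of_mem h, card_insert_of_notMem (by simp [ha])]; push_cast; rfl
      · rw [if_neg h, inter_insert_of_notMem h]; simp
    have h1 : ∑ i, ∑ j, ((((S i ∩ insert a s).filter (fun b => Function.update f a j0 b = j)).card : ℝ)) ^ 2
        = ∑ i, ∑ j, x i j ^ 2 + ∑ i ∈ T, (2 * x i j0 + 1) := by
      rw [hT, Finset.sum_filter, ← Finset.sum_add_distrib]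
      refine Finset.sum_congr rfl (fun i _ => ?_)
      simp only [hxn]
      by_cases h : a ∈ S i
      · simp only [h, true_and, if_true]
        have : ∀ j, (x i j + if j = j0 then (1:ℝ) else 0) ^ 2 = x i j ^ 2 + if j = j0 then (2 * x i j + 1) else 0 := by
          intro j; split_ifs <;> ring
        simp only [this, Finset.sum_add_distrib]
        simp
      · simp [h]
    have h2 : ∑ i, (((S i ∩ insert a s).card : ℝ) ^ 2 + m * ((S i ∩ insert a s).card : ℝ))
        = ∑ i, (((S i ∩ s).card : ℝ) ^ 2 + m * ((S i ∩ s).card : ℝ)) + ∑ i ∈ T, (2 * ((S i ∩ s).card : ℝ) + 1 + m) := by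
      rw [hT, Finset.sum_filter, ← Finset.sum_add_distrib]
      refine Finset.sum_congr rfl (fun i _ => ?_)
      rw [hcn]
      split_ifs <;> ring
    rw [h1, h2, mul_add]
    have h3 : (m:ℝ) * ∑ i ∈ T, (2 * x i j0 + 1) ≤ ∑ i ∈ T, (2 * ((S i ∩ s).card : ℝ) + 1 + m) := by
      simp only [Finset.sum_add_distrib, ← Finset.mul_sum, Finset.sum_const, nsmul_eq_mul]
      nlinarith [Nat.cast_nonneg (α := ℝ) T.card]
    linarith

/-- in a balanced colouring few sets (weighted) are badly split -/
lemma coloring {α ι : Type} [Fintype α] [Fintype ι] (S : ι → Finset α) (m : ℕ) (hm : 0 < m) :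
    ∃ f : α → Fin m, ∑ i ∈ univ.filter (fun i => ∃ j,
        2 * (m:ℝ) * (((S i).filter (fun b => f b = j)).card : ℝ) < ((S i).card : ℝ)), ((S i).card : ℝ) ^ 2
      ≤ 4 * (m:ℝ) ^ 2 * ∑ i, ((S i).card : ℝ) := by
  obtain ⟨f, hf⟩ := coloring_aux S m hm univ
  simp only [inter_univ] at hf
  refine ⟨f, ?_⟩
  set x : ι → Fin m → ℝ := fun i j => (((S i).filter (fun b => f b = j)).card : ℝ) with hx
  have hsumx : ∀ i, ∑ j, x i j = ((S i).card : ℝ) := by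
    intro i
    have := Finset.card_eq_sum_card_fiberwise (s := S i) (t := univ) (f := f) (by simp)
    rw [this]; push_cast; rfl
  have hdev : ∀ i, ∑ j, ((m:ℝ) * x i j - (S i).card) ^ 2 = (m:ℝ)^2 * ∑ j, x i j ^ 2 - m * ((S i).card : ℝ)^2 := by
    intro i
    have : ∀ j, ((m:ℝ) * x i j - (S i).card) ^ 2 = (m:ℝ)^2 * x i j ^ 2 - 2 * m * (S i).card * x i j + ((S i).card : ℝ)^2 := by
      intro j; ring
    simp only [this, Finset.sum_add_distrib, Finset.sum_sub_distrib, ← Finset.mul_sum, hsumx]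
    simp; ring
  have htot : ∑ i, ∑ j, ((m:ℝ) * x i j - (S i).card) ^ 2 ≤ (m:ℝ)^2 * ∑ i, ((S i).card : ℝ) := by
    simp only [hdev, Finset.sum_sub_distrib, ← Finset.mul_sum]
    rw [Finset.sum_add_distrib, ← Finset.mul_sum] at hf
    have hm' : (0:ℝ) < m := by exact_mod_cast hm
    have := mul_le_mul_of_nonneg_left hf hm'.le
    nlinarith
  set Bd := univ.filter (fun i => ∃ j, 2 * (m:ℝ) * x i j < ((S i).card : ℝ)) with hB
  have hb : ∀ i ∈ Bd, ((S i).card : ℝ) ^ 2 ≤ 4 * ∑ j, ((m:ℝ) * x i j - (S i).card) ^ 2 := by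
    intro i hi
    obtain ⟨j, hj⟩ := (mem_filter.1 hi).2
    have h1 : ((m:ℝ) * x i j - (S i).card) ^ 2 ≤ ∑ j, ((m:ℝ) * x i j - (S i).card) ^ 2 :=
      Finset.single_le_sum (f := fun j => ((m:ℝ) * x i j - (S i).card) ^ 2) (fun j _ => sq_nonneg _) (mem_univ j)
    have h0 : (0:ℝ) ≤ m * x i j := by positivity
    nlinarith
  calc ∑ i ∈ Bd, ((S i).card : ℝ) ^ 2 ≤ ∑ i ∈ Bd, 4 * ∑ j, ((m:ℝ) * x i j - (S i).card) ^ 2 :=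
        Finset.sum_le_sum hb
    _ ≤ ∑ i, 4 * ∑ j, ((m:ℝ) * x i j - (S i).card) ^ 2 :=
        Finset.sum_le_sum_of_subset_of_nonneg (subset_univ _)
          (fun i _ _ => by positivity)
    _ = 4 * ∑ i, ∑ j, ((m:ℝ) * x i j - (S i).card) ^ 2 := by rw [← Finset.mul_sum]
    _ ≤ _ := by nlinarith

/-- load of `v` -/
noncomputable def ld {V : Type} [Fintype V] (Z : V → Finset V) (v : V) : ℕ :=
  (univ.filter (fun u => v ∈ Z u)).card

lemma minload {V : Type} [Fintype V] (G : SimpleGraph V) (k : V → ℕ) (hk : ∀ u, k u ≤ (nb G u).card) :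
    ∃ Z : V → Finset V, (∀ u, Z u ⊆ nb G u) ∧ (∀ u, (Z u).card = k u) ∧
      ∀ u v w, v ∈ Z u → w ∈ nb G u → w ∉ Z u → ld Z v ≤ ld Z w + 1 := by
  set F : Finset (V → Finset V) := Fintype.piFinset (fun u => powersetCard (k u) (nb G u)) with hF
  have hne : F.Nonempty := by
    rw [hF, Fintype.piFinset_nonempty]
    intro u
    exact powersetCard_nonempty.2 (hk u)
  obtain ⟨Z, hZ, hmin⟩ := Finset.exists_min_image F (fun Z => ∑ v, (ld Z v) ^ 2) hne
  rw [hF, Fintype.mem_piFinset] at hZ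
  simp only [mem_powersetCard] at hZ
  refine ⟨Z, fun u => (hZ u).1, fun u => (hZ u).2, ?_⟩
  intro u v w hv hw hwZ
  have hvw : v ≠ w := fun h => hwZ (h ▸ hv)
  set Z' := Function.update Z u (insert w ((Z u).erase v)) with hZ'
  have hZ'F : Z' ∈ F := by
    rw [hF, Fintype.mem_piFinset]
    intro x
    rw [mem_powersetCard]
    by_cases hx : x = u
    · subst hx
      simp only [hZ', Function.update_self]
      refine ⟨?_, ?_⟩
      · intro y hy
        rcases mem_insert.1 hy with rfl | hy
        · exact hw
        · exact (hZ x).1 (mem_of_mem_erase hy)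
      · rw [card_insert_of_notMem (by simp [hwZ]), card_erase_of_mem hv, ← (hZ x).2]
        have : 0 < (Z x).card := card_pos.2 ⟨v, hv⟩
        omega
    · simp only [hZ', Function.update_of_ne hx]; exact hZ x
  have hle := hmin Z' hZ'F
  have l1 : ld Z' v + 1 = ld Z v := by
    unfold ld
    have : univ.filter (fun x => v ∈ Z' x) = (univ.filter (fun x => v ∈ Z x)).erase u := by
      ext x
      by_cases hx : x = u
      · subst hx; simp [hZ', hvw]
      · simp [hZ', hx, Function.update_of_ne]
    rw [this, card_erase_of_mem (by simp [hv])]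
    have : 0 < (univ.filter (fun x => v ∈ Z x)).card := card_pos.2 ⟨u, by simp [hv]⟩
    omega
  have l2 : ld Z' w = ld Z w + 1 := by
    unfold ld
    have : univ.filter (fun x => w ∈ Z' x) = insert u (univ.filter (fun x => w ∈ Z x)) := by
      ext x
      by_cases hx : x = u
      · subst hx; simp [hZ']
      · simp [hZ', hx, Function.update_of_ne]
    rw [this, card_insert_of_notMem (by simp [hwZ])]
  have l3 : ∀ x, x ≠ v → x ≠ w → ld Z' x = ld Z x := by
    intro x hxv hxw
    unfold ld
    congr 1
    ext y
    by_cases hy : y = u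
    · subst hy; simp [hZ', hxv, hxw]
    · simp [hZ', hy, Function.update_of_ne]
  have e1 : ∀ Y : V → Finset V, ∑ x, (ld Y x)^2 = (ld Y v)^2 + (ld Y w)^2 + ∑ x ∈ (univ.erase v).erase w, (ld Y x)^2 := by
    intro Y
    rw [← Finset.add_sum_erase univ _ (mem_univ v), ← Finset.add_sum_erase (univ.erase v) _ (mem_erase.2 ⟨hvw.symm, mem_univ w⟩)]
    ring
  have e2 : ∑ x ∈ (univ.erase v).erase w, (ld Z' x)^2 = ∑ x ∈ (univ.erase v).erase w, (ld Z x)^2 := by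
    refine Finset.sum_congr rfl (fun x hx => ?_)
    simp only [mem_erase] at hx
    rw [l3 x hx.2.1 hx.1]
  have hle' : ∑ x, (ld Z x)^2 ≤ ∑ x, (ld Z' x)^2 := hle
  rw [e1 Z, e1 Z', e2, l2, ← l1] at hle'
  rw [← l1]
  nlinarith

lemma sum_ld {V : Type} [Fintype V] (Z : V → Finset V) (W U : Finset V) :
    ∑ v ∈ W, (U.filter (fun u => v ∈ Z u)).card = ∑ u ∈ U, (Z u ∩ W).card := by
  simp only [card_filter]
  rw [Finset.sum_comm]
  refine Finset.sum_congr rfl (fun u _ => ?_)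
  rw [← card_filter]
  congr 1
  ext v; simp [and_comm]

end DI

namespace DI
open Finset Classical

/-- number of ordered adjacent pairs -/
noncomputable def E {V : Type} [Fintype V] (G : SimpleGraph V) : ℕ := ∑ v, (nb G v).card

noncomputable def prs {V : Type} [Fintype V] (G : SimpleGraph V) : Finset (V × V) :=
  univ.filter (fun p => G.Adj p.1 p.2)

lemma mem_prs {V : Type} [Fintype V] {G : SimpleGraph V} {p : V × V} : p ∈ prs G ↔ G.Adj p.1 p.2 := by
  simp [prs]

lemma E_eq {V : Type} [Fintype V] (G : SimpleGraph V) : E G = (prs G).card := by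
  rw [E, ← card_sigma]
  apply card_nbij' (fun p => (p.1, p.2)) (fun p => ⟨p.1, p.2⟩) <;> simp [Set.MapsTo, Set.LeftInvOn, mem_nb, mem_prs]

def quot {V : Type} (G : SimpleGraph V) (σ : V → V) : SimpleGraph V where
  Adj c c' := c ≠ c' ∧ ∃ x y, σ x = c ∧ σ y = c' ∧ G.Adj x y
  symm := ⟨by
    rintro a b ⟨h, x, y, hx, hy, hxy⟩
    exact ⟨h.symm, y, x, hy, hx, hxy.symm⟩⟩
  loopless := ⟨fun a h => h.1 rfl⟩

lemma quot_quot {V : Type} (G : SimpleGraph V) (σ φ : V → V) :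
    quot (quot G σ) φ = quot G (φ ∘ σ) := by
  ext c c'
  constructor
  · rintro ⟨h, x, y, rfl, rfl, -, a, b, rfl, rfl, hab⟩
    exact ⟨h, a, b, rfl, rfl, hab⟩
  · rintro ⟨h, a, b, rfl, rfl, hab⟩
    refine ⟨h, σ a, σ b, rfl, rfl, ?_, a, b, rfl, rfl, hab⟩
    intro he; apply h; simp [he]

lemma quot_id {V : Type} (G : SimpleGraph V) : quot G id = G := by
  ext c c'
  constructor
  · rintro ⟨h, x, y, rfl, rfl, hxy⟩; exact hxy
  · intro h; exact ⟨h.ne, c, c', rfl, rfl, h⟩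

lemma E_quot_le {V : Type} [Fintype V] (G : SimpleGraph V) (φ : V → V) : E (quot G φ) ≤ E G := by
  rw [E_eq, E_eq]
  calc (prs (quot G φ)).card ≤ ((prs G).image (fun p => (φ p.1, φ p.2))).card := by
        apply card_le_card
        rintro ⟨a, b⟩ h
        obtain ⟨_, x, y, hx, hy, hxy⟩ := mem_prs.1 h
        exact mem_image.2 ⟨(x, y), mem_prs.2 hxy, by simp at hx hy; simp [hx, hy]⟩
    _ ≤ _ := card_image_le

lemma E_merge {V : Type} [Fintype V] (G : SimpleGraph V) (u v : V) :
    E G ≤ E (quot G (fun x => if x = u then v else x)) + 2 + 2 * (nb G u ∩ nb G v).card := by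
  set φ : V → V := fun x => if x = u then v else x with hφ
  set R : Finset (V × V) := {(u, v), (v, u)} ∪ ((nb G u ∩ nb G v).image (fun y => (u, y)) ∪
    (nb G u ∩ nb G v).image (fun y => (y, u))) with hR
  have hRc : R.card ≤ 2 + 2 * (nb G u ∩ nb G v).card := by
    refine (card_union_le _ _).trans ?_
    refine add_le_add card_le_two ((card_union_le _ _).trans ?_)
    rw [two_mul]
    exact add_le_add card_image_le card_image_le
  have hin : ((prs G) \ R).card ≤ (prs (quot G φ)).card := by
    apply card_le_card_of_injOn (fun p => (φ p.1, φ p.2))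
    · rintro ⟨a, b⟩ hab
      simp only [coe_sdiff, Set.mem_sdiff, mem_coe, mem_prs, hR, mem_union, mem_insert, mem_singleton,
        mem_image, mem_inter, mem_nb, Prod.mk.injEq] at hab
      simp only [mem_coe, mem_prs]
      refine ⟨?_, a, b, rfl, rfl, hab.1⟩
      have := hab.1.ne
      simp only [hφ]
      split_ifs <;> grind
    · rintro ⟨a, b⟩ hab ⟨a', b'⟩ hab' he
      simp only [coe_sdiff, Set.mem_sdiff, mem_coe, mem_prs, hR, mem_union, mem_insert, mem_singleton,
        mem_image, mem_inter, mem_nb, Prod.mk.injEq] at hab hab'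
      simp only [Prod.mk.injEq, hφ] at he ⊢
      have h1 := hab.1.ne
      have h2 := hab'.1.ne
      have s1 := hab.1.symm
      have s2 := hab'.1.symm
      obtain ⟨e1, e2⟩ := he
      obtain ⟨k1, l1⟩ := hab
      obtain ⟨k2, l2⟩ := hab'
      push Not at l1 l2
      by_cases c1 : a = u <;> by_cases c2 : b = u <;> by_cases c3 : a' = u <;> by_cases c4 : b' = u <;>
        simp only [c1, c2, c3, c4, if_true, if_false] at e1 e2 <;> subst_vars <;> grind
  rw [E_eq, E_eq]
  have := card_le_card_sdiff_add_card (s := prs G) (t := R)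
  omega

/-- degree bound in a quotient -/
lemma card_nb_quot_le {V : Type} [Fintype V] (G : SimpleGraph V) (σ : V → V) (c : V) :
    (nb (quot G σ) c).card ≤ ∑ x ∈ univ.filter (fun x => σ x = c), (nb G x).card := by
  calc (nb (quot G σ) c).card ≤ ((univ.filter (fun x => σ x = c)).biUnion (fun x => (nb G x).image σ)).card := by
        apply card_le_card
        intro y hy
        obtain ⟨_, x, z, hx, hz, hxz⟩ := mem_nb.1 hy
        simp only [mem_biUnion, mem_filter, mem_univ, true_and, mem_image, mem_nb]
        exact ⟨x, hx, z, hxz, hz⟩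
    _ ≤ ∑ x ∈ univ.filter (fun x => σ x = c), ((nb G x).image σ).card := card_biUnion_le
    _ ≤ _ := sum_le_sum (fun _ _ => card_image_le)

def Dense {V : Type} [Fintype V] (G : SimpleGraph V) (d c : ℝ) : Prop :=
  ∃ Q : Finset V, Q.Nonempty ∧ (Q.card : ℝ) ≤ c * d ∧
    d * Q.card ≤ c * ∑ x ∈ Q, ((nb G x ∩ Q).card : ℝ)

def Out {V : Type} [Fintype V] (G : SimpleGraph V) (d : ℝ) (q : ℕ) : Prop :=
  ∃ (W : Finset V) (X : V → Finset V) (Γ : SimpleGraph V) (κ : ℕ), W.Nonempty ∧ q ≤ κ ∧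
    (∀ w ∈ W, w ∈ X w ∧ ∀ x ∈ X w, x = w ∨ G.Adj w x) ∧
    (∀ w ∈ W, ∀ w' ∈ W, w ≠ w' → Disjoint (X w) (X w')) ∧
    (∀ w ∈ W, (X w).card ≤ κ) ∧
    (∀ w ∈ W, ∀ w' ∈ W, Γ.Adj w w' → ∃ x ∈ X w, ∃ y ∈ X w', G.Adj x y) ∧
    2 * (1 - 12 / (q:ℝ)) * κ * d * W.card ≤ ∑ w ∈ W, ((nb Γ w ∩ W).card : ℝ)
end DI

namespace DI
open Finset Classical

noncomputable def sg {V : Type} (σ : V → V) (P : Finset V) (v : V) : V → V :=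
  fun x => if x ∈ P then v else σ x

lemma greedy_merge {V : Type} [Fintype V] (G : SimpleGraph V) (σ : V → V) (v : V) (M : Finset V)
    (thr : ℝ) (hM : ∀ u ∈ M, ∀ x, σ x = u ↔ x = u) (hvM : v ∉ M) (ℓ : ℕ) :
    (∃ P ⊆ M, P.card = ℓ ∧ (E (quot G σ) : ℝ) ≤ E (quot G (sg σ P v)) + ℓ * (2 + 2 * thr)) ∨
    (∃ P ⊆ M, P.card < ℓ ∧ ∀ u ∈ M \ P,
      thr < ((nb (quot G (sg σ P v)) u ∩ nb (quot G (sg σ P v)) v).card : ℝ)) := by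
  induction ℓ with
  | zero => 
    left
    refine ⟨∅, by simp, by simp, ?_⟩
    have : sg σ ∅ v = σ := by funext x; simp [sg]
    simp [this]
  | succ ℓ ih =>
    rcases ih with ⟨P, hPM, hPc, hE⟩ | ⟨P, hPM, hPc, h⟩
    · by_cases hst : ∀ u ∈ M \ P,
        thr < ((nb (quot G (sg σ P v)) u ∩ nb (quot G (sg σ P v)) v).card : ℝ)
      · right; exact ⟨P, hPM, by omega, hst⟩
      · left
        push Not at hst
        obtain ⟨u, hu, hle⟩ := hst
        obtain ⟨huM, huP⟩ := mem_sdiff.1 hu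
        refine ⟨insert u P, insert_subset huM hPM, by rw [card_insert_of_notMem huP, hPc], ?_⟩
        have hcomp : sg σ (insert u P) v = (fun x => if x = u then v else x) ∘ sg σ P v := by
          funext x
          have := hM u huM x
          have hvu : v ≠ u := fun h => hvM (h ▸ huM)
          simp only [sg, Function.comp, mem_insert]
          by_cases h1 : x = u
          · subst h1; simp [huP, this.2 rfl]
          · by_cases h2 : x ∈ P
            · simp [h1, h2]
            · have : σ x ≠ u := fun h => h1 (this.1 h)
              simp [h1, h2, this]
        rw [hcomp, ← quot_quot]
        have := E_merge (quot G (sg σ P v)) u v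
        have h3 : (E (quot G (sg σ P v)) : ℝ) ≤ E (quot (quot G (sg σ P v)) fun x => if x = u then v else x) + 2 + 2 * (nb (quot G (sg σ P v)) u ∩ nb (quot G (sg σ P v)) v).card := by
          exact_mod_cast this
        push_cast
        linarith
    · right; exact ⟨P, hPM, by omega, h⟩

lemma stuck_dense {V : Type} [Fintype V] (G : SimpleGraph V) (σ : V → V) (v : V) (M P : Finset V)
    (thr : ℝ) (hM : ∀ u ∈ M, ∀ x, σ x = u ↔ x = u) (hv : ∀ x, σ x = v ↔ x = v) (hvM : v ∉ M)
    (ℓ b : ℕ) (hthr : 0 ≤ thr)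
    (hfib : ∀ y, (univ.filter (fun x => σ x = y)).card ≤ ℓ + 1) (hdeg : ∀ u ∈ M, (nb G u).card ≤ b)
    (hPM : P ⊆ M) (hP : P.card < ℓ) (hℓ : ℓ < M.card)
    (hst : ∀ u ∈ M \ P, thr < ((nb (quot G (sg σ P v)) u ∩ nb (quot G (sg σ P v)) v).card : ℝ)) :
    ∃ Q : Finset V, Q.Nonempty ∧ Q.card ≤ M.card + (ℓ + 1) * ((nb G v).card + ℓ * b) ∧
      ((M.card : ℝ) - ℓ) * thr ≤ ∑ x ∈ Q, ((nb G x ∩ Q).card : ℝ) := by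
  set σP := sg σ P v with hσP
  set Γ := quot G σP with hΓ
  set T := univ.filter (fun y => σP y ∈ nb Γ v) with hT
  have hfibv : univ.filter (fun x => σP x = v) = insert v P := by
    ext x; simp only [hσP, sg, mem_filter, mem_univ, true_and, mem_insert]
    by_cases hx : x ∈ P
    · simp [hx]
    · simp [hx, hv]
  have hnbv : (nb Γ v).card ≤ (nb G v).card + ℓ * b := by
    refine (card_nb_quot_le G σP v).trans ?_
    rw [hfibv, sum_insert (fun h => hvM (hPM h))]
    have : ∑ x ∈ P, (nb G x).card ≤ P.card * b := by
      rw [← smul_eq_mul]; exact sum_le_card_nsmul _ _ _ (fun x hx => hdeg x (hPM hx))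
    have : P.card * b ≤ ℓ * b := Nat.mul_le_mul_right _ hP.le
    omega
  have hTc : T.card ≤ (ℓ + 1) * (nb Γ v).card := by
    rw [mul_comm]
    have : T = (nb Γ v).biUnion (fun c => univ.filter (fun y => σP y = c)) := by
      ext y; simp [hT]
    rw [this]
    apply card_biUnion_le_card_mul
    intro c hc
    have hcv : v ≠ c := (mem_nb.1 hc).ne
    refine le_trans (card_le_card ?_) (hfib c)
    intro y
    simp only [hσP, sg, mem_filter, mem_univ, true_and]
    by_cases hy : y ∈ P
    · simp [hy, hcv]
    · simp [hy]
  refine ⟨(M \ P) ∪ T, ?_, ?_, ?_⟩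
  · have : (M \ P).Nonempty := by
      rw [← card_pos]
      have := le_card_sdiff P M
      omega
    exact this.mono subset_union_left
  · refine (card_union_le _ _).trans ?_
    have h1 : (M \ P).card ≤ M.card := card_le_card sdiff_subset
    have h2 : (ℓ + 1) * (nb Γ v).card ≤ (ℓ + 1) * ((nb G v).card + ℓ * b) := Nat.mul_le_mul_left _ hnbv
    omega
  · have hkey : ∀ u ∈ M \ P, thr ≤ ((nb G u ∩ ((M \ P) ∪ T)).card : ℝ) := by
      intro u hu
      refine (hst u hu).le.trans ?_
      obtain ⟨huM, huP⟩ := mem_sdiff.1 hu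
      have : nb Γ u ∩ nb Γ v ⊆ (nb G u ∩ ((M \ P) ∪ T)).image σP := by
        intro c hc
        obtain ⟨hc1, hc2⟩ := mem_inter.1 hc
        obtain ⟨_, x, y, hx, hy, hxy⟩ := mem_nb.1 hc1
        have hxu : x = u := by
          simp only [hσP, sg] at hx
          split_ifs at hx with hxP
          · exact absurd (hx ▸ huM) hvM
          · exact (hM u huM x).1 hx
        subst hxu
        refine mem_image.2 ⟨y, ?_, hy⟩
        refine mem_inter.2 ⟨mem_nb.2 hxy, mem_union_right _ ?_⟩
        simp [hT, hy, hc2]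
      exact_mod_cast (card_le_card this).trans card_image_le
    calc ((M.card : ℝ) - ℓ) * thr ≤ ((M \ P).card : ℝ) * thr := by
          apply mul_le_mul_of_nonneg_right _ hthr
          have h1 := le_card_sdiff P M
          have h2 : M.card ≤ (M \ P).card + ℓ := by omega
          have h3 : (M.card : ℝ) ≤ (M \ P).card + ℓ := by exact_mod_cast h2
          linarith
      _ = ∑ u ∈ M \ P, thr := by simp
      _ ≤ ∑ u ∈ M \ P, ((nb G u ∩ ((M \ P) ∪ T)).card : ℝ) := sum_le_sum hkey
      _ ≤ _ := sum_le_sum_of_subset_of_nonneg subset_union_left (fun _ _ _ => by positivity)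

structure Cfg {V : Type} [Fintype V] (G : SimpleGraph V) (ℓ : ℕ) (ε : ℝ) (U0 A : Finset V)
    (σ : V → V) (C U : Finset V) : Prop where
  adj : ∀ x, σ x ≠ x → G.Adj (σ x) x
  toC : ∀ x, σ x ≠ x → σ x ∈ C
  fixC : ∀ c ∈ C, σ c = c
  leaf : ∀ x, σ x ≠ x → x ∈ U0
  fib : ∀ y, (univ.filter (fun x => σ x = y)).card ≤ ℓ + 1
  UU0 : U ⊆ U0
  fixU : ∀ u ∈ U, σ u = u
  CU : Disjoint C U
  out : ∀ u ∈ U0, u ∉ U → u ∈ C ∨ σ u ≠ u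
  CA : C ⊆ A
  loss : (E G : ℝ) ≤ E (quot G σ) + 2 * (∑ x ∈ univ \ U, (ε * (nb G x).card + 1) + ∑ c ∈ C, ε * (nb G c).card)

lemma Cfg.init {V : Type} [Fintype V] (G : SimpleGraph V) (ℓ : ℕ) (ε : ℝ) (hε : 0 ≤ ε) (U0 A : Finset V) :
    Cfg G ℓ ε U0 A id ∅ U0 where
  adj := by simp
  toC := by simp
  fixC := by simp
  leaf := by simp
  fib := by intro y; exact le_trans (card_le_one.2 (by simp)) (Nat.le_add_left 1 ℓ)
  UU0 := subset_rfl
  fixU := by simp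
  CU := by simp
  out := by intro u h h'; exact absurd h h'
  CA := by simp
  loss := by
    rw [quot_id]
    have : (0:ℝ) ≤ ∑ x ∈ univ \ U0, (ε * (nb G x).card + 1) := sum_nonneg (fun _ _ => by positivity)
    simp only [sum_empty]
    linarith

lemma Cfg.step {V : Type} [Fintype V] {G : SimpleGraph V} {ℓ : ℕ} {ε : ℝ} (hε : 0 ≤ ε) {U0 A : Finset V}
    {σ : V → V} {C U : Finset V} (h : Cfg G ℓ ε U0 A σ C U) (v : V) (hvA : v ∈ A) (hvC : v ∉ C)
    (hℓ : 0 < ℓ)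
    (M : Finset V) (hMU : M ⊆ U) (hMv : ∀ u ∈ M, G.Adj v u) (a : ℕ) (ha : ∀ u ∈ M, a ≤ (nb G u).card)
    (b : ℕ) (hb : ∀ u ∈ M, (nb G u).card ≤ b) (hMc : ℓ < M.card) :
    (∃ σ' C' U', Cfg G ℓ ε U0 A σ' C' U' ∧ C' = insert v C ∧ U' ⊆ U ∧ U'.card + ℓ ≤ U.card) ∨
    (∃ Q : Finset V, Q.Nonempty ∧ Q.card ≤ M.card + (ℓ + 1) * ((nb G v).card + ℓ * b) ∧
      ((M.card : ℝ) - ℓ) * (ε * (a + (nb G v).card / ℓ)) ≤ ∑ x ∈ Q, ((nb G x ∩ Q).card : ℝ)) := by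
  have hvM : v ∉ M := fun hv => (hMv v hv).ne rfl
  set σ0 := Function.update σ v v with hσ0
  have hU1 : ∀ u ∈ U, ∀ x, σ x = u → x = u := by
    intro u hu x hx
    by_contra hne
    have := h.toC x (by rw [hx]; exact fun h => hne h.symm)
    rw [hx] at this
    exact (Finset.disjoint_left.1 h.CU this hu)
  have hv1 : ∀ x, σ x = v → x = v := by
    intro x hx
    by_contra hne
    have := h.toC x (by rw [hx]; exact fun h => hne h.symm)
    rw [hx] at this
    exact hvC this
  have hv0 : ∀ x, σ0 x = v ↔ x = v := by
    intro x
    by_cases hx : x = v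
    · simp [hx, hσ0]
    · simp only [hσ0, Function.update_of_ne hx, hx, iff_false]; exact fun h' => hx (hv1 x h')
  have hM0 : ∀ u ∈ M, ∀ x, σ0 x = u ↔ x = u := by
    intro u hu x
    have huv : u ≠ v := fun h => hvM (h ▸ hu)
    by_cases hx : x = v
    · subst hx; simp [hσ0]
    · simp only [hσ0, Function.update_of_ne hx]
      exact ⟨hU1 u (hMU hu) x, fun h' => by rw [h']; exact h.fixU u (hMU hu)⟩
  have hE0 : E (quot G σ) ≤ E (quot G σ0) := by
    have : σ = (fun x => if x = v then σ v else x) ∘ σ0 := by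
      funext x
      by_cases hx : x = v
      · subst hx; simp [hσ0]
      · simp only [hσ0, Function.comp, Function.update_of_ne hx]
        rw [if_neg (fun h' => hx (hv1 x h'))]
    conv_lhs => rw [this, ← quot_quot]
    exact E_quot_le _ _
  have hfib0 : ∀ y, (univ.filter (fun x => σ0 x = y)).card ≤ ℓ + 1 := by
    intro y
    by_cases hy : y = v
    · subst hy; exact le_trans (card_le_one.2 (by simp [hv0])) (Nat.le_add_left 1 ℓ)
    · refine le_trans (card_le_card ?_) (h.fib y)
      intro x
      simp only [mem_filter, mem_univ, true_and]
      by_cases hx : x = v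
      · subst hx; simp [hσ0]; exact fun h' => absurd h'.symm hy
      · simp [hσ0, hx]
  rcases greedy_merge G σ0 v M (ε * (a + (nb G v).card / ℓ)) hM0 hvM ℓ with ⟨P, hPM, hPc, hE⟩ | ⟨P, hPM, hPc, hst⟩
  · left
    have hvP : v ∉ P := fun hx => hvM (hPM hx)
    have hs1 : ∀ x ∈ P, sg σ0 P v x = v := fun x hx => by simp [sg, hx]
    have hs2 : sg σ0 P v v = v := by simp [sg, hvP, hσ0]
    have hs3 : ∀ x, x ∉ P → x ≠ v → sg σ0 P v x = σ x := fun x hx hx' => by simp [sg, hx, hσ0, hx']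
    have hPU : P ⊆ U := hPM.trans hMU
    refine ⟨sg σ0 P v, insert v C, (U \ P).erase v, ?_, rfl, (erase_subset _ _).trans sdiff_subset, ?_⟩
    · refine ⟨?_, ?_, ?_, ?_, ?_, ?_, ?_, ?_, ?_, ?_, ?_⟩
      · intro x hx
        by_cases hxP : x ∈ P
        · rw [hs1 x hxP]; exact hMv x (hPM hxP)
        · by_cases hxv : x = v
          · subst hxv; exact absurd hs2 hx
          · rw [hs3 x hxP hxv] at hx ⊢; exact h.adj x hx
      · intro x hx
        by_cases hxP : x ∈ P
        · rw [hs1 x hxP]; simp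
        · by_cases hxv : x = v
          · subst hxv; exact absurd hs2 hx
          · rw [hs3 x hxP hxv] at hx ⊢; exact mem_insert_of_mem (h.toC x hx)
      · intro c hc
        rcases mem_insert.1 hc with rfl | hc
        · exact hs2
        · rw [hs3 c (fun hcP => Finset.disjoint_left.1 h.CU hc (hPU hcP)) (fun h' => hvC (h' ▸ hc))]
          exact h.fixC c hc
      · intro x hx
        by_cases hxP : x ∈ P
        · exact h.UU0 (hPU hxP)
        · by_cases hxv : x = v
          · subst hxv; exact absurd hs2 hx
          · rw [hs3 x hxP hxv] at hx; exact h.leaf x hx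
      · intro y
        by_cases hy : y = v
        · subst hy
          refine le_trans (card_le_card (t := insert y P) ?_) ?_
          · intro x hx
            simp only [mem_filter, mem_univ, true_and] at hx
            by_cases hxP : x ∈ P
            · exact mem_insert_of_mem hxP
            · rw [sg, if_neg hxP] at hx
              rw [(hv0 x).1 hx]; simp
          · refine (card_insert_le _ _).trans (by omega)
        · refine le_trans (card_le_card ?_) (hfib0 y)
          intro x
          simp only [mem_filter, mem_univ, true_and]
          by_cases hxP : x ∈ P
          · rw [hs1 x hxP]; exact fun h' => absurd h'.symm hy
          · simp [sg, hxP]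
      · exact (erase_subset _ _).trans (sdiff_subset.trans h.UU0)
      · intro u hu
        obtain ⟨huv, hu⟩ := mem_erase.1 hu
        obtain ⟨hu, huP⟩ := mem_sdiff.1 hu
        rw [hs3 u huP huv]; exact h.fixU u hu
      · rw [Finset.disjoint_left]
        intro c hc hcU
        obtain ⟨huv, hu⟩ := mem_erase.1 hcU
        obtain ⟨hu, huP⟩ := mem_sdiff.1 hu
        rcases mem_insert.1 hc with rfl | hc
        · exact huv rfl
        · exact Finset.disjoint_left.1 h.CU hc hu
      · intro u hu hu'
        by_cases huv : u = v
        · left; simp [huv]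
        · by_cases huP : u ∈ P
          · right; rw [hs1 u huP]; exact fun h' => huv h'.symm
          · have : u ∉ U := fun huU => hu' (mem_erase.2 ⟨huv, mem_sdiff.2 ⟨huU, huP⟩⟩)
            rw [hs3 u huP huv]
            rcases h.out u hu this with h1 | h1
            · left; exact mem_insert_of_mem h1
            · right; exact h1
      · exact insert_subset hvA h.CA
      · have h1 : (E (quot G σ) : ℝ) ≤ E (quot G σ0) := by exact_mod_cast hE0
        have h2 := h.loss
        have hPsum : (ℓ:ℝ) * (1 + ε * (a + (nb G v).card / ℓ)) ≤ ∑ x ∈ P, (ε * (nb G x).card + 1) + ε * (nb G v).card := by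
          have : ∑ x ∈ P, (ε * (a:ℝ) + 1) ≤ ∑ x ∈ P, (ε * (nb G x).card + 1) := by
            apply sum_le_sum
            intro x hx
            have : (a:ℝ) ≤ (nb G x).card := by exact_mod_cast ha x (hPM hx)
            have := mul_le_mul_of_nonneg_left this hε
            linarith
          rw [sum_const, hPc, nsmul_eq_mul] at this
          have hl : (ℓ:ℝ) ≠ 0 := by positivity
          have h5 : (ℓ:ℝ) * (1 + ε * (a + (nb G v).card / ℓ)) = ℓ * (ε * a + 1) + ε * (nb G v).card := by
            field_simp; ring
          linarith
        have hsU : ∑ x ∈ univ \ U, (ε * ((nb G x).card:ℝ) + 1) + ∑ x ∈ P, (ε * ((nb G x).card:ℝ) + 1) ≤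
            ∑ x ∈ univ \ ((U \ P).erase v), (ε * ((nb G x).card:ℝ) + 1) := by
          rw [← sum_union]
          · apply sum_le_sum_of_subset_of_nonneg
            · intro x hx
              simp only [mem_union, mem_sdiff, mem_univ, true_and, mem_erase] at hx ⊢
              tauto
            · intro _ _ _; positivity
          · rw [Finset.disjoint_left]
            intro x hx hxP
            exact (mem_sdiff.1 hx).2 (hPU hxP)
        rw [sum_insert hvC]
        linarith
    · have h1 : ((U \ P).erase v).card ≤ (U \ P).card := card_le_card (erase_subset _ _)
      have h2 := card_sdiff_add_card_eq_card hPU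
      omega
  · right
    exact stuck_dense G σ0 v M P _ hM0 hv0 hvM ℓ b (by positivity) hfib0 hb hPM hPc hMc hst
end DI

namespace DI
open Finset Classical

lemma stage {V : Type} [Fintype V] {G : SimpleGraph V} {ℓ : ℕ} {ε : ℝ} (hε : 0 ≤ ε) {U0 A : Finset V}
    (hℓ : 0 < ℓ) (m : ℕ) (hm : ℓ < m) (Z : V → Finset V) (hZ : ∀ u, ∀ v ∈ Z u, G.Adj v u) (hZA : ∀ u, Z u ⊆ A)
    (hpos : ∀ u ∈ U0, (nb G u).card ≠ 0)
    (hnd : ∀ v ∈ A, ∀ i, (∃ u ∈ U0, Nat.log 2 (nb G u).card = i) → ∀ Q : Finset V, Q.Nonempty →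
      Q.card ≤ m + (ℓ + 1) * ((nb G v).card + ℓ * 2 ^ (i + 1)) →
      ((m:ℝ) - ℓ) * (ε * (2 ^ i + (nb G v).card / ℓ)) ≤ ∑ x ∈ Q, ((nb G x ∩ Q).card : ℝ) → False)
    (S : Finset V) (n : ℕ) : ∀ (σ : V → V) (C U : Finset V), Cfg G ℓ ε U0 A σ C U → (S \ C).card ≤ n →
    ∃ σ' C' U', Cfg G ℓ ε U0 A σ' C' U' ∧ C ⊆ C' ∧ C' ⊆ C ∪ S ∧ U' ⊆ U ∧
      ℓ * C'.card + U'.card ≤ ℓ * C.card + U.card ∧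
      ∀ v ∈ S, v ∉ C' → ∀ i, (U'.filter (fun u => v ∈ Z u ∧ Nat.log 2 (nb G u).card = i)).card < m := by
  induction n with
  | zero =>
    intro σ C U h hc
    refine ⟨σ, C, U, h, subset_rfl, subset_union_left, subset_rfl, le_rfl, ?_⟩
    intro v hv hvC
    rw [Nat.le_zero, card_eq_zero, sdiff_eq_empty_iff_subset] at hc
    exact absurd (hc hv) hvC
  | succ n ih =>
    intro σ C U h hc
    by_cases hall : ∀ v ∈ S, v ∉ C → ∀ i, (U.filter (fun u => v ∈ Z u ∧ Nat.log 2 (nb G u).card = i)).card < m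
    · exact ⟨σ, C, U, h, subset_rfl, subset_union_left, subset_rfl, le_rfl, hall⟩
    · push Not at hall
      obtain ⟨v, hvS, hvC, i, hi⟩ := hall
      obtain ⟨M, hM, hMc⟩ := exists_subset_card_eq hi
      have hM' : ∀ u ∈ M, u ∈ U ∧ v ∈ Z u ∧ Nat.log 2 (nb G u).card = i := by
        intro u hu; simpa using hM hu
      have hMU : M ⊆ U := fun u hu => (hM' u hu).1
      obtain ⟨u0, hu0⟩ : M.Nonempty := by rw [← card_pos]; omega
      have hvA : v ∈ A := hZA u0 (hM' u0 hu0).2.1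
      rcases h.step hε v hvA hvC hℓ M hMU (fun u hu => hZ u v (hM' u hu).2.1) (2 ^ i)
        (fun u hu => by
          rw [← (hM' u hu).2.2]; exact Nat.pow_log_le_self 2 (hpos u (h.UU0 (hMU hu)))) (2 ^ (i+1))
        (fun u hu => by
          rw [← (hM' u hu).2.2]; exact (Nat.lt_pow_succ_log_self (by norm_num) _).le) (by omega) with
        ⟨σ', C', U', h', rfl, hU', hcard⟩ | ⟨Q, hQ, hQc, hQs⟩
      · have hc' : (S \ insert v C).card ≤ n := by
          have : S \ insert v C = (S \ C).erase v := by
            ext x; simp only [mem_sdiff, mem_insert, mem_erase]; tauto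
          rw [this, card_erase_of_mem (mem_sdiff.2 ⟨hvS, hvC⟩)]; omega
        obtain ⟨σ'', C'', U'', g1, g2, g3, g4, g5, g6⟩ := ih σ' _ U' h' hc'
        refine ⟨σ'', C'', U'', g1, (subset_insert _ _).trans g2, ?_, g4.trans hU', ?_, g6⟩
        · intro x hx
          have := g3 hx
          simp only [mem_union, mem_insert] at this ⊢
          rcases this with (rfl | h1) | h1 <;> tauto
        · rw [card_insert_of_notMem hvC] at g5
          rw [mul_add, mul_one] at g5; omega
      · exfalso
        rw [hMc] at hQc hQs
        refine hnd v hvA i ⟨u0, h.UU0 (hMU hu0), (hM' u0 hu0).2.2⟩ Q hQ hQc ?_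
        push_cast at hQs
        exact hQs

lemma stage_count {V : Type} [Fintype V] {G : SimpleGraph V} (Z : V → Finset V) (U' C' A Vj : Finset V) (I : Finset ℕ)
    (m R : ℕ) (hZA : ∀ u, Z u ⊆ A) (hI : ∀ u ∈ U', Nat.log 2 (nb G u).card ∈ I)
    (hR : ∀ v ∈ A, ld Z v ≤ R)
    (h : ∀ v ∈ Vj, v ∉ C' → ∀ i, (U'.filter (fun u => v ∈ Z u ∧ Nat.log 2 (nb G u).card = i)).card < m) :
    ∑ u ∈ U', (Z u ∩ Vj).card ≤ I.card * m * Vj.card + R * (C' ∩ Vj).card := by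
  rw [← sum_ld]
  have hb : ∀ v ∈ Vj, (U'.filter (fun u => v ∈ Z u)).card ≤ I.card * m + if v ∈ C' then R else 0 := by
    intro v hv
    by_cases hvC : v ∈ C'
    · rw [if_pos hvC]
      by_cases hvA : v ∈ A
      · have : (U'.filter (fun u => v ∈ Z u)).card ≤ ld Z v := card_le_card (filter_subset_filter _ (subset_univ _))
        have := hR v hvA
        omega
      · have : U'.filter (fun u => v ∈ Z u) = ∅ := by
          ext u; simp only [mem_filter, notMem_empty, iff_false, not_and]
          exact fun _ hvZ => hvA (hZA u hvZ)
        rw [this]; simp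
    · rw [if_neg hvC, add_zero]
      have : U'.filter (fun u => v ∈ Z u) = I.biUnion (fun i => U'.filter (fun u => v ∈ Z u ∧ Nat.log 2 (nb G u).card = i)) := by
        ext u
        simp only [mem_filter, mem_biUnion]
        constructor
        · rintro ⟨h1, h2⟩; exact ⟨_, hI u h1, h1, h2, rfl⟩
        · rintro ⟨i, _, h1, h2, _⟩; exact ⟨h1, h2⟩
      rw [this]
      exact card_biUnion_le_card_mul _ _ _ (fun i _ => (h v hv hvC i).le)
  refine (sum_le_sum hb).trans ?_
  rw [sum_add_distrib, sum_const, smul_eq_mul, ← sum_filter, sum_const, smul_eq_mul, filter_mem_eq_inter, inter_comm]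
  apply le_of_eq; ring
end DI

namespace DI
open Finset Classical

lemma stages {V : Type} [Fintype V] {G : SimpleGraph V} {ℓ : ℕ} {ε : ℝ} (hε : 0 ≤ ε) {U0 A : Finset V}
    (hℓ : 0 < ℓ) (m : ℕ) (hm : ℓ < m) (Z : V → Finset V) (hZ : ∀ u, ∀ v ∈ Z u, G.Adj v u) (hZA : ∀ u, Z u ⊆ A)
    (hpos : ∀ u ∈ U0, (nb G u).card ≠ 0)
    (hnd : ∀ v ∈ A, ∀ i, (∃ u ∈ U0, Nat.log 2 (nb G u).card = i) → ∀ Q : Finset V, Q.Nonempty →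
      Q.card ≤ m + (ℓ + 1) * ((nb G v).card + ℓ * 2 ^ (i + 1)) →
      ((m:ℝ) - ℓ) * (ε * (2 ^ i + (nb G v).card / ℓ)) ≤ ∑ x ∈ Q, ((nb G x ∩ Q).card : ℝ) → False)
    {kk : ℕ} (f : V → Fin kk) (e : ℕ → Fin kk) (r : ℕ) (he : ∀ i < r, ∀ j < r, e i = e j → i = j)
    (nu α B d : ℝ) (hα : 0 < α) (hB : 0 ≤ B) (hd : 0 < d) (I : Finset ℕ) (R : ℕ)
    (hnu : ∀ j < r, ((univ.filter (fun v => f v = e j)).card : ℝ) ≤ nu)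
    (hα1 : ∀ u ∈ U0, ∀ k, α * (nb G u).card ≤ ((Z u ∩ univ.filter (fun v => f v = k)).card : ℝ))
    (hI : ∀ u ∈ U0, Nat.log 2 (nb G u).card ∈ I)
    (hR : ∀ v ∈ A, ld Z v ≤ R) (hdeg : ∀ u ∈ U0, d ≤ (nb G u).card)
    (hnum1 : (I.card * m : ℝ) * nu ≤ α * B) (hnum2 : (R:ℝ) ≤ α * (d * ℓ) / 2) (n : ℕ) (hn : n ≤ r) :
    ∃ σ C U, Cfg G ℓ ε U0 A σ C U ∧ ℓ * C.card + U.card ≤ Fintype.card V ∧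
      (∀ c ∈ C, ∃ j < n, f c = e j) ∧
      ∑ u ∈ U, ((nb G u).card : ℝ) ≤ 2 * B + (∑ u, ((nb G u).card : ℝ)) / 2 ^ n := by
  induction n with
  | zero =>
    refine ⟨id, ∅, U0, Cfg.init G ℓ ε hε U0 A, by simpa using card_le_univ _, by simp, ?_⟩
    have : ∑ u ∈ U0, ((nb G u).card : ℝ) ≤ ∑ u, ((nb G u).card : ℝ) :=
      sum_le_sum_of_subset_of_nonneg (subset_univ _) (fun _ _ _ => by positivity)
    simp; linarith
  | succ n ih =>
    obtain ⟨σ, C, U, h, hc, hcol, hD⟩ := ih (by omega)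
    set Vj := univ.filter (fun v => f v = e n) with hVj
    obtain ⟨σ', C', U', h', hCC', hC'S, hU', hcard, hfin⟩ := stage hε hℓ m hm Z hZ hZA hpos hnd Vj _ σ C U h le_rfl
    refine ⟨σ', C', U', h', hcard.trans hc, ?_, ?_⟩
    · intro c hcC
      rcases mem_union.1 (hC'S hcC) with h1 | h1
      · obtain ⟨j, hj, hj'⟩ := hcol c h1
        exact ⟨j, by omega, hj'⟩
      · exact ⟨n, by omega, (mem_filter.1 h1).2⟩
    · have hcnt := stage_count (G := G) Z U' C' A Vj I m R hZA (fun u hu => hI u (h'.UU0 hu)) hR hfin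
      have hcnt' : ∑ u ∈ U', ((Z u ∩ Vj).card : ℝ) ≤ I.card * m * Vj.card + R * (C' ∩ Vj).card := by exact_mod_cast hcnt
      have h1 : α * ∑ u ∈ U', ((nb G u).card : ℝ) ≤ ∑ u ∈ U', ((Z u ∩ Vj).card : ℝ) := by
        rw [mul_sum]; exact sum_le_sum (fun u hu => hα1 u (h'.UU0 hu) _)
      have hdisj : C' ∩ Vj ⊆ C' \ C := by
        intro x hx
        obtain ⟨hx1, hx2⟩ := mem_inter.1 hx
        refine mem_sdiff.2 ⟨hx1, fun hxC => ?_⟩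
        obtain ⟨j, hj, hj'⟩ := hcol x hxC
        have := he j (by omega) n (by omega) (by rw [← hj', (mem_filter.1 hx2).2])
        omega
      have hc1 : ℓ * (C' ∩ Vj).card ≤ U.card := by
        have a1 := card_le_card hdisj
        have a2 := card_sdiff_add_card_eq_card hCC'
        have : ℓ * C'.card = ℓ * (C' \ C).card + ℓ * C.card := by rw [← a2]; ring
        have : ℓ * (C' ∩ Vj).card ≤ ℓ * (C' \ C).card := Nat.mul_le_mul_left _ a1
        omega
      have hc2 : (ℓ:ℝ) * (C' ∩ Vj).card ≤ U.card := by exact_mod_cast hc1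
      have hdU : d * U.card ≤ ∑ u ∈ U, ((nb G u).card : ℝ) := by
        have : ∑ u ∈ U, d ≤ ∑ u ∈ U, ((nb G u).card : ℝ) := sum_le_sum (fun u hu => hdeg u (h.UU0 hu))
        simp only [sum_const, nsmul_eq_mul] at this
        linarith
      have h2 : (I.card * m : ℝ) * Vj.card ≤ α * B := by
        refine le_trans ?_ hnum1
        exact mul_le_mul_of_nonneg_left (hnu n (by omega)) (by positivity)
      have h3 : (R:ℝ) * (C' ∩ Vj).card ≤ α * (∑ u ∈ U, ((nb G u).card : ℝ)) / 2 := by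
        calc (R:ℝ) * (C' ∩ Vj).card ≤ α * (d * ℓ) / 2 * (C' ∩ Vj).card :=
              mul_le_mul_of_nonneg_right hnum2 (by positivity)
          _ = α * d / 2 * (ℓ * (C' ∩ Vj).card) := by ring
          _ ≤ α * d / 2 * U.card := mul_le_mul_of_nonneg_left hc2 (by positivity)
          _ = α / 2 * (d * U.card) := by ring
          _ ≤ α / 2 * ∑ u ∈ U, ((nb G u).card : ℝ) := mul_le_mul_of_nonneg_left hdU (by positivity)
          _ = _ := by ring
      have h4 : α * ∑ u ∈ U', ((nb G u).card : ℝ) ≤ α * (B + (∑ u ∈ U, ((nb G u).card : ℝ)) / 2) := by linarith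
      have h5 := le_of_mul_le_mul_left h4 hα
      have h6 : (∑ u, ((nb G u).card : ℝ)) / 2 ^ (n+1) = (∑ u, ((nb G u).card : ℝ)) / 2 ^ n / 2 := by
        rw [pow_succ, div_div]
      rw [h6]; linarith
end DI

namespace DI
open Finset Classical

lemma sum_nb_comm {V : Type} [Fintype V] (G : SimpleGraph V) (A B : Finset V) :
    ∑ v ∈ A, (nb G v ∩ B).card = ∑ v ∈ B, (nb G v ∩ A).card := by
  rw [← sum_ld (nb G) B A]
  refine sum_congr rfl (fun v _ => ?_)
  congr 1
  ext u
  simp only [mem_filter, mem_inter, mem_nb]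
  constructor
  · rintro ⟨h1, h2⟩; exact ⟨h2.symm, h1⟩
  · rintro ⟨h1, h2⟩; exact ⟨h2, h1.symm⟩

lemma E_split {V : Type} [Fintype V] (G : SimpleGraph V) (W : Finset V) :
    E G ≤ ∑ w ∈ W, (nb G w ∩ W).card + 2 * ∑ v ∈ Wᶜ, (nb G v).card := by
  have h1 : E G = ∑ w ∈ W, (nb G w).card + ∑ v ∈ Wᶜ, (nb G v).card := (sum_add_sum_compl W _).symm
  have h2 : ∑ w ∈ W, (nb G w).card = ∑ w ∈ W, (nb G w ∩ W).card + ∑ w ∈ W, (nb G w ∩ Wᶜ).card := by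
    rw [← sum_add_distrib]
    refine sum_congr rfl (fun w _ => ?_)
    rw [← card_union_of_disjoint, ← inter_union_distrib_left, union_compl, inter_univ]
    exact (disjoint_compl_right (a := W)).mono inter_subset_right inter_subset_right
  have h3 : ∑ w ∈ W, (nb G w ∩ Wᶜ).card ≤ ∑ v ∈ Wᶜ, (nb G v).card := by
    rw [sum_nb_comm]
    exact sum_le_sum (fun v _ => card_le_card inter_subset_left)
  omega

lemma out_of_cfg {V : Type} [Fintype V] {G : SimpleGraph V} {ℓ q : ℕ} {U0 A : Finset V}
    {σ : V → V} {C U : Finset V} (h : Cfg G ℓ (1 / (q:ℝ)) U0 A σ C U) (Big : Finset V)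
    (hBU : Disjoint Big U0) (d : ℝ) (hq : 100 ≤ q) (hqℓ : q ≤ ℓ) (hdq : 100 * (q:ℝ) ≤ d)
    (hN : 0 < Fintype.card V)
    (hsum : (E G : ℝ) = 2 * d * Fintype.card V)
    (hcard : ℓ * C.card + U.card ≤ Fintype.card V)
    (hBig : ((ℓ:ℝ) + 1) * Big.card ≤ Fintype.card V / q)
    (hU : ∑ u ∈ U, ((nb G u).card : ℝ) ≤ 5 / 2 * d * Fintype.card V / q)
    (hT : ∑ u ∈ univ \ (U0 ∪ Big), ((nb G u).card : ℝ) ≤ 2 * d * Fintype.card V / q) :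
    Out G d q := by
  set W := C ∪ Big with hW
  set Γ := quot G σ with hΓ
  set N : ℝ := (Fintype.card V : ℝ) with hNd
  have hN' : 0 < N := by simpa [hNd] using hN
  have hq' : (100:ℝ) ≤ q := by exact_mod_cast hq
  have hqpos : (0:ℝ) < q := by linarith
  have hd : 0 < d := by linarith
  have hidem : ∀ x, σ (σ x) = σ x := by
    intro x
    by_cases hx : σ x = x
    · rw [hx, hx]
    · exact h.fixC _ (h.toC x hx)
  have hfixB : ∀ w ∈ Big, σ w = w := by
    intro w hw
    by_contra hne
    exact Finset.disjoint_left.1 hBU hw (h.leaf w hne)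
  have hfixW : ∀ w ∈ W, σ w = w := by
    intro w hw
    rcases mem_union.1 hw with h1 | h1
    · exact h.fixC w h1
    · exact hfixB w h1
  -- outside vertices
  have hout : ∑ v ∈ Wᶜ, ((nb Γ v).card : ℝ) ≤ ∑ u ∈ U, ((nb G u).card : ℝ) + ∑ u ∈ univ \ (U0 ∪ Big), ((nb G u).card : ℝ) := by
    have hz : ∀ v ∈ Wᶜ, v ∉ U ∪ (univ \ (U0 ∪ Big)) → (nb Γ v).card = 0 := by
      intro v hv hv'
      simp only [hW, mem_compl, mem_union, not_or, mem_sdiff, mem_univ, true_and] at hv hv'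
      obtain ⟨hvC, hvB⟩ := hv
      obtain ⟨hvU, hvT⟩ := hv'
      have hvU0 : v ∈ U0 := by
        by_contra hh; exact hvT ⟨hh, hvB⟩
      have hne : σ v ≠ v := by
        rcases h.out v hvU0 hvU with h1 | h1
        · exact absurd h1 hvC
        · exact h1
      rw [card_eq_zero]
      ext y
      simp only [notMem_empty, iff_false, mem_nb]
      rintro ⟨_, x, _, hx, _, _⟩
      apply hne
      rw [← hx, hidem]
    have hle : ∀ v ∈ Wᶜ, (nb Γ v).card ≤ (nb G v).card := by
      intro v hv
      simp only [hW, mem_compl, mem_union, not_or] at hv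
      refine (card_nb_quot_le G σ v).trans ?_
      refine (sum_le_sum_of_subset (t := {v}) ?_).trans (by simp)
      intro x hx
      have hx' := (mem_filter.1 hx).2
      rw [mem_singleton]
      by_contra hne
      have := h.toC x (by rw [hx']; exact fun h' => hne h'.symm)
      rw [hx'] at this
      exact hv.1 this
    have h1 : ∑ v ∈ Wᶜ, (nb Γ v).card ≤ ∑ v ∈ U ∪ (univ \ (U0 ∪ Big)), (nb G v).card := by
      calc ∑ v ∈ Wᶜ, (nb Γ v).card = ∑ v ∈ Wᶜ.filter (fun v => v ∈ U ∪ (univ \ (U0 ∪ Big))), (nb Γ v).card := by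
            symm
            apply sum_filter_of_ne
            intro v hv hne
            by_contra hh
            exact hne (hz v hv hh)
        _ ≤ ∑ v ∈ Wᶜ.filter (fun v => v ∈ U ∪ (univ \ (U0 ∪ Big))), (nb G v).card :=
            sum_le_sum (fun v hv => hle v (mem_filter.1 hv).1)
        _ ≤ _ := sum_le_sum_of_subset (fun v hv => (mem_filter.1 hv).2)
    have h2 : ∑ v ∈ U ∪ (univ \ (U0 ∪ Big)), (nb G v).card ≤ ∑ v ∈ U, (nb G v).card + ∑ v ∈ univ \ (U0 ∪ Big), (nb G v).card := by
      rw [← sum_union_inter]; omega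
    exact_mod_cast h1.trans h2
  have hsp := E_split Γ W
  have hsp' : (E Γ : ℝ) ≤ ∑ w ∈ W, ((nb Γ w ∩ W).card : ℝ) + 2 * ∑ v ∈ Wᶜ, ((nb Γ v).card : ℝ) := by
    exact_mod_cast hsp
  have hEG : ∑ x, ((nb G x).card : ℝ) = 2 * d * N := by
    rw [← hsum]; simp [E]
  have hl1 : ∑ x ∈ univ \ U, (1 / (q:ℝ) * (nb G x).card + 1) ≤ 2 * d * N / q + N := by
    calc ∑ x ∈ univ \ U, (1 / (q:ℝ) * (nb G x).card + 1) ≤ ∑ x, (1 / (q:ℝ) * (nb G x).card + 1) :=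
          sum_le_sum_of_subset_of_nonneg (subset_univ _) (fun _ _ _ => by positivity)
      _ = 1 / (q:ℝ) * (2 * d * N) + N := by
          rw [sum_add_distrib, ← mul_sum, hEG]; simp [hNd]
      _ = _ := by ring
  have hl2 : ∑ c ∈ C, 1 / (q:ℝ) * (nb G c).card ≤ 2 * d * N / q := by
    calc ∑ x ∈ C, (1 / (q:ℝ) * (nb G x).card) ≤ ∑ x, (1 / (q:ℝ) * (nb G x).card) :=
          sum_le_sum_of_subset_of_nonneg (subset_univ _) (fun _ _ _ => by positivity)
      _ = 1 / (q:ℝ) * (2 * d * N) := by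
          rw [← mul_sum, hEG]
      _ = _ := by ring
  have hloss := h.loss
  rw [hsum] at hloss
  set x : ℝ := d * N / q with hx
  have hx0 : 0 < x := by positivity
  have hxq : d * N = x * q := by rw [hx]; field_simp
  have e1 : 2 * d * N / q = 2 * x := by rw [hx]; ring
  have e2 : 5 / 2 * d * N / q = 5 / 2 * x := by rw [hx]; ring
  have hNx : N ≤ x / 100 := by
    rw [hx, le_div_iff₀ (by norm_num), le_div_iff₀ hqpos]
    nlinarith
  rw [e1] at hl1 hl2 hT
  rw [e2] at hU
  have hS : 2 * (x * q) - 17.02 * x ≤ ∑ w ∈ W, ((nb Γ w ∩ W).card : ℝ) := by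
    have : 2 * d * N = 2 * (x * q) := by rw [← hxq]; ring
    linarith
  have hWc : ((ℓ:ℝ) + 1) * W.card ≤ N + 2 * N / q := by
    have a1 : (W.card : ℝ) ≤ C.card + Big.card := by exact_mod_cast card_union_le C Big
    have a2 : (ℓ:ℝ) * C.card ≤ N := by
      have : ℓ * C.card ≤ Fintype.card V := by omega
      rw [hNd]; exact_mod_cast this
    have a3 : (C.card : ℝ) ≤ N / q := by
      rw [le_div_iff₀ hqpos]
      have : (q:ℝ) ≤ ℓ := by exact_mod_cast hqℓ
      nlinarith [Nat.cast_nonneg (α := ℝ) C.card]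
    have : ((ℓ:ℝ) + 1) * W.card ≤ (ℓ + 1) * (C.card + Big.card) := mul_le_mul_of_nonneg_left a1 (by positivity)
    have e : 2 * N / q = N / q + N / q := by ring
    rw [e]; nlinarith
  refine ⟨W, fun w => univ.filter (fun x => σ x = w), Γ, ℓ + 1, ?_, by omega, ?_, ?_, ?_, ?_, ?_⟩
  · rw [nonempty_iff_ne_empty]
    intro he
    rw [he, sum_empty] at hS
    nlinarith
  · intro w hw
    refine ⟨by simp [hfixW w hw], ?_⟩
    intro y hy
    have hy' := (mem_filter.1 hy).2
    by_cases hyw : y = w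
    · left; exact hyw
    · right
      have := h.adj y (by rw [hy']; exact fun h' => hyw h'.symm)
      rwa [hy'] at this
  · intro w _ w' _ hne
    rw [Finset.disjoint_left]
    intro y hy hy'
    exact hne ((mem_filter.1 hy).2.symm.trans (mem_filter.1 hy').2)
  · intro w _; exact h.fib w
  · rintro w _ w' _ ⟨_, x, y, hx, hy, hxy⟩
    exact ⟨x, by simpa using hx, y, by simpa using hy, hxy⟩
  · refine le_trans ?_ hS
    have hc : 0 ≤ 1 - 12 / (q:ℝ) := by
      rw [sub_nonneg, div_le_one hqpos]; linarith
    push_cast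
    calc 2 * (1 - 12 / (q:ℝ)) * (ℓ + 1) * d * W.card = 2 * (1 - 12 / (q:ℝ)) * d * ((ℓ + 1) * W.card) := by ring
      _ ≤ 2 * (1 - 12 / (q:ℝ)) * d * (N + 2 * N / q) := mul_le_mul_of_nonneg_left hWc (by positivity)
      _ = 2 * (1 - 12 / (q:ℝ)) * (1 + 2 / q) * (d * N) := by ring
      _ = 2 * (x * q) - 20 * x - 48 * x / q := by rw [hxq]; field_simp; ring
      _ ≤ _ := by
        have : 0 ≤ 48 * x / q := by positivity
        linarith
end DI

namespace DI
open Finset Classical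

lemma exists_enum {K : Type} [Nonempty K] (J : Finset K) (r : ℕ) (h : r ≤ J.card) :
    ∃ e : ℕ → K, (∀ i < r, e i ∈ J) ∧ ∀ i < r, ∀ j < r, e i = e j → i = j := by
  obtain ⟨J', hJ', hc⟩ := exists_subset_card_eq h
  set φ := J'.equivFinOfCardEq hc
  refine ⟨fun i => if h : i < r then (φ.symm ⟨i, h⟩ : K) else Classical.arbitrary K, ?_, ?_⟩
  · intro i hi
    simp only [hi, dif_pos]
    exact hJ' (φ.symm ⟨i, hi⟩).2
  · intro i hi j hj he
    simp only [hi, hj, dif_pos] at he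
    have := φ.symm.injective (Subtype.ext he)
    simpa using this

lemma good_colours {V : Type} [Fintype V] (hN : 0 < Fintype.card V) (r : ℕ) (hr : 1 ≤ r) (f : V → Fin (2 * r)) :
    ∃ e : ℕ → Fin (2 * r), (∀ i < r, ((univ.filter (fun v => f v = e i)).card : ℝ) ≤ (Fintype.card V : ℝ) / r) ∧
      ∀ i < r, ∀ j < r, e i = e j → i = j := by
  have : Nonempty (Fin (2 * r)) := ⟨⟨0, by omega⟩⟩
  set J : Finset (Fin (2*r)) := univ.filter (fun j => ((univ.filter (fun v => f v = j)).card : ℝ) ≤ (Fintype.card V : ℝ) / r) with hJ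
  have hr' : (0:ℝ) < r := by exact_mod_cast hr
  have hN' : (0:ℝ) < Fintype.card V := by exact_mod_cast hN
  have hJc : r ≤ J.card := by
    have h1 : ∑ j : Fin (2*r), ((univ.filter (fun v => f v = j)).card : ℝ) = Fintype.card V := by
      have := Finset.card_eq_sum_card_fiberwise (s := (univ : Finset V)) (t := univ) (f := f) (by simp)
      rw [card_univ] at this
      rw [this]; push_cast; rfl
    have h2 : ∑ j ∈ Jᶜ, ((Fintype.card V : ℝ) / r) ≤ ∑ j ∈ Jᶜ, ((univ.filter (fun v => f v = j)).card : ℝ) := by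
      apply sum_le_sum
      intro j hj
      simp only [hJ, mem_compl, mem_filter, mem_univ, true_and, not_le] at hj
      exact hj.le
    have h3 : ∑ j ∈ Jᶜ, ((univ.filter (fun v => f v = j)).card : ℝ) ≤ ∑ j : Fin (2*r), ((univ.filter (fun v => f v = j)).card : ℝ) :=
      sum_le_sum_of_subset_of_nonneg (subset_univ _) (fun _ _ _ => by positivity)
    rw [sum_const, nsmul_eq_mul] at h2
    have h4 : ((Jᶜ).card : ℝ) * ((Fintype.card V : ℝ) / r) ≤ r * ((Fintype.card V : ℝ) / r) := by
      have : (r:ℝ) * ((Fintype.card V : ℝ) / r) = Fintype.card V := by field_simp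
      linarith
    have h5 : ((Jᶜ).card : ℝ) ≤ r := le_of_mul_le_mul_right h4 (by positivity)
    have h6 : (Jᶜ).card ≤ r := by exact_mod_cast h5
    rw [card_compl, Fintype.card_fin] at h6
    omega
  obtain ⟨e, he1, he2⟩ := exists_enum J r hJc
  exact ⟨e, fun i hi => (mem_filter.1 (he1 i hi)).2, he2⟩

/-- bad vertices: those with a large part of `Z u` in the bad set -/
lemma bad_sum {V : Type} [Fintype V] (G : SimpleGraph V) (Z : V → Finset V) (F Big : Finset V) (R q : ℕ)
    (hZ1 : ∀ u, ((nb G u).card : ℝ) ≤ q * (Z u).card)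
    (hR : ∀ v, v ∉ F → ld Z v ≤ R) (hF : ∑ v ∈ F, ld Z v ≤ Fintype.card V) :
    ∑ u ∈ univ.filter (fun u => (Z u).card ≤ 4 * (Z u ∩ (Big ∪ F)).card), ((nb G u).card : ℝ)
      ≤ 4 * q * (Fintype.card V + Big.card * R) := by
  have h1 : ∑ u, (Z u ∩ (Big ∪ F)).card ≤ Fintype.card V + Big.card * R := by
    rw [← sum_ld Z (Big ∪ F) univ]
    have : Big ∪ F = F ∪ (Big \ F) := by
      ext x; simp only [mem_union, mem_sdiff]; tauto
    rw [this, sum_union disjoint_sdiff]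
    have h2 : ∑ v ∈ Big \ F, (univ.filter (fun u => v ∈ Z u)).card ≤ (Big \ F).card * R := by
      rw [← smul_eq_mul]; exact sum_le_card_nsmul _ _ _ (fun v hv => hR v (mem_sdiff.1 hv).2)
    have h3 : (Big \ F).card * R ≤ Big.card * R := Nat.mul_le_mul_right _ (card_le_card sdiff_subset)
    have h4 : ∑ v ∈ F, (univ.filter (fun u => v ∈ Z u)).card ≤ Fintype.card V := hF
    omega
  have h1' : ∑ u, ((Z u ∩ (Big ∪ F)).card : ℝ) ≤ Fintype.card V + Big.card * R := by exact_mod_cast h1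
  calc ∑ u ∈ univ.filter (fun u => (Z u).card ≤ 4 * (Z u ∩ (Big ∪ F)).card), ((nb G u).card : ℝ)
      ≤ ∑ u ∈ univ.filter (fun u => (Z u).card ≤ 4 * (Z u ∩ (Big ∪ F)).card), 4 * q * ((Z u ∩ (Big ∪ F)).card : ℝ) := by
        apply sum_le_sum
        intro u hu
        have h2 : ((Z u).card : ℝ) ≤ 4 * (Z u ∩ (Big ∪ F)).card := by exact_mod_cast (mem_filter.1 hu).2
        have h3 := hZ1 u
        have h4 : (q:ℝ) * (Z u).card ≤ q * (4 * (Z u ∩ (Big ∪ F)).card) := mul_le_mul_of_nonneg_left h2 (by positivity)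
        linarith
    _ ≤ ∑ u, 4 * q * ((Z u ∩ (Big ∪ F)).card : ℝ) :=
        sum_le_sum_of_subset_of_nonneg (subset_univ _) (fun _ _ _ => by positivity)
    _ = 4 * q * ∑ u, ((Z u ∩ (Big ∪ F)).card : ℝ) := by rw [mul_sum]
    _ ≤ _ := mul_le_mul_of_nonneg_left h1' (by positivity)

lemma colbad_sum {V : Type} [Fintype V] (G : SimpleGraph V) (z : V → ℝ) (d : ℝ) (q : ℕ) (X : Finset V) (y : ℝ)
    (hd : 0 < d) (hdeg : ∀ u ∈ X, d ≤ (nb G u).card)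
    (hX : ∀ u ∈ X, 3 * ((nb G u).card : ℝ) ≤ 4 * q * z u) (hy : ∑ u ∈ X, z u ^ 2 ≤ y) :
    ∑ u ∈ X, ((nb G u).card : ℝ) ≤ 2 * q ^ 2 / d * y := by
  have : ∀ u ∈ X, ((nb G u).card : ℝ) ≤ 2 * q ^ 2 / d * z u ^ 2 := by
    intro u hu
    have h1 := hX u hu
    have h2 := hdeg u hu
    set D : ℝ := ((nb G u).card : ℝ)
    have h3 : 9 * (D * D) ≤ 16 * (q * z u) ^ 2 := by
      have : (3 * D) ^ 2 ≤ (4 * q * z u) ^ 2 := pow_le_pow_left₀ (by positivity) h1 2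
      nlinarith
    have h4 : d * D ≤ D * D := mul_le_mul_of_nonneg_right h2 (by positivity)
    rw [div_mul_eq_mul_div, le_div_iff₀ hd]
    nlinarith [sq_nonneg (q * z u)]
  refine (sum_le_sum this).trans ?_
  rw [← mul_sum]
  exact mul_le_mul_of_nonneg_left hy (by positivity)
end DI

namespace DI
open Finset Classical

lemma hnd_num (r q ℓ m d Dv t Qc S : ℝ) (hr : 1 ≤ r) (hq : 1 ≤ q) (hℓ : ℓ = 10000 * r ^ 2 * q)
    (hd : 0 < d) (hm1 : d ≤ m * (100 * r * q ^ 2)) (hm2 : 2 * ℓ ≤ m) (hm3 : m ≤ d) (h1 : d ≤ Dv)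
    (h2 : Dv ≤ q ^ 3 * d) (ht0 : 0 ≤ t) (h3 : t ≤ q ^ 3 * d)
    (hQ : Qc ≤ m + (ℓ + 1) * (Dv + ℓ * (2 * t))) (hS : (m - ℓ) * (1 / q * (t + Dv / ℓ)) ≤ S) :
    Qc ≤ 10 ^ 12 * (r * q) ^ 5 * d ∧ d * Qc ≤ 10 ^ 12 * (r * q) ^ 5 * S := by
  have hr2 : 1 ≤ r ^ 2 := one_le_pow₀ hr
  have hl1 : 1 ≤ ℓ := by
    rw [hℓ]
    have : 1 ≤ r ^ 2 * q := one_le_mul_of_one_le_of_one_le hr2 hq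
    linarith
  have hl0 : 0 < ℓ := by linarith
  have hq0 : 0 < q := by linarith
  have hr0 : 0 < r := by linarith
  set Y := ℓ * t + Dv with hY
  have hlt : 0 ≤ ℓ * t := by positivity
  have hYd : d ≤ Y := by linarith
  have hY0 : 0 < Y := by linarith
  have hQY : Qc ≤ 5 * ℓ * Y := by
    have a1 : Dv + ℓ * (2 * t) ≤ 2 * Y := by
      have : ℓ * (2 * t) = 2 * (ℓ * t) := by ring
      linarith
    have a2 : (ℓ + 1) * (Dv + ℓ * (2 * t)) ≤ (2 * ℓ) * (2 * Y) :=
      mul_le_mul (by linarith) a1 (by have : 0 ≤ ℓ * (2 * t) := by positivity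
                                      linarith) (by positivity)
    have a3 : 1 * Y ≤ ℓ * Y := mul_le_mul_of_nonneg_right hl1 hY0.le
    linarith
  have hS2 : m * Y ≤ S * (2 * ℓ * q) := by
    have e : (m - ℓ) * (1 / q * (t + Dv / ℓ)) = (m - ℓ) * Y / (ℓ * q) := by
      rw [hY]; field_simp
    rw [e, div_le_iff₀ (by positivity)] at hS
    have : m * Y ≤ 2 * ((m - ℓ) * Y) := by
      have : 2 * ((m - ℓ) * Y) = (2 * m - 2 * ℓ) * Y := by ring
      rw [this]; exact mul_le_mul_of_nonneg_right (by linarith) hY0.le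
    linarith
  have hYu : Y ≤ 2 * ℓ * (q ^ 3 * d) := by
    have a1 : ℓ * t ≤ ℓ * (q ^ 3 * d) := mul_le_mul_of_nonneg_left h3 hl0.le
    have a2 : 1 * (q ^ 3 * d) ≤ ℓ * (q ^ 3 * d) := mul_le_mul_of_nonneg_right hl1 (by positivity)
    linarith
  constructor
  · calc Qc ≤ 5 * ℓ * Y := hQY
      _ ≤ 5 * ℓ * (2 * ℓ * (q ^ 3 * d)) := mul_le_mul_of_nonneg_left hYu (by positivity)
      _ = 10 ^ 9 * r ^ 4 * q ^ 5 * d * 1 := by rw [hℓ]; ring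
      _ ≤ 10 ^ 9 * r ^ 4 * q ^ 5 * d * (10 ^ 3 * r) := mul_le_mul_of_nonneg_left (by linarith) (by positivity)
      _ = _ := by ring
  · have hmY : 0 ≤ m := by linarith
    have a1 : d * Y ≤ S * (2 * ℓ * q) * (100 * r * q ^ 2) := by
      calc d * Y ≤ m * (100 * r * q ^ 2) * Y := mul_le_mul_of_nonneg_right hm1 hY0.le
        _ = m * Y * (100 * r * q ^ 2) := by ring
        _ ≤ _ := mul_le_mul_of_nonneg_right hS2 (by positivity)
    have hS0 : 0 ≤ S := by
      by_contra hneg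
      push Not at hneg
      have : S * (2 * ℓ * q) < 0 := mul_neg_of_neg_of_pos hneg (by positivity)
      have : 0 ≤ m * Y := by positivity
      linarith
    calc d * Qc ≤ d * (5 * ℓ * Y) := mul_le_mul_of_nonneg_left hQY hd.le
      _ = 5 * ℓ * (d * Y) := by ring
      _ ≤ 5 * ℓ * (S * (2 * ℓ * q) * (100 * r * q ^ 2)) := mul_le_mul_of_nonneg_left a1 (by positivity)
      _ = 10 ^ 11 * (r * q) ^ 5 * S := by rw [hℓ]; ring
      _ ≤ _ := by
        apply mul_le_mul_of_nonneg_right _ hS0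
        apply mul_le_mul_of_nonneg_right _ (by positivity)
        norm_num

lemma log_mem {n n0 r : ℕ} (hn0 : 0 < n0) (h1 : n0 ≤ n) (h2 : n ≤ 2 ^ (3 * r) * n0) :
    Nat.log 2 n ∈ Icc (Nat.log 2 n0) (Nat.log 2 n0 + 3 * r) := by
  rw [mem_Icc]
  refine ⟨Nat.log_mono_right h1, ?_⟩
  refine (Nat.log_mono_right h2).trans ?_
  apply le_of_eq
  clear h1 h2
  generalize 3 * r = k
  induction k with
  | zero => simp
  | succ k ih =>
    rw [pow_succ, mul_assoc, mul_comm 2 n0, ← mul_assoc, Nat.log_mul_base (by norm_num) (by positivity), ih]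
    rfl

set_option maxHeartbeats 1600000 in
lemma caseII {V : Type} [Fintype V] (G : SimpleGraph V) (hN : 0 < Fintype.card V) (r q : ℕ) (hr : 1 ≤ r)
    (hq : q = 2 ^ r) (hqr : 10 ^ 6 * r ^ 3 ≤ q) (d : ℝ) (hd : 10 ^ 8 * (r:ℝ) ^ 3 * (q:ℝ) ^ 3 ≤ d)
    (hdeg : ∀ v, d ≤ (nb G v).card) (hsum : (E G : ℝ) = 2 * d * Fintype.card V)
    (Z : V → Finset V) (hZnb : ∀ u, Z u ⊆ nb G u) (hZ1 : ∀ u, ((nb G u).card : ℝ) ≤ q * (Z u).card)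
    (hZ2 : ∀ u, (q:ℝ) * (Z u).card ≤ 2 * (nb G u).card) (R : ℕ) (hR : (R:ℝ) ≤ 900 * r * d)
    (hF : ∑ v ∈ univ.filter (fun v => R ≤ ld Z v), ld Z v ≤ Fintype.card V) :
    Dense G d (10 ^ 12 * ((r:ℝ) * q) ^ 5) ∨ Out G d q := by
  by_cases hD : Dense G d (10 ^ 12 * ((r:ℝ) * q) ^ 5)
  · left; exact hD
  right
  set N : ℝ := (Fintype.card V : ℝ) with hNd
  have hN' : 0 < N := by simpa [hNd] using hN
  have hr1 : (1:ℝ) ≤ r := by exact_mod_cast hr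
  have hr0 : (0:ℝ) < r := by linarith
  have hqr' : 10 ^ 6 * (r:ℝ) ^ 3 ≤ q := by exact_mod_cast hqr
  have hr3 : (r:ℝ) ≤ r ^ 3 := le_self_pow₀ hr1 (by norm_num)
  have hr2 : (r:ℝ) ^ 2 ≤ r ^ 3 := pow_le_pow_right₀ hr1 (by norm_num)
  have hq1 : (10:ℝ) ^ 6 ≤ q := by linarith
  have hq0 : (0:ℝ) < q := by linarith
  have hd0 : 0 < d := lt_of_lt_of_le (by positivity) hd
  have hEG : ∑ x, ((nb G x).card : ℝ) = 2 * d * N := by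
    rw [← hsum]; simp [E]
  set Big := univ.filter (fun v => (q:ℝ) ^ 3 * d ≤ (nb G v).card) with hBigd
  set F := univ.filter (fun v => R ≤ ld Z v) with hFd
  have hBc : (q:ℝ) ^ 3 * Big.card ≤ 2 * N := by
    have : ∑ v ∈ Big, (q:ℝ) ^ 3 * d ≤ ∑ x, ((nb G x).card : ℝ) :=
      (sum_le_sum (fun v hv => (mem_filter.1 hv).2)).trans
        (sum_le_sum_of_subset_of_nonneg (subset_univ _) (fun _ _ _ => by positivity))
    rw [hEG, sum_const, nsmul_eq_mul] at this
    have : d * ((q:ℝ) ^ 3 * Big.card) ≤ d * (2 * N) := by linarith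
    exact le_of_mul_le_mul_left this hd0
  set A := univ \ (Big ∪ F) with hA
  set Z' : V → Finset V := fun u => Z u ∩ A with hZ'
  set bd := univ.filter (fun u => (Z u).card ≤ 4 * (Z u ∩ (Big ∪ F)).card) with hbd
  have hbdsum : ∑ u ∈ bd, ((nb G u).card : ℝ) ≤ d * N / q := by
    refine (bad_sum G Z F Big R q hZ1 ?_ hF).trans ?_
    · intro v hv
      simp only [hFd, mem_filter, mem_univ, true_and, not_le] at hv
      exact hv.le
    · rw [le_div_iff₀ hq0, ← hNd]
      have a1 : (Big.card:ℝ) * R * q ^ 3 ≤ 2 * N * (900 * r * d) := by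
        calc (Big.card:ℝ) * R * q ^ 3 = (q:ℝ) ^ 3 * Big.card * R := by ring
          _ ≤ 2 * N * (900 * r * d) := mul_le_mul hBc hR (by positivity) (by positivity)
      have a2 : 4 * (q:ℝ) * (N + Big.card * R) * q * q = 4 * q ^ 3 * N + 4 * (Big.card * R * q ^ 3) := by ring
      have a3 : 4 * (q:ℝ) ^ 3 * N ≤ d * N * q / 2 := by
        have : 8 * (q:ℝ) ^ 3 ≤ d * 1 := by
          refine le_trans ?_ (hd.trans (by linarith))
          have : (1:ℝ) ≤ r ^ 3 := by linarith
          have := mul_le_mul_of_nonneg_right this (by positivity : 0 ≤ 10 ^ 8 * (q:ℝ) ^ 3)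
          have h8 : 0 ≤ (q:ℝ) ^ 3 := by positivity
          linarith
        have h2 : d * 1 ≤ d * q := mul_le_mul_of_nonneg_left (by linarith) hd0.le
        have := mul_le_mul_of_nonneg_right (this.trans h2) hN'.le
        linarith
      have a4 : 4 * (2 * N * (900 * r * d)) ≤ d * N * q / 2 := by
        have : 14400 * (r:ℝ) ≤ q := by linarith
        have := mul_le_mul_of_nonneg_left this (by positivity : 0 ≤ d * N)
        linarith
      have a5 : 4 * (q:ℝ) * (N + Big.card * R) * q * q ≤ d * N * q := by rw [a2]; linarith
      exact le_of_mul_le_mul_right a5 hq0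
  have hsub : ∀ u, (Z u).card = (Z' u).card + (Z u ∩ (Big ∪ F)).card := by
    intro u
    have : Z' u = Z u \ (Z u ∩ (Big ∪ F)) := by
      ext x; simp only [hZ', hA, mem_inter, mem_sdiff, mem_univ, true_and]; tauto
    rw [this, card_sdiff_add_card_eq_card inter_subset_left]
  have hnbd : ∀ u, u ∉ bd → 3 * ((nb G u).card : ℝ) ≤ 4 * q * (Z' u).card := by
    intro u hu
    simp only [hbd, mem_filter, mem_univ, true_and, not_le] at hu
    have := hsub u
    have h1 : 3 * (Z u).card ≤ 4 * (Z' u).card := by omega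
    have h2 : 3 * ((Z u).card:ℝ) ≤ 4 * (Z' u).card := by exact_mod_cast h1
    have h3 := hZ1 u
    have h4 := mul_le_mul_of_nonneg_left h2 hq0.le
    linarith
  obtain ⟨f, hf⟩ := coloring Z' (2 * r) (by omega)
  set cb := univ.filter (fun i => ∃ j, 2 * ((2 * r : ℕ) : ℝ) * (((Z' i).filter (fun b => f b = j)).card : ℝ) < ((Z' i).card : ℝ)) with hcb
  have hcbsum : ∑ u ∈ cb \ bd, ((nb G u).card : ℝ) ≤ d * N / q := by
    have hy : ∑ u ∈ cb \ bd, ((Z' u).card : ℝ) ^ 2 ≤ 64 * r ^ 2 * d * N / q := by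
      calc ∑ u ∈ cb \ bd, ((Z' u).card : ℝ) ^ 2 ≤ ∑ u ∈ cb, ((Z' u).card : ℝ) ^ 2 :=
            sum_le_sum_of_subset_of_nonneg sdiff_subset (fun _ _ _ => by positivity)
        _ ≤ _ := hf
        _ ≤ 4 * ((2 * r : ℕ) : ℝ) ^ 2 * ∑ u, (2 * ((nb G u).card : ℝ) / q) := by
            apply mul_le_mul_of_nonneg_left _ (by positivity)
            apply sum_le_sum
            intro u _
            rw [le_div_iff₀ hq0]
            have h1 := hZ2 u
            have h2 : ((Z' u).card : ℝ) ≤ (Z u).card := by exact_mod_cast card_le_card inter_subset_left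
            have h3 := mul_le_mul_of_nonneg_left h2 hq0.le
            linarith
        _ = _ := by
            rw [← sum_div, ← mul_sum, hEG]; push_cast; ring
    refine (colbad_sum G (fun u => ((Z' u).card : ℝ)) d q (cb \ bd) _ hd0 (fun u _ => hdeg u)
      (fun u hu => hnbd u (mem_sdiff.1 hu).2) hy).trans ?_
    have e : 2 * (q:ℝ) ^ 2 / d * (64 * r ^ 2 * d * N / q) = 128 * r ^ 2 * q * N := by field_simp; ring
    rw [e, le_div_iff₀ hq0]
    have : 128 * (r:ℝ) ^ 2 * q * q ≤ d := by
      refine le_trans ?_ hd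
      calc 128 * (r:ℝ) ^ 2 * q * q = 128 * ((r:ℝ) ^ 2 * (q:ℝ) ^ 2) := by ring
        _ ≤ 10 ^ 8 * ((r:ℝ) ^ 3 * (q:ℝ) ^ 3) := by
          apply mul_le_mul (by norm_num) _ (by positivity) (by positivity)
          exact mul_le_mul hr2 (pow_le_pow_right₀ (by linarith) (by norm_num)) (by positivity) (by positivity)
        _ = _ := by ring
    have := mul_le_mul_of_nonneg_right this hN'.le
    linarith
  set U0 := univ \ (Big ∪ (bd ∪ cb)) with hU0
  have hU0B : ∀ u ∈ U0, ((nb G u).card : ℝ) < (q:ℝ) ^ 3 * d := by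
    intro u hu
    simp only [hU0, mem_sdiff, mem_union, not_or, mem_univ, true_and] at hu
    have := hu.1
    simpa [hBigd] using this
  have hAB : ∀ u ∈ A, ((nb G u).card : ℝ) < (q:ℝ) ^ 3 * d := by
    intro u hu
    simp only [hA, mem_sdiff, mem_union, not_or, mem_univ, true_and] at hu
    have := hu.1
    simpa [hBigd] using this
  obtain ⟨e, he1, he2⟩ := good_colours hN r hr f
  set ℓ : ℕ := 10000 * r ^ 2 * q with hℓ
  have hℓ' : (ℓ:ℝ) = 10000 * (r:ℝ) ^ 2 * q := by rw [hℓ]; push_cast; ring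
  set m : ℕ := ⌈d / (100 * r * (q:ℝ) ^ 2)⌉₊ with hm
  have hm1 : d / (100 * r * (q:ℝ) ^ 2) ≤ m := Nat.le_ceil _
  have hm1' : d ≤ m * (100 * r * (q:ℝ) ^ 2) := by rwa [div_le_iff₀ (by positivity)] at hm1
  have hm0 : 10 ^ 6 * ((r:ℝ) ^ 2 * q) ≤ d / (100 * r * (q:ℝ) ^ 2) := by
    rw [le_div_iff₀ (by positivity)]
    refine le_trans (le_of_eq ?_) hd
    ring
  have hrq : 1 ≤ (r:ℝ) ^ 2 * q := one_le_mul_of_one_le_of_one_le (one_le_pow₀ hr1) (by linarith)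
  have hm2 : 2 * (ℓ:ℝ) ≤ m := by rw [hℓ']; linarith
  have hmlt : (m:ℝ) < d / (100 * r * (q:ℝ) ^ 2) + 1 := Nat.ceil_lt_add_one (by positivity)
  have hm4 : (m:ℝ) ≤ 1.01 * (d / (100 * r * (q:ℝ) ^ 2)) := by linarith
  have hm3 : (m:ℝ) ≤ d := by
    have : d / (100 * r * (q:ℝ) ^ 2) ≤ d / 100 := by
      apply div_le_div_of_nonneg_left hd0.le (by norm_num)
      have : 1 ≤ (r:ℝ) * q ^ 2 := one_le_mul_of_one_le_of_one_le hr1 (one_le_pow₀ (by linarith))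
      linarith
    linarith
  have hℓ0 : 0 < ℓ := by
    have : (0:ℝ) < ℓ := by rw [hℓ']; positivity
    exact_mod_cast this
  have hℓm : ℓ < m := by
    have : (0:ℝ) < ℓ := by exact_mod_cast hℓ0
    have : (ℓ:ℝ) < m := by linarith
    exact_mod_cast this
  have hpos : ∀ u, (nb G u).card ≠ 0 := by
    intro u h0
    have := hdeg u
    rw [h0] at this; simp at this; linarith
  have hnd : ∀ v ∈ A, ∀ i, (∃ u ∈ U0, Nat.log 2 (nb G u).card = i) → ∀ Q : Finset V, Q.Nonempty →
      Q.card ≤ m + (ℓ + 1) * ((nb G v).card + ℓ * 2 ^ (i + 1)) →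
      ((m:ℝ) - ℓ) * (1 / (q:ℝ) * (2 ^ i + (nb G v).card / ℓ)) ≤ ∑ x ∈ Q, ((nb G x ∩ Q).card : ℝ) → False := by
    rintro v hv i ⟨u, hu, hi⟩ Q hQ hQc hQs
    apply hD
    have ht : ((2:ℝ) ^ i) ≤ (q:ℝ) ^ 3 * d := by
      refine le_trans ?_ (hU0B u hu).le
      have := Nat.pow_log_le_self 2 (hpos u)
      rw [hi] at this
      exact_mod_cast this
    have hQc' : (Q.card : ℝ) ≤ m + (ℓ + 1) * ((nb G v).card + ℓ * (2 * 2 ^ i)) := by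
      have : (Q.card : ℝ) ≤ m + (ℓ + 1) * ((nb G v).card + ℓ * 2 ^ (i + 1)) := by exact_mod_cast hQc
      rw [pow_succ] at this
      rw [mul_comm (2:ℝ)]; exact this
    have := hnd_num r q ℓ m d (nb G v).card (2 ^ i) Q.card _ hr1 (by linarith) hℓ' hd0 hm1' hm2 hm3
      (hdeg v) (hAB v hv).le (by positivity) ht hQc' hQs
    exact ⟨Q, hQ, this.1, this.2⟩
  set n0 : ℕ := ⌈d⌉₊ with hn0
  have hn0p : 0 < n0 := Nat.ceil_pos.2 hd0
  have hI : ∀ u ∈ U0, Nat.log 2 (nb G u).card ∈ Icc (Nat.log 2 n0) (Nat.log 2 n0 + 3 * r) := by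
    intro u hu
    apply log_mem hn0p
    · exact Nat.ceil_le.2 (hdeg u)
    · have h1 := hU0B u hu
      have h2 : (q:ℝ) ^ 3 * d ≤ (q:ℝ) ^ 3 * n0 := mul_le_mul_of_nonneg_left (Nat.le_ceil d) (by positivity)
      have h3 : ((nb G u).card : ℝ) ≤ ((2 ^ (3 * r) * n0 : ℕ) : ℝ) := by
        have e : (2:ℝ) ^ (3 * r) = (q:ℝ) ^ 3 := by rw [hq]; push_cast; rw [← pow_mul, mul_comm]
        push_cast; rw [e]; linarith
      exact_mod_cast h3
  obtain ⟨σ, C, U, hcfg, hcard, -, hUd⟩ := stages (G := G) (ℓ := ℓ) (ε := 1 / (q:ℝ)) (by positivity) (U0 := U0) (A := A)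
    hℓ0 m hℓm Z' (fun u v hv => (mem_nb.1 (hZnb u (mem_inter.1 hv).1)).symm) (fun u => inter_subset_right)
    (fun u _ => hpos u) hnd f e r he2 (N / r) (3 / (16 * r * q)) (d * N / (4 * q)) d (by positivity) (by positivity) hd0
    (Icc (Nat.log 2 n0) (Nat.log 2 n0 + 3 * r)) R he1 (by
      intro u hu k
      have hu' := hu
      simp only [hU0, mem_sdiff, mem_union, not_or, mem_univ, true_and] at hu'
      have h1 := hnbd u hu'.2.1
      have h2 := hu'.2.2
      simp only [hcb, mem_filter, mem_univ, true_and, not_exists, not_lt] at h2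
      have h3 := h2 k
      have h4 : Z' u ∩ univ.filter (fun v => f v = k) = (Z' u).filter (fun b => f b = k) := by
        ext x; simp
      rw [h4, div_mul_eq_mul_div, div_le_iff₀ (by positivity)]
      push_cast at h3
      have := mul_le_mul_of_nonneg_left h3 hq0.le
      linarith) hI (by
      intro v hv
      simp only [hA, mem_sdiff, mem_union, not_or, mem_univ, true_and, hFd, mem_filter, not_le] at hv
      refine le_trans (card_le_card ?_) hv.2.le
      intro u hu
      simp only [mem_filter, mem_univ, true_and, hZ', mem_inter] at hu ⊢
      exact hu.1) (fun u _ => hdeg u) (by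
      have h1 : ((Icc (Nat.log 2 n0) (Nat.log 2 n0 + 3 * r)).card : ℝ) ≤ 4 * r := by
        rw [Nat.card_Icc]
        have : Nat.log 2 n0 + 3 * r + 1 - Nat.log 2 n0 ≤ 4 * r := by omega
        exact_mod_cast this
      have h2 := mul_le_mul h1 hm4 (by positivity) (by positivity)
      refine (mul_le_mul_of_nonneg_right h2 (by positivity)).trans ?_
      have e1 : 4 * (r:ℝ) * (1.01 * (d / (100 * r * (q:ℝ) ^ 2))) * (N / r) = 0.0404 * (d * N / (r * q ^ 2)) := by
        field_simp; norm_num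
      have e2 : 3 / (16 * (r:ℝ) * q) * (d * N / (4 * q)) = 3 / 64 * (d * N / (r * q ^ 2)) := by
        field_simp; norm_num
      rw [e1, e2]
      apply mul_le_mul_of_nonneg_right _ (by positivity)
      norm_num) (by
      refine hR.trans ?_
      rw [hℓ']
      have : 3 / (16 * (r:ℝ) * q) * (d * (10000 * (r:ℝ) ^ 2 * q)) / 2 = 937.5 * r * d := by
        field_simp; norm_num
      rw [this]
      have : 0 < r * d := by positivity
      linarith) r le_rfl
  have hqℓ : q ≤ ℓ := by
    rw [hℓ]; exact Nat.le_mul_of_pos_left _ (by positivity)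
  refine out_of_cfg hcfg Big ?_ d ?_ hqℓ ?_ hN hsum hcard ?_ ?_ ?_
  · rw [Finset.disjoint_left]
    intro x hx hx'
    simp only [hU0, mem_sdiff, mem_union, not_or] at hx'
    exact hx'.2.1 hx
  · have : (100:ℝ) ≤ q := by linarith
    exact_mod_cast this
  · refine le_trans ?_ hd
    have h1 : (q:ℝ) ≤ q ^ 3 := le_self_pow₀ (by linarith) (by norm_num)
    have h2 : 1 * (q:ℝ) ^ 3 ≤ r ^ 3 * q ^ 3 := mul_le_mul_of_nonneg_right (by linarith) (by positivity)
    linarith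
  · rw [le_div_iff₀ hq0, ← hNd]
    have h1 : (ℓ:ℝ) + 1 ≤ 20000 * r ^ 2 * q := by rw [hℓ']; linarith
    have h2 : ((ℓ:ℝ) + 1) * Big.card * q ≤ 20000 * r ^ 2 * q * Big.card * q := by
      apply mul_le_mul_of_nonneg_right _ hq0.le
      exact mul_le_mul_of_nonneg_right h1 (by positivity)
    have h3 : 20000 * (r:ℝ) ^ 2 * q * Big.card * q * q = 20000 * r ^ 2 * (q ^ 3 * Big.card) := by ring
    have h4 : 20000 * (r:ℝ) ^ 2 * (q ^ 3 * Big.card) ≤ 20000 * r ^ 2 * (2 * N) := mul_le_mul_of_nonneg_left hBc (by positivity)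
    have h5 : 40000 * (r:ℝ) ^ 2 * N ≤ q * N := mul_le_mul_of_nonneg_right (by linarith) hN'.le
    have h6 : 20000 * (r:ℝ) ^ 2 * q * Big.card * q * q ≤ N * q := by rw [h3]; linarith
    have h7 := le_of_mul_le_mul_right h6 hq0
    linarith
  · refine hUd.trans (le_of_eq ?_)
    have : (2:ℝ) ^ r = q := by rw [hq]; push_cast; rfl
    rw [hEG, this]
    field_simp; ring
  · have h1 : univ \ (U0 ∪ Big) ⊆ bd ∪ (cb \ bd) := by
      intro x hx
      simp only [hU0, mem_sdiff, mem_union, not_or, mem_univ, true_and] at hx ⊢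
      tauto
    have h2 : ∑ u ∈ univ \ (U0 ∪ Big), ((nb G u).card : ℝ) ≤ ∑ u ∈ bd ∪ (cb \ bd), ((nb G u).card : ℝ) :=
      sum_le_sum_of_subset_of_nonneg h1 (fun _ _ _ => by positivity)
    rw [sum_union disjoint_sdiff] at h2
    have : 2 * d * N / q = d * N / q + d * N / q := by ring
    rw [this]; linarith
end DI

namespace DI
open Finset Classical

def addStar {V : Type} (Γ : SimpleGraph V) (b : V) (T : Finset V) : SimpleGraph V where
  Adj x y := Γ.Adj x y ∨ (x ≠ y ∧ ((x = b ∧ y ∈ T) ∨ (y = b ∧ x ∈ T)))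
  symm := ⟨by
    rintro x y (h | ⟨h, h'⟩)
    · exact Or.inl h.symm
    · exact Or.inr ⟨h.symm, h'.symm⟩⟩
  loopless := ⟨by
    rintro x (h | h)
    · exact h.ne rfl
    · exact h.1 rfl⟩

lemma E_addStar {V : Type} [Fintype V] (Γ : SimpleGraph V) (b : V) (T : Finset V) :
    E (addStar Γ b T) = E Γ + 2 * ((T \ nb Γ b).erase b).card := by
  set T' := (T \ nb Γ b).erase b with hT'
  have hp : prs (addStar Γ b T) = prs Γ ∪ (T'.image (fun y => (b, y)) ∪ T'.image (fun y => (y, b))) := by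
    ext ⟨x, y⟩
    simp only [mem_prs, mem_union, mem_image, Prod.mk.injEq, hT', mem_erase, mem_sdiff, mem_nb]
    constructor
    · rintro (h | ⟨h, ⟨rfl, h2⟩ | ⟨rfl, h2⟩⟩)
      · exact Or.inl h
      · by_cases hx : Γ.Adj x y
        · exact Or.inl hx
        · exact Or.inr (Or.inl ⟨y, ⟨h.symm, h2, hx⟩, rfl, rfl⟩)
      · by_cases hx : Γ.Adj x y
        · exact Or.inl hx
        · exact Or.inr (Or.inr ⟨x, ⟨h, h2, fun h' => hx h'.symm⟩, rfl, rfl⟩)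
    · rintro (h | ⟨z, ⟨h1, h2, h3⟩, rfl, rfl⟩ | ⟨z, ⟨h1, h2, h3⟩, rfl, rfl⟩)
      · exact Or.inl h
      · exact Or.inr ⟨h1.symm, Or.inl ⟨rfl, h2⟩⟩
      · exact Or.inr ⟨h1, Or.inr ⟨rfl, h2⟩⟩
  have hT1 : ∀ y ∈ T', y ≠ b ∧ ¬ Γ.Adj b y := by
    intro y hy
    simp only [hT', mem_erase, mem_sdiff, mem_nb] at hy
    exact ⟨hy.1, hy.2.2⟩
  rw [E_eq, E_eq, hp, card_union_of_disjoint, card_union_of_disjoint, card_image_of_injective,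
    card_image_of_injective]
  · ring
  · intro x y h; simpa using h
  · intro x y h; simpa using h
  · rw [Finset.disjoint_left]
    rintro p hp hp'
    obtain ⟨y, hy, rfl⟩ := mem_image.1 hp
    obtain ⟨z, hz, he⟩ := mem_image.1 hp'
    simp only [Prod.mk.injEq] at he
    exact (hT1 z hz).1 he.1
  · rw [Finset.disjoint_left]
    rintro p hp hp'
    rcases mem_union.1 hp' with h | h
    · obtain ⟨y, hy, rfl⟩ := mem_image.1 h
      exact (hT1 y hy).2 (mem_prs.1 hp)
    · obtain ⟨y, hy, rfl⟩ := mem_image.1 h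
      exact (hT1 y hy).2 (mem_prs.1 hp).symm

lemma greedy_pick {V : Type} (N' : V → Finset V) (S0 M : Finset V) (d1 : ℕ) (θ : ℝ)
    (hN : ∀ a ∈ M, (N' a).card = d1) (n : ℕ) :
    (∃ P ⊆ M, P.card = n ∧ n * ((d1:ℝ) - θ) ≤ ((P.biUnion N') \ S0).card) ∨
    (∃ P ⊆ M, P.card < n ∧ ∀ a ∈ M \ P, θ < ((N' a ∩ (S0 ∪ P.biUnion N')).card : ℝ)) := by
  induction n with
  | zero => left; exact ⟨∅, by simp, by simp, by simp⟩
  | succ n ih =>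
    rcases ih with ⟨P, hPM, hPc, hs⟩ | ⟨P, hPM, hPc, h⟩
    · by_cases hst : ∀ a ∈ M \ P, θ < ((N' a ∩ (S0 ∪ P.biUnion N')).card : ℝ)
      · right; exact ⟨P, hPM, by omega, hst⟩
      · left
        push Not at hst
        obtain ⟨a, ha, hle⟩ := hst
        obtain ⟨haM, haP⟩ := mem_sdiff.1 ha
        refine ⟨insert a P, insert_subset haM hPM, by rw [card_insert_of_notMem haP, hPc], ?_⟩
        have h1 : (insert a P).biUnion N' \ S0 = (P.biUnion N' \ S0) ∪ (N' a \ (S0 ∪ P.biUnion N')) := by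
          rw [biUnion_insert]
          ext x; simp only [mem_sdiff, mem_union]; tauto
        have h2 : Disjoint (P.biUnion N' \ S0) (N' a \ (S0 ∪ P.biUnion N')) := by
          rw [Finset.disjoint_left]
          intro x hx hx'
          simp only [mem_sdiff, mem_union, not_or] at hx hx'
          exact hx'.2.2 hx.1
        rw [h1, card_union_of_disjoint h2]
        have h3 := card_sdiff_add_card_inter (N' a) (S0 ∪ P.biUnion N')
        rw [hN a haM] at h3
        have h4 : ((N' a \ (S0 ∪ P.biUnion N')).card : ℝ) + (N' a ∩ (S0 ∪ P.biUnion N')).card = d1 := by exact_mod_cast h3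
        push_cast
        linarith
    · right; exact ⟨P, hPM, by omega, h⟩

structure Env {V : Type} [Fintype V] (G : SimpleGraph V) (r q d1 h : ℕ) (d c : ℝ) (A B B2 : Finset V)
    (N' Y Z : V → Finset V) (f : V → Fin r) : Prop where
  hr : 1 ≤ r
  hq : 1000 * r ≤ q
  hd : (q:ℝ) ≤ d
  hc : (q:ℝ) ^ 3 ≤ c
  hd1 : (d1:ℝ) ≤ d
  hh : (h:ℝ) ≤ 100 * r * d
  nd : ¬ Dense G d c
  B2B : B2 ⊆ B
  AB : Disjoint A B
  Bne : B.Nonempty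
  N1 : ∀ a ∈ A, N' a ⊆ nb G a ∩ B
  N2 : ∀ a ∈ A, (N' a).card = d1
  Y1 : ∀ b ∈ B2, Y b ⊆ A
  Y2 : ∀ b ∈ B2, ∀ a ∈ Y b, b ∈ Z a
  Y3 : ∀ b ∈ B2, (Y b).card ≤ h
  col : ∀ b ∈ B2, ∀ j, 48 * d ≤ ((Y b).filter (fun a => f a = j)).card
  Zn : ∀ a, Z a ⊆ nb G a
  load : ∀ A' ⊆ A, (q:ℝ) * ∑ a ∈ A', ((Z a).card : ℝ) ≤ 4 * d * (A'.card + B.card)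

structure Ost {V : Type} [Fintype V] (q d1 : ℕ) (d : ℝ) (B2 : Finset V)
    (N' Y : V → Finset V) (O : Finset V) (L : V → Finset V) (Γ : SimpleGraph V) : Prop where
  OB : O ⊆ B2
  LY : ∀ b ∈ O, L b ⊆ Y b
  Lq : ∀ b ∈ O, (L b).card = q
  dj : ∀ b ∈ O, ∀ b' ∈ O, b ≠ b' → Disjoint (L b) (L b')
  ed : ∀ x y, Γ.Adj x y → (x ∈ O ∧ ∃ a ∈ L x, y ∈ N' a) ∨ (y ∈ O ∧ ∃ a ∈ L y, x ∈ N' a)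
  lo : 2 * (O.card : ℝ) * (q * ((d1:ℝ) - d / q) - 1) ≤ E Γ
  hi : E Γ ≤ 2 * O.card * (q * d1)

lemma pick_dense {V : Type} [Fintype V] {G : SimpleGraph V} {r q d1 h : ℕ} {d c : ℝ} {A B B2 : Finset V}
    {N' Y Z : V → Finset V} {f : V → Fin r} (env : Env G r q d1 h d c A B B2 N' Y Z f)
    (M S0 : Finset V) (hMA : M ⊆ A) (hMh : M.card ≤ h) (hM : 24 * d ≤ M.card) (hS0 : (S0.card : ℝ) ≤ 4 * q ^ 2 * d) :
    ∃ P ⊆ M, P.card = q ∧ q * ((d1:ℝ) - d / q) ≤ ((P.biUnion N') \ S0).card := by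
  rcases greedy_pick N' S0 M d1 (d / q) (fun a ha => env.N2 a (hMA ha)) q with h1 | ⟨P, hPM, hPq, hst⟩
  · exact h1
  exfalso
  apply env.nd
  have hr1 : (1:ℝ) ≤ r := by exact_mod_cast env.hr
  have hqr : 1000 * (r:ℝ) ≤ q := by exact_mod_cast env.hq
  have hq0 : (0:ℝ) < q := by linarith
  have hd0 : 0 < d := by linarith [env.hd]
  set T := S0 ∪ P.biUnion N' with hT
  have hPq' : (P.card : ℝ) ≤ q := by exact_mod_cast hPq.le
  have hTc : (T.card : ℝ) ≤ 5 * q ^ 2 * d := by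
    have h1 : T.card ≤ S0.card + P.card * d1 := by
      refine (card_union_le _ _).trans (Nat.add_le_add_left ?_ _)
      exact card_biUnion_le_card_mul _ _ _ (fun a ha => (env.N2 a (hMA (hPM ha))).le)
    have h2 : (T.card : ℝ) ≤ S0.card + P.card * d1 := by exact_mod_cast h1
    have h3 : (P.card : ℝ) * d1 ≤ q * d := mul_le_mul hPq' env.hd1 (by positivity) (by positivity)
    have h4 : (q:ℝ) * d ≤ q ^ 2 * d := mul_le_mul_of_nonneg_right (le_self_pow₀ (by linarith) (by norm_num)) hd0.le
    linarith
  have hMP : 20 * d ≤ ((M \ P).card : ℝ) := by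
    have h1 := le_card_sdiff P M
    have h2 : M.card ≤ (M \ P).card + P.card := by omega
    have h3 : (M.card : ℝ) ≤ (M \ P).card + P.card := by exact_mod_cast h2
    linarith [env.hd]
  have hMne : (M \ P).Nonempty := by
    rw [← card_pos]
    have : (0:ℝ) < (M \ P).card := by linarith
    exact_mod_cast this
  have hQc : (((M \ P) ∪ T).card : ℝ) ≤ 6 * q ^ 2 * d := by
    have h1 : (((M \ P) ∪ T).card : ℝ) ≤ (M \ P).card + T.card := by exact_mod_cast card_union_le _ _
    have h2 : ((M \ P).card : ℝ) ≤ h := by exact_mod_cast (card_le_card sdiff_subset).trans hMh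
    have h3 : 100 * (r:ℝ) * d ≤ q ^ 2 * d := by
      apply mul_le_mul_of_nonneg_right _ hd0.le
      have : (q:ℝ) ≤ q ^ 2 := le_self_pow₀ (by linarith) (by norm_num)
      linarith
    linarith [env.hh]
  have hS : 20 * d * (d / q) ≤ ∑ x ∈ (M \ P) ∪ T, ((nb G x ∩ ((M \ P) ∪ T)).card : ℝ) := by
    calc 20 * d * (d / q) ≤ ((M \ P).card : ℝ) * (d / q) := mul_le_mul_of_nonneg_right hMP (by positivity)
      _ = ∑ x ∈ M \ P, d / (q:ℝ) := by simp
      _ ≤ ∑ x ∈ M \ P, ((nb G x ∩ ((M \ P) ∪ T)).card : ℝ) := by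
          apply sum_le_sum
          intro a ha
          refine (hst a ha).le.trans ?_
          have : N' a ∩ T ⊆ nb G a ∩ ((M \ P) ∪ T) := by
            intro x hx
            obtain ⟨h1, h2⟩ := mem_inter.1 hx
            exact mem_inter.2 ⟨(mem_inter.1 (env.N1 a (hMA (mem_sdiff.1 ha).1) h1)).1, mem_union_right _ h2⟩
          exact_mod_cast card_le_card this
      _ ≤ _ := sum_le_sum_of_subset_of_nonneg subset_union_left (fun _ _ _ => by positivity)
  refine ⟨(M \ P) ∪ T, hMne.mono subset_union_left, hQc.trans ?_, ?_⟩
  · apply mul_le_mul_of_nonneg_right _ hd0.le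
    refine le_trans ?_ env.hc
    rw [pow_succ (q:ℝ) 2]
    have : 0 ≤ (q:ℝ) ^ 2 := by positivity
    have := mul_le_mul_of_nonneg_left (by linarith : (6:ℝ) ≤ q) this
    linarith
  · calc d * (((M \ P) ∪ T).card : ℝ) ≤ d * (6 * q ^ 2 * d) := mul_le_mul_of_nonneg_left hQc hd0.le
      _ ≤ (q:ℝ) ^ 3 * (20 * d * (d / q)) := by
          have e : (q:ℝ) ^ 3 * (20 * d * (d / q)) = 20 * (q ^ 2 * (d * d)) := by field_simp
          rw [e]
          have : 0 ≤ (q:ℝ) ^ 2 * (d * d) := by positivity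
          linarith
      _ ≤ c * (20 * d * (d / q)) := mul_le_mul_of_nonneg_right env.hc (by positivity)
      _ ≤ _ := mul_le_mul_of_nonneg_left hS (le_trans (by positivity) env.hc)
end DI

namespace DI
open Finset Classical

lemma find_b {V : Type} [Fintype V] {G : SimpleGraph V} {r q d1 h : ℕ} {d c : ℝ} {A B B2 : Finset V}
    {N' Y Z : V → Finset V} {f : V → Fin r} (env : Env G r q d1 h d c A B B2 N' Y Z f)
    {O : Finset V} {L : V → Finset V} {Γ : SimpleGraph V} (st : Ost q d1 d B2 N' Y O L Γ)
    (O0 : Finset V) (h1 : (B2 \ O0).card ≤ 2 * (B2 \ O).card) (h2 : B.card ≤ q * (B2 \ O).card) :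
    ∃ b ∈ B2 \ O, ((((O \ O0).biUnion L).filter (fun a => b ∈ Z a)).card : ℝ) ≤ 24 * d ∧
      ((nb Γ b).card : ℝ) ≤ 4 * q ^ 2 * d := by
  have hr1 : (1:ℝ) ≤ r := by exact_mod_cast env.hr
  have hqr : 1000 * (r:ℝ) ≤ q := by exact_mod_cast env.hq
  have hq0 : (0:ℝ) < q := by linarith
  have hd0 : 0 < d := by linarith [env.hd]
  set X := B2 \ O with hX
  set us := (O \ O0).biUnion L with hus
  have hB0 : 0 < B.card := card_pos.2 env.Bne
  have hX0 : 0 < X.card := by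
    rcases Nat.eq_zero_or_pos X.card with h0 | h0
    · rw [h0] at h2; omega
    · exact h0
  have hX0' : (0:ℝ) < X.card := by exact_mod_cast hX0
  have h2' : (B.card : ℝ) ≤ q * X.card := by exact_mod_cast h2
  have husA : us ⊆ A := by
    intro a ha
    obtain ⟨b, hb, hab⟩ := mem_biUnion.1 ha
    have hbO := (mem_sdiff.1 hb).1
    exact env.Y1 b (st.OB hbO) (st.LY b hbO hab)
  have husc : (us.card : ℝ) ≤ 2 * q * X.card := by
    have e1 : us.card ≤ (O \ O0).card * q :=
      card_biUnion_le_card_mul _ _ _ (fun b hb => (st.Lq b (mem_sdiff.1 hb).1).le)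
    have e2 : (O \ O0).card ≤ 2 * X.card :=
      (card_le_card (sdiff_subset_sdiff st.OB (le_refl _))).trans h1
    have e3 : us.card ≤ 2 * X.card * q := e1.trans (Nat.mul_le_mul_right _ e2)
    have e4 : (us.card : ℝ) ≤ 2 * X.card * q := by exact_mod_cast e3
    linarith
  have hl := env.load us husA
  have hl2 : ∑ a ∈ us, ((Z a).card : ℝ) ≤ 12 * d * X.card := by
    have : (q:ℝ) * ∑ a ∈ us, ((Z a).card : ℝ) ≤ q * (12 * d * X.card) := by
      calc _ ≤ 4 * d * ((us.card:ℝ) + B.card) := hl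
        _ ≤ 4 * d * (2 * q * X.card + q * X.card) := mul_le_mul_of_nonneg_left (by linarith) (by linarith)
        _ = _ := by ring
    exact le_of_mul_le_mul_left this hq0
  have hu : ∑ b ∈ X, ((us.filter (fun a => b ∈ Z a)).card : ℝ) ≤ 12 * d * X.card := by
    refine le_trans ?_ hl2
    have e := sum_ld Z X us
    have e2 : ∑ a ∈ us, (Z a ∩ X).card ≤ ∑ a ∈ us, (Z a).card :=
      sum_le_sum (fun a _ => card_le_card inter_subset_left)
    rw [← e] at e2
    exact_mod_cast e2
  have hOB : O.card ≤ B.card := card_le_card (st.OB.trans env.B2B)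
  have hE : (E Γ : ℝ) ≤ 2 * q ^ 2 * d * X.card := by
    have e1 : (E Γ : ℝ) ≤ 2 * O.card * (q * d1) := by exact_mod_cast st.hi
    have e2 : (O.card : ℝ) ≤ q * X.card := le_trans (by exact_mod_cast hOB) h2'
    calc (E Γ : ℝ) ≤ 2 * O.card * (q * d1) := e1
      _ ≤ 2 * (q * X.card) * (q * d) := by
          apply mul_le_mul (by linarith) _ (by positivity) (by positivity)
          exact mul_le_mul_of_nonneg_left env.hd1 hq0.le
      _ = _ := by ring
  have hde : ∑ b ∈ X, ((nb Γ b).card : ℝ) ≤ 2 * q ^ 2 * d * X.card := by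
    refine le_trans ?_ hE
    have : ∑ b ∈ X, (nb Γ b).card ≤ E Γ := sum_le_sum_of_subset (subset_univ _)
    exact_mod_cast this
  by_contra hcon
  push Not at hcon
  have hlt : ∑ b ∈ X, (2:ℝ) < ∑ b ∈ X, (((us.filter (fun a => b ∈ Z a)).card : ℝ) / (12 * d) +
      ((nb Γ b).card : ℝ) / (2 * q ^ 2 * d)) := by
    apply sum_lt_sum_of_nonempty (card_pos.1 hX0)
    intro b hb
    by_cases hh : ((us.filter (fun a => b ∈ Z a)).card : ℝ) ≤ 24 * d
    · have e := hcon b hb hh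
      have e1 : 2 < ((nb Γ b).card : ℝ) / (2 * q ^ 2 * d) := by
        rw [lt_div_iff₀ (by positivity)]; linarith
      have e2 : 0 ≤ ((us.filter (fun a => b ∈ Z a)).card : ℝ) / (12 * d) := by positivity
      linarith
    · push Not at hh
      have e1 : 2 < ((us.filter (fun a => b ∈ Z a)).card : ℝ) / (12 * d) := by
        rw [lt_div_iff₀ (by positivity)]; linarith
      have e2 : 0 ≤ ((nb Γ b).card : ℝ) / (2 * q ^ 2 * d) := by positivity
      linarith
  rw [sum_add_distrib, ← sum_div, ← sum_div, sum_const, nsmul_eq_mul] at hlt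
  have e1 : (∑ b ∈ X, ((us.filter (fun a => b ∈ Z a)).card : ℝ)) / (12 * d) ≤ X.card := by
    rw [div_le_iff₀ (by positivity)]; linarith
  have e2 : (∑ b ∈ X, ((nb Γ b).card : ℝ)) / (2 * q ^ 2 * d) ≤ X.card := by
    rw [div_le_iff₀ (by positivity)]; linarith
  linarith

lemma open_one {V : Type} [Fintype V] {G : SimpleGraph V} {r q d1 h : ℕ} {d c : ℝ} {A B B2 : Finset V}
    {N' Y Z : V → Finset V} {f : V → Fin r} (env : Env G r q d1 h d c A B B2 N' Y Z f)
    {O : Finset V} {L : V → Finset V} {Γ : SimpleGraph V} (st : Ost q d1 d B2 N' Y O L Γ)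
    (O0 : Finset V) (j : Fin r) (hO0 : O0 ⊆ O) (hc0 : ∀ b ∈ O0, ∀ a ∈ L b, (f a).val < j.val)
    (hc1 : ∀ b ∈ O \ O0, ∀ a ∈ L b, f a = j)
    (h1 : (B2 \ O0).card ≤ 2 * (B2 \ O).card) (h2 : B.card ≤ q * (B2 \ O).card) :
    ∃ O' L' Γ', Ost q d1 d B2 N' Y O' L' Γ' ∧ O0 ⊆ O' ∧ (∀ b ∈ O0, ∀ a ∈ L' b, (f a).val < j.val) ∧
      (∀ b ∈ O' \ O0, ∀ a ∈ L' b, f a = j) ∧ (B2 \ O').card < (B2 \ O).card := by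
  obtain ⟨b, hb, hbu, hbd⟩ := find_b env st O0 h1 h2
  obtain ⟨hbB, hbO⟩ := mem_sdiff.1 hb
  have hbO0 : b ∉ O0 := fun hx => hbO (hO0 hx)
  set us := (O \ O0).biUnion L with hus
  set Mj := (Y b).filter (fun a => f a = j) with hMj
  set M := Mj \ us with hM
  have hMY : M ⊆ Y b := sdiff_subset.trans (filter_subset _ _)
  have hMc : 24 * d ≤ (M.card : ℝ) := by
    have e1 := env.col b hbB j
    have e2 := card_sdiff_add_card_inter Mj us
    have e3 : Mj ∩ us ⊆ us.filter (fun a => b ∈ Z a) := by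
      intro a ha
      obtain ⟨h1, h2⟩ := mem_inter.1 ha
      exact mem_filter.2 ⟨h2, env.Y2 b hbB a (mem_filter.1 h1).1⟩
    have e4 : ((Mj ∩ us).card : ℝ) ≤ (us.filter (fun a => b ∈ Z a)).card := by exact_mod_cast card_le_card e3
    have e5 : (M.card : ℝ) + (Mj ∩ us).card = Mj.card := by exact_mod_cast e2
    linarith
  obtain ⟨P, hPM, hPq, hPs⟩ := pick_dense env M (nb Γ b) (hMY.trans (env.Y1 b hbB))
    ((card_le_card hMY).trans (env.Y3 b hbB)) hMc hbd
  set T := P.biUnion N' with hT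
  have hup : ∀ x, x ≠ b → Function.update L b P x = L x := fun x hx => Function.update_of_ne hx _ _
  have hub : Function.update L b P b = P := Function.update_self _ _ _
  have hne : ∀ x ∈ O, x ≠ b := fun x hx h => hbO (h ▸ hx)
  have hPj : ∀ a ∈ P, f a = j := fun a ha => (mem_filter.1 (mem_sdiff.1 (hPM ha)).1).2
  have hPd : ∀ x ∈ O, Disjoint (L x) P := by
    intro x hx
    rw [Finset.disjoint_left]
    intro a ha haP
    by_cases hx0 : x ∈ O0
    · have := hc0 x hx0 a ha
      rw [hPj a haP] at this
      exact lt_irrefl _ this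
    · exact (mem_sdiff.1 (hPM haP)).2 (mem_biUnion.2 ⟨x, mem_sdiff.2 ⟨hx, hx0⟩, ha⟩)
  have hTc : T.card ≤ q * d1 := by
    rw [← hPq]
    exact card_biUnion_le_card_mul _ _ _ (fun a ha => (env.N2 a (env.Y1 b hbB (hMY (hPM ha)))).le)
  refine ⟨insert b O, Function.update L b P, addStar Γ b T, ?_, hO0.trans (subset_insert _ _), ?_, ?_, ?_⟩
  · refine ⟨insert_subset hbB st.OB, ?_, ?_, ?_, ?_, ?_, ?_⟩
    · intro x hx
      rcases mem_insert.1 hx with rfl | hx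
      · rw [hub]; exact hPM.trans hMY
      · rw [hup x (hne x hx)]; exact st.LY x hx
    · intro x hx
      rcases mem_insert.1 hx with rfl | hx
      · rw [hub]; exact hPq
      · rw [hup x (hne x hx)]; exact st.Lq x hx
    · intro x hx y hy hxy
      rcases mem_insert.1 hx with hx | hx2
      · rcases mem_insert.1 hy with hy | hy2
        · exact absurd (hx.trans hy.symm) hxy
        · rw [hx, hub, hup y (hne y hy2)]; exact (hPd y hy2).symm
      · rcases mem_insert.1 hy with hy | hy2
        · rw [hy, hub, hup x (hne x hx2)]; exact hPd x hx2
        · rw [hup x (hne x hx2), hup y (hne y hy2)]; exact st.dj x hx2 y hy2 hxy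
    · rintro x y (h | ⟨h, ⟨rfl, h2⟩ | ⟨rfl, h2⟩⟩)
      · rcases st.ed x y h with ⟨h1, h2⟩ | ⟨h1, h2⟩
        · left; rw [hup x (hne x h1)]; exact ⟨mem_insert_of_mem h1, h2⟩
        · right; rw [hup y (hne y h1)]; exact ⟨mem_insert_of_mem h1, h2⟩
      · left; rw [hub]; exact ⟨mem_insert_self _ _, mem_biUnion.1 h2⟩
      · right; rw [hub]; exact ⟨mem_insert_self _ _, mem_biUnion.1 h2⟩
    · rw [E_addStar, card_insert_of_notMem hbO]
      have e1 : (T \ nb Γ b).card ≤ ((T \ nb Γ b).erase b).card + 1 := by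
        have := pred_card_le_card_erase (s := T \ nb Γ b) (a := b); omega
      have e2 : ((T \ nb Γ b).card : ℝ) ≤ ((T \ nb Γ b).erase b).card + 1 := by exact_mod_cast e1
      have e3 := st.lo
      push_cast
      linarith
    · rw [E_addStar, card_insert_of_notMem hbO]
      have e1 : ((T \ nb Γ b).erase b).card ≤ q * d1 :=
        (card_le_card ((erase_subset _ _).trans sdiff_subset)).trans hTc
      have e3 := st.hi
      have : 2 * (O.card + 1) * (q * d1) = 2 * O.card * (q * d1) + 2 * (q * d1) := by ring
      omega
  · intro x hx a ha
    rw [hup x (hne x (hO0 hx))] at ha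
    exact hc0 x hx a ha
  · intro x hx a ha
    obtain ⟨hx1, hx2⟩ := mem_sdiff.1 hx
    rcases mem_insert.1 hx1 with rfl | hx1
    · rw [hub] at ha; exact hPj a ha
    · rw [hup x (hne x hx1)] at ha; exact hc1 x (mem_sdiff.2 ⟨hx1, hx2⟩) a ha
  · apply card_lt_card
    rw [ssubset_iff_of_subset (sdiff_subset_sdiff (le_refl _) (subset_insert _ _))]
    exact ⟨b, hb, by simp⟩

lemma inner_loop {V : Type} [Fintype V] {G : SimpleGraph V} {r q d1 h : ℕ} {d c : ℝ} {A B B2 : Finset V}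
    {N' Y Z : V → Finset V} {f : V → Fin r} (env : Env G r q d1 h d c A B B2 N' Y Z f)
    (O0 : Finset V) (j : Fin r) (n : ℕ) : ∀ (O : Finset V) (L : V → Finset V) (Γ : SimpleGraph V),
    Ost q d1 d B2 N' Y O L Γ → O0 ⊆ O → (∀ b ∈ O0, ∀ a ∈ L b, (f a).val < j.val) →
    (∀ b ∈ O \ O0, ∀ a ∈ L b, f a = j) → (B2 \ O).card ≤ n →
    ∃ O' L' Γ', Ost q d1 d B2 N' Y O' L' Γ' ∧ (∀ b ∈ O', ∀ a ∈ L' b, (f a).val < j.val + 1) ∧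
      (2 * (B2 \ O').card ≤ (B2 \ O0).card ∨ q * (B2 \ O').card ≤ B.card) := by
  induction n with
  | zero =>
    intro O L Γ st h0 h1 h2 hn
    refine ⟨O, L, Γ, st, ?_, ?_⟩
    · intro b hb a ha
      by_cases hb0 : b ∈ O0
      · have := h1 b hb0 a ha; omega
      · rw [h2 b (mem_sdiff.2 ⟨hb, hb0⟩) a ha]; omega
    · left; omega
  | succ n ih =>
    intro O L Γ st h0 h1 h2 hn
    by_cases hs : 2 * (B2 \ O).card ≤ (B2 \ O0).card ∨ q * (B2 \ O).card ≤ B.card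
    · refine ⟨O, L, Γ, st, ?_, hs⟩
      intro b hb a ha
      by_cases hb0 : b ∈ O0
      · have := h1 b hb0 a ha; omega
      · rw [h2 b (mem_sdiff.2 ⟨hb, hb0⟩) a ha]; omega
    · push Not at hs
      obtain ⟨O', L', Γ', st', g0, g1, g2, g3⟩ := open_one env st O0 j h0 h1 h2 hs.1.le hs.2.le
      exact ih O' L' Γ' st' g0 g1 g2 (by omega)

lemma outer_loop {V : Type} [Fintype V] {G : SimpleGraph V} {r q d1 h : ℕ} {d c : ℝ} {A B B2 : Finset V}
    {N' Y Z : V → Finset V} {f : V → Fin r} (env : Env G r q d1 h d c A B B2 N' Y Z f)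
    (i : ℕ) (hi : i ≤ r) : ∃ O L Γ, Ost q d1 d B2 N' Y O L Γ ∧ (∀ b ∈ O, ∀ a ∈ L b, (f a).val < i) ∧
      (2 ^ i * (B2 \ O).card ≤ B2.card ∨ q * (B2 \ O).card ≤ B.card) := by
  induction i with
  | zero =>
    have e0 : E (⊥ : SimpleGraph V) = 0 := by simp [E, nb]
    refine ⟨∅, fun _ => ∅, ⊥, ⟨by simp, by simp, by simp, by simp, by simp, by simp, by simp [e0]⟩, by simp, by simp⟩
  | succ i ih =>
    obtain ⟨O, L, Γ, st, hc, hs⟩ := ih (by omega)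
    obtain ⟨O', L', Γ', st', hc', hs'⟩ := inner_loop env O ⟨i, by omega⟩ (B2 \ O).card O L Γ st (le_refl _) hc
      (by simp) (le_refl _)
    rcases hs with hs | hs
    · refine ⟨O', L', Γ', st', hc', ?_⟩
      rcases hs' with h1 | h1
      · left
        calc 2 ^ (i+1) * (B2 \ O').card = 2 ^ i * (2 * (B2 \ O').card) := by ring
          _ ≤ 2 ^ i * (B2 \ O).card := Nat.mul_le_mul_left _ h1
          _ ≤ _ := hs
      · exact Or.inr h1
    · exact ⟨O, L, Γ, st, fun b hb a ha => (hc b hb a ha).trans (by omega), Or.inr hs⟩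

lemma caseI_out {V : Type} [Fintype V] {G : SimpleGraph V} {r q d1 h : ℕ} {d c : ℝ} {A B B2 : Finset V}
    {N' Y Z : V → Finset V} {f : V → Fin r} (env : Env G r q d1 h d c A B B2 N' Y Z f) (hq2 : q = 2 ^ r)
    (hB2 : (1 - 3 / (q:ℝ)) * B.card ≤ B2.card) (hd10 : d * (1 - 2 / (q:ℝ)) - 1 ≤ d1) (hdq : 100 * (q:ℝ) ≤ d) :
    Out G d q := by
  have hr1 : (1:ℝ) ≤ r := by exact_mod_cast env.hr
  have hqr : 1000 * (r:ℝ) ≤ q := by exact_mod_cast env.hq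
  have hq0 : (0:ℝ) < q := by linarith
  have hd0 : 0 < d := by linarith [env.hd]
  obtain ⟨O, L, Γ, st, -, hs⟩ := outer_loop env r le_rfl
  have hX : q * (B2 \ O).card ≤ B.card := by
    rcases hs with hs | hs
    · rw [hq2]; exact hs.trans (card_le_card env.B2B)
    · exact hs
  have hX' : (q:ℝ) * (B2 \ O).card ≤ B.card := by exact_mod_cast hX
  have hOc : (1 - 4 / (q:ℝ)) * B.card ≤ O.card := by
    have e1 := card_sdiff_add_card_inter B2 O
    have e2 : (B2 ∩ O).card ≤ O.card := card_le_card inter_subset_right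
    have e3 : B2.card ≤ (B2 \ O).card + O.card := by omega
    have e4 : (B2.card : ℝ) ≤ (B2 \ O).card + O.card := by exact_mod_cast e3
    have e5 : ((B2 \ O).card : ℝ) ≤ B.card / q := by rw [le_div_iff₀ hq0]; linarith
    have e6 : (1 - 4 / (q:ℝ)) * B.card = (1 - 3 / (q:ℝ)) * B.card - B.card / q := by ring
    linarith
  have hLB : ∀ w ∈ O, L w ⊆ A := fun w hw => (st.LY w hw).trans (env.Y1 w (st.OB hw))
  have hOB : O ⊆ B := st.OB.trans env.B2B
  have hAB : ∀ x ∈ A, x ∉ B := fun x hx => Finset.disjoint_left.1 env.AB hx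
  refine ⟨B, fun w => if w ∈ O then insert w (L w) else {w}, Γ, q + 1, env.Bne, by omega, ?_, ?_, ?_, ?_, ?_⟩
  · intro w hw
    by_cases hO : w ∈ O
    · simp only [hO, if_true]
      refine ⟨mem_insert_self _ _, fun x hx => ?_⟩
      rcases mem_insert.1 hx with h | h
      · exact Or.inl h
      · right
        have := env.Y2 w (st.OB hO) x (st.LY w hO h)
        exact (mem_nb.1 (env.Zn x this)).symm
    · simp [hO]
  · intro w hw w' hw' hne
    rw [Finset.disjoint_left]
    intro x hx hx'
    have key : ∀ u, x ∈ (if u ∈ O then insert u (L u) else {u}) → x = u ∨ (u ∈ O ∧ x ∈ L u) := by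
      intro u hu
      by_cases h : u ∈ O
      · rw [if_pos h] at hu
        rcases mem_insert.1 hu with h1 | h1
        · exact Or.inl h1
        · exact Or.inr ⟨h, h1⟩
      · rw [if_neg h] at hu
        exact Or.inl (mem_singleton.1 hu)
    rcases key w hx with h1 | ⟨h1, h2⟩ <;> rcases key w' hx' with h3 | ⟨h3, h4⟩
    · exact hne (h1.symm.trans h3)
    · exact hAB x (hLB w' h3 h4) (h1 ▸ hw)
    · exact hAB x (hLB w h1 h2) (h3 ▸ hw')
    · exact Finset.disjoint_left.1 (st.dj w h1 w' h3 hne) h2 h4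
  · intro w hw
    by_cases hO : w ∈ O
    · simp only [hO, if_true]
      exact (card_insert_le _ _).trans (by rw [st.Lq w hO])
    · simp [hO]
  · intro w hw w' hw' hadj
    have hself : ∀ u, u ∈ (if u ∈ O then insert u (L u) else {u}) := by
      intro u; by_cases h : u ∈ O <;> simp [h]
    rcases st.ed w w' hadj with ⟨h1, a, ha, h2⟩ | ⟨h1, a, ha, h2⟩
    · refine ⟨a, by simp [h1, ha], w', hself w', ?_⟩
      exact mem_nb.1 (mem_inter.1 (env.N1 a (hLB w h1 ha) h2)).1
    · refine ⟨w, hself w, a, by simp [h1, ha], ?_⟩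
      exact (mem_nb.1 (mem_inter.1 (env.N1 a (hLB w' h1 ha) h2)).1).symm
  · have hnb : ∀ x y, Γ.Adj x y → x ∈ B := by
      intro x y hxy
      rcases st.ed x y hxy with ⟨h1, a, ha, h2⟩ | ⟨h1, a, ha, h2⟩
      · exact hOB h1
      · exact (mem_inter.1 (env.N1 a (hLB y h1 ha) h2)).2
    have hE : (E Γ : ℝ) ≤ ∑ w ∈ B, ((nb Γ w ∩ B).card : ℝ) := by
      have e1 := E_split Γ B
      have e2 : ∑ v ∈ Bᶜ, (nb Γ v).card = 0 := by
        apply sum_eq_zero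
        intro v hv
        rw [card_eq_zero, eq_empty_iff_forall_notMem]
        intro y hy
        exact (mem_compl.1 hv) (hnb v y (mem_nb.1 hy))
      rw [e2] at e1
      have : E Γ ≤ ∑ w ∈ B, (nb Γ w ∩ B).card := by omega
      exact_mod_cast this
    refine le_trans ?_ (st.lo.trans hE)
    have hB0 : (0:ℝ) ≤ B.card := by positivity
    have e1 : ((q:ℝ) - 3.1) * d ≤ q * ((d1:ℝ) - d / q) - 1 := by
      have : (q:ℝ) * (d * (1 - 2 / (q:ℝ)) - 1 - d / q) - 1 ≤ q * ((d1:ℝ) - d / q) - 1 := by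
        have := mul_le_mul_of_nonneg_left hd10 hq0.le
        linarith
      refine le_trans ?_ this
      have e : (q:ℝ) * (d * (1 - 2 / (q:ℝ)) - 1 - d / q) - 1 = q * d - 3 * d - q - 1 := by field_simp; ring
      rw [e]
      linarith
    have hq31 : 0 ≤ (q:ℝ) - 3.1 := by norm_num; linarith
    calc 2 * (1 - 12 / (q:ℝ)) * ((q + 1 : ℕ) : ℝ) * d * B.card
        ≤ 2 * ((1 - 4 / (q:ℝ)) * B.card) * ((q - 3.1) * d) := by
          have e2 : (1 - 12 / (q:ℝ)) * ((q + 1 : ℕ) : ℝ) ≤ (1 - 4 / (q:ℝ)) * (q - 3.1) := by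
            push_cast
            have e3 : (1 - 12 / (q:ℝ)) * (q + 1) = q - 11 - 12 / q := by field_simp; ring
            have e4 : (1 - 4 / (q:ℝ)) * (q - 3.1) = q - 7.1 + 12.4 / q := by field_simp; ring
            rw [e3, e4]
            have : 0 ≤ 12 / (q:ℝ) := by positivity
            have : 0 ≤ 12.4 / (q:ℝ) := by positivity
            norm_num at *
            linarith
          have := mul_le_mul_of_nonneg_right e2 (mul_nonneg hd0.le hB0)
          linarith
      _ ≤ 2 * (O.card : ℝ) * ((q - 3.1) * d) := by
          apply mul_le_mul_of_nonneg_right _ (mul_nonneg hq31 hd0.le)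
          linarith
      _ ≤ _ := mul_le_mul_of_nonneg_left e1 (by positivity)
end DI

namespace DI
open Finset Classical

lemma caseI {V : Type} [Fintype V] (G : SimpleGraph V) (r q : ℕ) (hr : 1 ≤ r)
    (hq : q = 2 ^ r) (hqr : 10 ^ 6 * r ^ 3 ≤ q) (d c : ℝ) (hd : 10 ^ 8 * (r:ℝ) ^ 3 * (q:ℝ) ^ 3 ≤ d)
    (hdeg : ∀ v, d ≤ (nb G v).card)
    (hmax : ∀ S : Finset V, ∑ x ∈ S, ((nb G x ∩ S).card : ℝ) ≤ 2 * d * S.card)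
    (Z : V → Finset V) (hZnb : ∀ u, Z u ⊆ nb G u)
    (hZ2 : ∀ u, (q:ℝ) * (Z u).card ≤ 2 * (nb G u).card)
    (hmin : ∀ u v w, v ∈ Z u → w ∈ nb G u → w ∉ Z u → ld Z v ≤ ld Z w + 1)
    (h t : ℕ) (hh1 : 96 * r * d ≤ h) (hh2 : (h:ℝ) ≤ 100 * r * d) (ht : 2 * h ≤ t)
    (hne : (univ.filter (fun v => t ≤ ld Z v)).Nonempty)
    (hF : (1 - 1 / (q:ℝ)) * (univ.filter (fun v => t ≤ ld Z v)).card ≤ (univ.filter (fun v => t + 1 ≤ ld Z v)).card)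
    (hc : (q:ℝ) ^ 3 ≤ c) (nd : ¬ Dense G d c) : Out G d q := by
  have hr1 : (1:ℝ) ≤ r := by exact_mod_cast hr
  have hr3 : r ≤ r ^ 3 := Nat.le_self_pow (by norm_num) r
  have hq1000 : 1000 * r ≤ q := by omega
  have hqr' : 1000 * (r:ℝ) ≤ q := by exact_mod_cast hq1000
  have hq0 : (0:ℝ) < q := by linarith
  have hr3' : (1:ℝ) ≤ (r:ℝ) ^ 3 := one_le_pow₀ hr1
  have hdq : 100 * (q:ℝ) ≤ d := by
    have e1 : (q:ℝ) ≤ (q:ℝ) ^ 3 := le_self_pow₀ (by linarith) (by norm_num)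
    have e2 : (q:ℝ) ^ 3 ≤ (r:ℝ) ^ 3 * (q:ℝ) ^ 3 := le_mul_of_one_le_left (by positivity) hr3'
    linarith
  have hd0 : 0 < d := by linarith
  have h2q : 2 / (q:ℝ) ≤ 1 / 2 := by rw [div_le_iff₀ hq0]; linarith
  have h2q0 : 0 ≤ 2 / (q:ℝ) := by positivity
  have hh0 : (0:ℝ) < h := lt_of_lt_of_le (by positivity) hh1
  set B := univ.filter (fun v => t ≤ ld Z v) with hB
  set B' := univ.filter (fun v => t + 1 ≤ ld Z v) with hB'
  set U := univ.filter (fun u => (Z u ∩ B').Nonempty) with hU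
  set A := U \ B with hA
  have hB'B : B' ⊆ B := by
    intro v hv
    simp only [hB', hB, mem_filter, mem_univ, true_and] at hv ⊢
    omega
  have hB0 : (0:ℝ) ≤ B.card := by positivity
  have hUB : ∀ u ∈ U, (1 - 2 / (q:ℝ)) * (nb G u).card ≤ ((nb G u ∩ B).card : ℝ) := by
    intro u hu
    obtain ⟨v, hv⟩ := (mem_filter.1 hu).2
    obtain ⟨hv1, hv2⟩ := mem_inter.1 hv
    have hsub : nb G u \ B ⊆ Z u := by
      intro w hw
      obtain ⟨hw1, hw2⟩ := mem_sdiff.1 hw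
      by_contra hcon
      have e1 := hmin u v w hv1 hw1 hcon
      have e2 := (mem_filter.1 hv2).2
      exact hw2 (mem_filter.2 ⟨mem_univ _, by omega⟩)
    have e1 := card_sdiff_add_card_inter (nb G u) B
    have e2 := card_le_card hsub
    have e3 : (nb G u).card ≤ (Z u).card + (nb G u ∩ B).card := by omega
    have e4 : ((nb G u).card : ℝ) ≤ (Z u).card + (nb G u ∩ B).card := by exact_mod_cast e3
    have e5 : ((Z u).card : ℝ) ≤ 2 / q * (nb G u).card := by
      rw [div_mul_eq_mul_div, le_div_iff₀ hq0]; linarith [hZ2 u]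
    linarith
  have hUB2 : ∀ u ∈ U, ((nb G u).card : ℝ) ≤ 2 * ((nb G u ∩ B).card : ℝ) := by
    intro u hu
    have e1 := hUB u hu
    have e2 : (1/2:ℝ) * (nb G u).card ≤ (1 - 2 / (q:ℝ)) * (nb G u).card :=
      mul_le_mul_of_nonneg_right (by linarith) (by positivity)
    linarith
  have hload : ∀ A' ⊆ A, (q:ℝ) * ∑ a ∈ A', ((Z a).card : ℝ) ≤ 4 * d * (A'.card + B.card) := by
    intro A' hA'
    have hdj : Disjoint A' B := by
      rw [Finset.disjoint_left]; intro x hx; exact (mem_sdiff.1 (hA' hx)).2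
    have e1 := hmax (A' ∪ B)
    rw [sum_union hdj, card_union_of_disjoint hdj] at e1
    have e2 : ∑ x ∈ A', ((nb G x ∩ B).card : ℝ) ≤ ∑ x ∈ A', ((nb G x ∩ (A' ∪ B)).card : ℝ) :=
      sum_le_sum (fun x _ => by exact_mod_cast card_le_card (inter_subset_inter (le_refl _) subset_union_right))
    have e3 : ∑ x ∈ B, ((nb G x ∩ A').card : ℝ) ≤ ∑ x ∈ B, ((nb G x ∩ (A' ∪ B)).card : ℝ) :=
      sum_le_sum (fun x _ => by exact_mod_cast card_le_card (inter_subset_inter (le_refl _) subset_union_left))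
    have e4 : ∑ x ∈ A', ((nb G x ∩ B).card : ℝ) = ∑ x ∈ B, ((nb G x ∩ A').card : ℝ) := by
      exact_mod_cast sum_nb_comm G A' B
    have e5 : ∑ x ∈ A', ((nb G x).card : ℝ) ≤ 2 * ∑ x ∈ A', ((nb G x ∩ B).card : ℝ) := by
      rw [mul_sum]; exact sum_le_sum (fun x hx => hUB2 x (mem_sdiff.1 (hA' hx)).1)
    have e6 : (q:ℝ) * ∑ a ∈ A', ((Z a).card : ℝ) ≤ 2 * ∑ x ∈ A', ((nb G x).card : ℝ) := by
      rw [mul_sum, mul_sum]; exact sum_le_sum (fun x _ => hZ2 x)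
    push_cast at e1
    linarith
  have hloadB : (q:ℝ) * ∑ a ∈ U ∩ B, ((Z a).card : ℝ) ≤ 8 * d * B.card := by
    have e1 := hmax B
    have e2 : ∑ x ∈ U ∩ B, ((nb G x ∩ B).card : ℝ) ≤ ∑ x ∈ B, ((nb G x ∩ B).card : ℝ) :=
      sum_le_sum_of_subset_of_nonneg inter_subset_right (fun _ _ _ => by positivity)
    have e5 : ∑ x ∈ U ∩ B, ((nb G x).card : ℝ) ≤ 2 * ∑ x ∈ U ∩ B, ((nb G x ∩ B).card : ℝ) := by
      rw [mul_sum]; exact sum_le_sum (fun x hx => hUB2 x (mem_inter.1 hx).1)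
    have e6 : (q:ℝ) * ∑ a ∈ U ∩ B, ((Z a).card : ℝ) ≤ 2 * ∑ x ∈ U ∩ B, ((nb G x).card : ℝ) := by
      rw [mul_sum, mul_sum]; exact sum_le_sum (fun x _ => hZ2 x)
    linarith
  set B1 := B'.filter (fun v => h ≤ (A.filter (fun a => v ∈ Z a)).card) with hB1
  have hB1c : (1 - 2 / (q:ℝ)) * B.card ≤ B1.card := by
    have e1 : ((B' \ B1).card : ℝ) * h ≤ ∑ a ∈ U ∩ B, ((Z a).card : ℝ) := by
      have k1 : ∑ v ∈ B' \ B1, h ≤ ∑ v ∈ B' \ B1, ((U ∩ B).filter (fun u => v ∈ Z u)).card := by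
        apply sum_le_sum
        intro v hv
        obtain ⟨hv1, hv2⟩ := mem_sdiff.1 hv
        have l1 : (A.filter (fun a => v ∈ Z a)).card < h := by
          by_contra hcon
          exact hv2 (mem_filter.2 ⟨hv1, by omega⟩)
        have l2 := (mem_filter.1 hv1).2
        have l3 : univ.filter (fun u => v ∈ Z u) ⊆ A.filter (fun a => v ∈ Z a) ∪ (U ∩ B).filter (fun u => v ∈ Z u) := by
          intro u hu
          have hu1 := (mem_filter.1 hu).2
          have huU : u ∈ U := mem_filter.2 ⟨mem_univ _, v, mem_inter.2 ⟨hu1, hv1⟩⟩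
          by_cases hub : u ∈ B
          · exact mem_union_right _ (mem_filter.2 ⟨mem_inter.2 ⟨huU, hub⟩, hu1⟩)
          · exact mem_union_left _ (mem_filter.2 ⟨mem_sdiff.2 ⟨huU, hub⟩, hu1⟩)
        have l4 := (card_le_card l3).trans (card_union_le _ _)
        unfold ld at l2
        omega
      rw [sum_ld Z (B' \ B1) (U ∩ B), sum_const, smul_eq_mul] at k1
      have k2 : ∑ u ∈ U ∩ B, (Z u ∩ (B' \ B1)).card ≤ ∑ u ∈ U ∩ B, (Z u).card :=
        sum_le_sum (fun u _ => card_le_card inter_subset_left)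
      exact_mod_cast k1.trans k2
    have e2 : ((B' \ B1).card : ℝ) ≤ B.card / q := by
      rw [le_div_iff₀ hq0]
      have k1 : (q:ℝ) * (((B' \ B1).card : ℝ) * h) ≤ 8 * d * B.card :=
        (mul_le_mul_of_nonneg_left e1 hq0.le).trans hloadB
      have k2 : 8 * d * B.card ≤ h * B.card := by
        apply mul_le_mul_of_nonneg_right _ hB0
        have : d ≤ r * d := le_mul_of_one_le_left hd0.le hr1
        linarith
      have k3 : (h:ℝ) * (((B' \ B1).card : ℝ) * q) ≤ h * B.card := by linarith
      exact le_of_mul_le_mul_left k3 hh0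
    have e3 := card_sdiff_add_card_eq_card (filter_subset (fun v => h ≤ (A.filter (fun a => v ∈ Z a)).card) B')
    have e4 : ((B' \ B1).card : ℝ) + B1.card = B'.card := by exact_mod_cast e3
    have e5 : (1 - 2 / (q:ℝ)) * B.card = (1 - 1 / (q:ℝ)) * B.card - B.card / q := by ring
    linarith
  have hYex : ∀ b, ∃ y : Finset V, (b ∈ B1 → y ⊆ A.filter (fun a => b ∈ Z a) ∧ y.card = h) ∧ (b ∉ B1 → y = ∅) := by
    intro b
    by_cases hb : b ∈ B1
    · obtain ⟨y, hy1, hy2⟩ := exists_subset_card_eq (mem_filter.1 hb).2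
      exact ⟨y, fun _ => ⟨hy1, hy2⟩, fun h => absurd hb h⟩
    · exact ⟨∅, fun h => absurd h hb, fun _ => rfl⟩
  choose Y hY1 hY0 using hYex
  obtain ⟨f, hf⟩ := coloring Y r hr
  set Bad := univ.filter (fun i => ∃ j, 2*(r:ℝ)*(((Y i).filter (fun b => f b = j)).card:ℝ) < ((Y i).card:ℝ)) with hBad
  have hBad1 : ∀ b ∈ Bad, b ∈ B1 := by
    intro b hb
    by_contra hcon
    obtain ⟨j, hj⟩ := (mem_filter.1 hb).2
    rw [hY0 b hcon] at hj
    simp at hj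
  have hBadc : (Bad.card : ℝ) ≤ B.card / q := by
    have e1 : ∑ i ∈ Bad, ((Y i).card:ℝ)^2 = Bad.card * (h:ℝ)^2 := by
      rw [← nsmul_eq_mul, ← sum_const]
      exact sum_congr rfl (fun b hb => by rw [(hY1 b (hBad1 b hb)).2])
    have e2 : ∑ i, ((Y i).card:ℝ) ≤ B.card * (h:ℝ) := by
      calc ∑ i, ((Y i).card:ℝ) = ∑ i ∈ B1, ((Y i).card:ℝ) := by
            symm
            apply sum_subset (subset_univ _)
            intro x _ hx
            rw [hY0 x hx]; simp
        _ = B1.card * (h:ℝ) := by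
            rw [← nsmul_eq_mul, ← sum_const]
            exact sum_congr rfl (fun b hb => by rw [(hY1 b hb).2])
        _ ≤ _ := by
            apply mul_le_mul_of_nonneg_right _ hh0.le
            exact_mod_cast card_le_card ((filter_subset _ _).trans hB'B)
    rw [e1] at hf
    have e3 : (h:ℝ) * (Bad.card * h) ≤ h * (4 * (r:ℝ)^2 * B.card) := by
      have := mul_le_mul_of_nonneg_left e2 (by positivity : 0 ≤ 4 * (r:ℝ)^2)
      linarith
    have e4 := le_of_mul_le_mul_left e3 hh0
    rw [le_div_iff₀ hq0]
    have e5 : 4 * (r:ℝ)^2 * q ≤ h := by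
      have k1 : (r:ℝ) ^ 2 * q ≤ r ^ 3 * q ^ 3 :=
        mul_le_mul (pow_le_pow_right₀ hr1 (by norm_num)) (le_self_pow₀ (by linarith) (by norm_num)) hq0.le (by positivity)
      have k2 : d ≤ r * d := le_mul_of_one_le_left hd0.le hr1
      have k3 : 0 ≤ (r:ℝ)^2 * q := by positivity
      linarith
    have e6 := mul_le_mul_of_nonneg_left e5 (by positivity : (0:ℝ) ≤ Bad.card)
    have e7 : (4 * (r:ℝ)^2) * (Bad.card * q) ≤ (4 * (r:ℝ)^2) * B.card := by linarith
    exact le_of_mul_le_mul_left e7 (by positivity)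
  set d1 := ⌊d * (1 - 2 / (q:ℝ))⌋₊ with hd1
  have hd1le : (d1:ℝ) ≤ d * (1 - 2 / (q:ℝ)) := Nat.floor_le (mul_nonneg hd0.le (by linarith))
  have hd1ge : d * (1 - 2 / (q:ℝ)) - 1 ≤ d1 := (Nat.sub_one_lt_floor _).le
  have hNex : ∀ a, ∃ n : Finset V, a ∈ A → n ⊆ nb G a ∩ B ∧ n.card = d1 := by
    intro a
    by_cases ha : a ∈ A
    · have e1 := hUB a (mem_sdiff.1 ha).1
      have e2 : d * (1 - 2 / (q:ℝ)) ≤ (1 - 2 / (q:ℝ)) * (nb G a).card := by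
        rw [mul_comm]; exact mul_le_mul_of_nonneg_left (hdeg a) (by linarith)
      have e3 : d1 ≤ (nb G a ∩ B).card := by
        have : (d1:ℝ) ≤ (nb G a ∩ B).card := by linarith
        exact_mod_cast this
      obtain ⟨n, hn1, hn2⟩ := exists_subset_card_eq e3
      exact ⟨n, fun _ => ⟨hn1, hn2⟩⟩
    · exact ⟨∅, fun h => absurd h ha⟩
  choose N' hN' using hNex
  have hB2s : B1 \ Bad ⊆ B1 := sdiff_subset
  have env : Env G r q d1 h d c A B (B1 \ Bad) N' Y Z f := {
    hr := hr
    hq := hq1000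
    hd := by linarith
    hc := hc
    hd1 := hd1le.trans (by
      have : 0 ≤ d * (2 / (q:ℝ)) := by positivity
      linarith)
    hh := hh2
    nd := nd
    B2B := hB2s.trans ((filter_subset _ _).trans hB'B)
    AB := by rw [Finset.disjoint_left]; intro x hx; exact (mem_sdiff.1 hx).2
    Bne := hne
    N1 := fun a ha => (hN' a ha).1
    N2 := fun a ha => (hN' a ha).2
    Y1 := fun b hb => (hY1 b (hB2s hb)).1.trans (filter_subset _ _)
    Y2 := fun b hb a ha => (mem_filter.1 ((hY1 b (hB2s hb)).1 ha)).2
    Y3 := fun b hb => (hY1 b (hB2s hb)).2.le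
    col := by
      intro b hb j
      have e1 : ¬ (2*(r:ℝ)*(((Y b).filter (fun b => f b = j)).card:ℝ) < ((Y b).card:ℝ)) := by
        intro hcon
        exact (mem_sdiff.1 hb).2 (mem_filter.2 ⟨mem_univ _, j, hcon⟩)
      push Not at e1
      rw [(hY1 b (hB2s hb)).2] at e1
      have e2 : 2 * (r:ℝ) * (48 * d) ≤ 2*(r:ℝ)*(((Y b).filter (fun b => f b = j)).card:ℝ) := by linarith
      exact le_of_mul_le_mul_left e2 (by positivity)
    Zn := hZnb
    load := hload }
  refine caseI_out env hq ?_ hd1ge hdq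
  have e1 := le_card_sdiff Bad B1
  have e2 : B1.card ≤ (B1 \ Bad).card + Bad.card := by omega
  have e3 : (B1.card : ℝ) ≤ (B1 \ Bad).card + Bad.card := by exact_mod_cast e2
  have e5 : (1 - 3 / (q:ℝ)) * B.card = (1 - 2 / (q:ℝ)) * B.card - B.card / q := by ring
  linarith
end DI

namespace DI
open Finset Classical

lemma tail_sum {V : Type} [Fintype V] (ρ : V → ℕ) (q t0 : ℕ)
    (hh : ∀ t, t0 ≤ t → ((univ.filter (fun v => t ≤ ρ v)).card : ℝ) ≤
      q * (((univ.filter (fun v => t ≤ ρ v)).card : ℝ) - (univ.filter (fun v => t + 1 ≤ ρ v)).card))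
    (a : ℕ) (ha : t0 ≤ a) (n : ℕ) :
    ∑ k ∈ range n, ((univ.filter (fun v => a + k ≤ ρ v)).card : ℝ) ≤ q * (univ.filter (fun v => a ≤ ρ v)).card := by
  have key : ∑ k ∈ range n, ((univ.filter (fun v => a + k ≤ ρ v)).card : ℝ) ≤
      q * (((univ.filter (fun v => a ≤ ρ v)).card : ℝ) - (univ.filter (fun v => a + n ≤ ρ v)).card) := by
    induction n with
    | zero => simp
    | succ n ih =>
      rw [sum_range_succ]
      have := hh (a + n) (by omega)
      rw [← add_assoc]
      linarith
  refine key.trans ?_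
  have : (0:ℝ) ≤ (q:ℝ) * (univ.filter (fun v => a + n ≤ ρ v)).card := by positivity
  linarith

lemma sum_tail {V : Type} [Fintype V] (ρ : V → ℕ) (a n : ℕ) (hn : ∀ v, ρ v ≤ n) :
    ∑ v ∈ univ.filter (fun v => a ≤ ρ v), ρ v ≤ a * (univ.filter (fun v => a ≤ ρ v)).card +
      ∑ k ∈ range n, (univ.filter (fun v => a + k ≤ ρ v)).card := by
  have h1 : ∀ v ∈ univ.filter (fun v => a ≤ ρ v), ρ v ≤ a + ((range n).filter (fun k => a + k ≤ ρ v)).card := by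
    intro v hv
    have hv' := (mem_filter.1 hv).2
    have : range (ρ v - a) ⊆ (range n).filter (fun k => a + k ≤ ρ v) := by
      intro k hk
      have := mem_range.1 hk
      have := hn v
      exact mem_filter.2 ⟨mem_range.2 (by omega), by omega⟩
    have := card_le_card this
    rw [card_range] at this
    omega
  refine (sum_le_sum h1).trans ?_
  rw [sum_add_distrib, sum_const, smul_eq_mul, mul_comm]
  apply Nat.add_le_add_left
  refine (sum_le_sum_of_subset (subset_univ _)).trans ?_
  simp only [card_filter]
  rw [sum_comm]

theorem step {V : Type} [Fintype V] (G : SimpleGraph V) (hN : 0 < Fintype.card V) (r q : ℕ) (hr : 1 ≤ r)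
    (hq : q = 2 ^ r) (hqr : 10 ^ 6 * r ^ 3 ≤ q) (d : ℝ) (hd : 10 ^ 8 * (r:ℝ) ^ 3 * (q:ℝ) ^ 3 ≤ d)
    (hdeg : ∀ v, d ≤ (nb G v).card)
    (hmax : ∀ S : Finset V, ∑ x ∈ S, ((nb G x ∩ S).card : ℝ) ≤ 2 * d * S.card)
    (hsum : (E G:ℝ) = 2 * d * Fintype.card V) :
    Dense G d (10 ^ 12 * ((r:ℝ) * q) ^ 5) ∨ Out G d q := by
  have hr1 : (1:ℝ) ≤ r := by exact_mod_cast hr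
  have hr3 : r ≤ r ^ 3 := Nat.le_self_pow (by norm_num) r
  have hq1000 : 1000 * r ≤ q := by omega
  have hqr' : 1000 * (r:ℝ) ≤ q := by exact_mod_cast hq1000
  have hq0 : (0:ℝ) < q := by linarith
  have hq1 : (1:ℝ) ≤ q := by linarith
  have hr3' : (1:ℝ) ≤ (r:ℝ) ^ 3 := one_le_pow₀ hr1
  have hdq : 100 * (q:ℝ) ≤ d := by
    have e1 : (q:ℝ) ≤ (q:ℝ) ^ 3 := le_self_pow₀ (by linarith) (by norm_num)
    have e2 : (q:ℝ) ^ 3 ≤ (r:ℝ) ^ 3 * (q:ℝ) ^ 3 := le_mul_of_one_le_left (by positivity) hr3'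
    linarith
  have hd0 : 0 < d := by linarith
  have hrd : d ≤ r * d := le_mul_of_one_le_left hd0.le hr1
  have hc : (q:ℝ) ^ 3 ≤ 10 ^ 12 * ((r:ℝ) * q) ^ 5 := by
    have e1 : (q:ℝ) ^ 3 ≤ (q:ℝ) ^ 5 := pow_le_pow_right₀ hq1 (by norm_num)
    have e2 : (q:ℝ) ^ 5 ≤ ((r:ℝ) * q) ^ 5 := pow_le_pow_left₀ hq0.le (le_mul_of_one_le_left hq0.le hr1) 5
    have e3 : 0 ≤ ((r:ℝ) * q) ^ 5 := by positivity
    linarith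
  by_cases nd : Dense G d (10 ^ 12 * ((r:ℝ) * q) ^ 5)
  · exact Or.inl nd
  have hdegq : ∀ u, q ≤ (nb G u).card := by
    intro u
    have : (q:ℝ) ≤ (nb G u).card := by linarith [hdeg u]
    exact_mod_cast this
  have hqN : 2 ≤ q := by omega
  have hk : ∀ u, (nb G u).card ≤ q * (((nb G u).card + q - 1) / q) ∧ q * (((nb G u).card + q - 1) / q) ≤ 2 * (nb G u).card := by
    intro u
    have e1 := hdegq u
    have e2 := Nat.div_add_mod ((nb G u).card + q - 1) q
    have e3 := Nat.mod_lt ((nb G u).card + q - 1) (by omega : q > 0)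
    constructor <;> omega
  obtain ⟨Z, hZ1, hZ2, hZ3⟩ := minload G (fun u => ((nb G u).card + q - 1) / q) (by
    intro u
    have e1 := (hk u).2
    have e2 : 2 * (nb G u).card ≤ q * (nb G u).card := Nat.mul_le_mul_right _ hqN
    exact Nat.le_of_mul_le_mul_left (e1.trans e2) (by omega))
  have hZa : ∀ u, ((nb G u).card:ℝ) ≤ q*(Z u).card := by
    intro u; rw [hZ2 u]; exact_mod_cast (hk u).1
  have hZb : ∀ u, (q:ℝ)*(Z u).card ≤ 2*(nb G u).card := by
    intro u; rw [hZ2 u]; exact_mod_cast (hk u).2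
  set h := ⌈96 * (r:ℝ) * d⌉₊ with hh
  have hh1 : 96 * r * d ≤ h := Nat.le_ceil _
  have hh2 : (h:ℝ) ≤ 100 * r * d := by
    have := Nat.ceil_lt_add_one (by positivity : 0 ≤ 96 * (r:ℝ) * d)
    linarith
  by_cases hI : ∃ t, 2 * h ≤ t ∧ (univ.filter (fun v => t ≤ ld Z v)).Nonempty ∧
      (1 - 1 / (q:ℝ)) * (univ.filter (fun v => t ≤ ld Z v)).card ≤ (univ.filter (fun v => t + 1 ≤ ld Z v)).card
  · obtain ⟨t, ht, hne, hF⟩ := hI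
    exact Or.inr (caseI G r q hr hq hqr d _ hd hdeg hmax Z hZ1 hZb hZ3 h t hh1 hh2 ht hne hF hc nd)
  · push Not at hI
    have hdec : ∀ t, 2 * h ≤ t → ((univ.filter (fun v => t ≤ ld Z v)).card : ℝ) ≤
      q * (((univ.filter (fun v => t ≤ ld Z v)).card : ℝ) - (univ.filter (fun v => t + 1 ≤ ld Z v)).card) := by
      intro t ht
      by_cases hne : (univ.filter (fun v => t ≤ ld Z v)).Nonempty
      · have e1 := hI t ht hne
        have e2 := mul_le_mul_of_nonneg_left e1.le hq0.le
        have e3 : (q:ℝ) * ((1 - 1 / (q:ℝ)) * (univ.filter (fun v => t ≤ ld Z v)).card) =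
          q * (univ.filter (fun v => t ≤ ld Z v)).card - (univ.filter (fun v => t ≤ ld Z v)).card := by field_simp
        linarith
      · have e0 : (univ.filter (fun v => t + 1 ≤ ld Z v)) ⊆ (univ.filter (fun v => t ≤ ld Z v)) := by
          intro v hv
          simp only [mem_filter, mem_univ, true_and] at hv ⊢
          omega
        rw [not_nonempty_iff_eq_empty] at hne
        rw [hne, subset_empty] at e0
        rw [hne, e0]; simp
    have hle : ∀ v, ld Z v ≤ Fintype.card V := fun v => card_le_univ _
    set t0 := 2 * h with ht0
    have ht0r : (t0:ℝ) = 2 * h := by rw [ht0]; push_cast; ring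
    have ht0d : 12 * d ≤ (t0:ℝ) := by linarith
    have ht0q : (q:ℝ) ≤ t0 := by linarith
    have ht00 : (0:ℝ) < t0 := by linarith
    have s1 := tail_sum (ld Z) q t0 hdec t0 le_rfl t0
    have s2 : (t0:ℝ) * (univ.filter (fun v => 2 * t0 ≤ ld Z v)).card ≤
        ∑ k ∈ range t0, ((univ.filter (fun v => t0 + k ≤ ld Z v)).card : ℝ) := by
      have : ∑ k ∈ range t0, ((univ.filter (fun v => 2 * t0 ≤ ld Z v)).card : ℝ) ≤
        ∑ k ∈ range t0, ((univ.filter (fun v => t0 + k ≤ ld Z v)).card : ℝ) := by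
        apply sum_le_sum
        intro k hk
        have hk' := mem_range.1 hk
        have : (univ.filter (fun v => 2 * t0 ≤ ld Z v)) ⊆ (univ.filter (fun v => t0 + k ≤ ld Z v)) := by
          intro v hv
          simp only [mem_filter, mem_univ, true_and] at hv ⊢
          omega
        exact_mod_cast card_le_card this
      rwa [sum_const, card_range, nsmul_eq_mul] at this
    have s3 : (t0:ℝ) * (univ.filter (fun v => t0 ≤ ld Z v)).card * q ≤ 4 * d * Fintype.card V := by
      have e1 : ∑ v ∈ univ.filter (fun v => t0 ≤ ld Z v), t0 ≤ ∑ v, ld Z v :=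
        (sum_le_sum (fun v hv => (mem_filter.1 hv).2)).trans (sum_le_sum_of_subset (subset_univ _))
      have e2 : ∑ v, ld Z v = ∑ u, (Z u).card := by
        have := sum_ld Z univ univ
        simpa [ld] using this
      rw [e2, sum_const, smul_eq_mul] at e1
      have e3 : ((univ.filter (fun v => t0 ≤ ld Z v)).card : ℝ) * t0 ≤ ∑ u, ((Z u).card : ℝ) := by exact_mod_cast e1
      have e4 : (q:ℝ) * ∑ u, ((Z u).card : ℝ) ≤ 2 * E G := by
        unfold E
        push_cast
        rw [mul_sum, mul_sum]
        exact sum_le_sum (fun u _ => hZb u)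
      have e5 := mul_le_mul_of_nonneg_left e3 hq0.le
      linarith
    have s4 := sum_tail (ld Z) (2 * t0) (Fintype.card V) hle
    have s5 := tail_sum (ld Z) q t0 hdec (2 * t0) (by omega) (Fintype.card V)
    refine caseII G hN r q hr hq hqr d hd hdeg hsum Z hZ1 hZa hZb (2 * t0) (by
      push_cast; rw [ht0r]; linarith) (by
      have s4' : ((∑ v ∈ univ.filter (fun v => 2 * t0 ≤ ld Z v), ld Z v : ℕ) : ℝ) ≤
          2 * t0 * (univ.filter (fun v => 2 * t0 ≤ ld Z v)).card +
          ∑ k ∈ range (Fintype.card V), ((univ.filter (fun v => 2 * t0 + k ≤ ld Z v)).card : ℝ) := by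
        exact_mod_cast s4
      have e1 : (q:ℝ) * (univ.filter (fun v => 2 * t0 ≤ ld Z v)).card ≤
        t0 * (univ.filter (fun v => 2 * t0 ≤ ld Z v)).card := mul_le_mul_of_nonneg_right ht0q (by positivity)
      have e2 : ((∑ v ∈ univ.filter (fun v => 2 * t0 ≤ ld Z v), ld Z v : ℕ) : ℝ) ≤
          3 * (q * (univ.filter (fun v => t0 ≤ ld Z v)).card) := by linarith
      have e3 : (t0:ℝ) * ((∑ v ∈ univ.filter (fun v => 2 * t0 ≤ ld Z v), ld Z v : ℕ) : ℝ) ≤ t0 * Fintype.card V := by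
        have k1 := mul_le_mul_of_nonneg_left e2 ht00.le
        have k2 : 12 * d * Fintype.card V ≤ t0 * Fintype.card V := mul_le_mul_of_nonneg_right ht0d (by positivity)
        linarith
      have e4 := le_of_mul_le_mul_left e3 ht00
      exact_mod_cast e4)
end DI

namespace DI
open Finset Classical

lemma E_card {V : Type} [Fintype V] (G : SimpleGraph V) : E G = 2 * Nat.card G.edgeSet := by
  rw [Nat.card_eq_fintype_card, ← SimpleGraph.edgeFinset_card, ← SimpleGraph.sum_degrees_eq_twice_card_edges]
  unfold E
  apply sum_congr rfl
  intro v _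
  rw [← SimpleGraph.card_neighborFinset_eq_degree]
  congr 1
  ext w
  simp [nb]

lemma card_nb_induce {U W : Type} [Fintype U] [Fintype W] (J : SimpleGraph W) (ι : U ↪ W) (T : Finset U) (x : U) :
    (nb (J.comap ι) x ∩ T).card = (nb J (ι x) ∩ T.map ι).card := by
  rw [← card_map ι]
  congr 1
  ext y
  simp only [mem_map, mem_inter, mem_nb, SimpleGraph.comap_adj]
  constructor
  · rintro ⟨z, ⟨h1, h2⟩, rfl⟩
    exact ⟨h1, z, h2, rfl⟩
  · rintro ⟨h1, z, h2, rfl⟩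
    exact ⟨z, ⟨h1, h2⟩, rfl⟩

lemma E_induce {U W : Type} [Fintype U] [Fintype W] (J : SimpleGraph W) (ι : U ↪ W) (S : Finset W)
    (hS : univ.map ι = S) : E (J.comap ι) = ∑ x ∈ S, (nb J x ∩ S).card := by
  unfold E
  rw [← hS, sum_map]
  apply sum_congr rfl
  intro x _
  have := card_nb_induce J ι univ x
  rw [inter_univ] at this
  rw [this]

lemma max_sub {W : Type} [Fintype W] [Nonempty W] (J : SimpleGraph W) :
    ∃ (S : Finset W) (d : ℝ), S.Nonempty ∧ (E J : ℝ) ≤ 2 * d * Fintype.card W ∧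
      (∀ T : Finset W, ∑ x ∈ T, ((nb J x ∩ T).card : ℝ) ≤ 2 * d * T.card) ∧
      ∑ x ∈ S, ((nb J x ∩ S).card : ℝ) = 2 * d * S.card ∧ ∀ v ∈ S, d ≤ ((nb J v ∩ S).card : ℝ) := by
  obtain ⟨S, hS, hmax⟩ := exists_max_image ((univ : Finset (Finset W)).filter (fun T => T.Nonempty))
    (fun T => (∑ x ∈ T, ((nb J x ∩ T).card : ℝ)) / (2 * T.card))
    ⟨univ, mem_filter.2 ⟨mem_univ _, univ_nonempty⟩⟩
  have hSne := (mem_filter.1 hS).2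
  have hS0 : (0:ℝ) < S.card := by exact_mod_cast card_pos.2 hSne
  obtain ⟨d, hd⟩ : ∃ d, d = (∑ x ∈ S, ((nb J x ∩ S).card : ℝ)) / (2 * S.card) := ⟨_, rfl⟩
  have h2 : ∀ T : Finset W, ∑ x ∈ T, ((nb J x ∩ T).card : ℝ) ≤ 2 * d * T.card := by
    intro T
    rcases T.eq_empty_or_nonempty with rfl | hT
    · simp
    · have := hmax T (mem_filter.2 ⟨mem_univ _, hT⟩)
      have hT0 : (0:ℝ) < T.card := by exact_mod_cast card_pos.2 hT
      rw [← hd, div_le_iff₀ (by positivity)] at this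
      linarith
  have h3 : ∑ x ∈ S, ((nb J x ∩ S).card : ℝ) = 2 * d * S.card := by
    rw [eq_div_iff (by positivity)] at hd
    linarith
  refine ⟨S, d, hSne, ?_, h2, h3, ?_⟩
  · have := h2 univ
    simp only [inter_univ, card_univ] at this
    unfold E
    exact_mod_cast this
  · intro v hv
    have e1 := h2 (S.erase v)
    have e2 : ∑ x ∈ S, ((nb J x ∩ S).card : ℝ) ≤ ∑ x ∈ S.erase v, ((nb J x ∩ S.erase v).card : ℝ) + 2 * (nb J v ∩ S).card := by
      have k1 : ∀ x ∈ S.erase v, ((nb J x ∩ S).card : ℝ) ≤ (nb J x ∩ S.erase v).card + (if x ∈ nb J v ∩ S then 1 else 0) := by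
        intro x hx
        by_cases hxv : v ∈ nb J x
        · have : x ∈ nb J v ∩ S := mem_inter.2 ⟨mem_nb.2 (mem_nb.1 hxv).symm, (mem_erase.1 hx).2⟩
          rw [if_pos this]
          have e : nb J x ∩ S ⊆ insert v (nb J x ∩ S.erase v) := by
            intro y hy
            by_cases hyv : y = v
            · simp [hyv]
            · obtain ⟨a, b⟩ := mem_inter.1 hy
              exact mem_insert_of_mem (mem_inter.2 ⟨a, mem_erase.2 ⟨hyv, b⟩⟩)
          have := (card_le_card e).trans (card_insert_le _ _)
          exact_mod_cast this
        · have e : nb J x ∩ S ⊆ nb J x ∩ S.erase v := by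
            intro y hy
            obtain ⟨a, b⟩ := mem_inter.1 hy
            exact mem_inter.2 ⟨a, mem_erase.2 ⟨fun h => hxv (h ▸ a), b⟩⟩
          have e2 : ((nb J x ∩ S).card : ℝ) ≤ (nb J x ∩ S.erase v).card := by exact_mod_cast card_le_card e
          have : (0:ℝ) ≤ (if x ∈ nb J v ∩ S then 1 else 0) := by split_ifs <;> norm_num
          linarith
      have k2 := sum_le_sum k1
      rw [sum_add_distrib] at k2
      have k3 : ∑ x ∈ S.erase v, (if x ∈ nb J v ∩ S then (1:ℝ) else 0) ≤ (nb J v ∩ S).card := by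
        rw [← sum_filter, sum_const, nsmul_eq_mul, mul_one]
        exact_mod_cast card_le_card (fun x hx => (mem_filter.1 hx).2)
      rw [← add_sum_erase S (fun x => ((nb J x ∩ S).card : ℝ)) hv]
      linarith
    have e3 : ((S.erase v).card : ℝ) = S.card - 1 := by
      have := card_erase_add_one hv
      have : ((S.erase v).card : ℝ) + 1 = S.card := by exact_mod_cast this
      linarith
    rw [e3] at e1
    linarith

def Mdl {V W : Type} (G : SimpleGraph V) (J : SimpleGraph W) (X : W → Finset V) : Prop :=
  G.IsMinorModel J (fun i => (X i : Set V))

lemma mdl_induce {V W : Type} {G : SimpleGraph V} {J : SimpleGraph W} {X : W → Finset V} (h : Mdl G J X)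
    {U : Type} (ι : U ↪ W) : Mdl G (J.comap ι) (fun i => X (ι i)) :=
  ⟨fun _ _ hij => h.1 (fun he => hij (ι.injective he)), fun i => h.2.1 (ι i), fun i j hij => h.2.2 (ι i) (ι j) hij⟩

lemma mdl_disj {V W : Type} {G : SimpleGraph V} {J : SimpleGraph W} {X : W → Finset V} (h : Mdl G J X)
    {i j : W} {x : V} (hi : x ∈ X i) (hj : x ∈ X j) : i = j := by
  by_contra hne
  exact Set.disjoint_left.1 (h.1 hne) (by simpa using hi) (by simpa using hj)

lemma mdl_comp {V W : Type} {G : SimpleGraph V} {J : SimpleGraph W} {X : W → Finset V} (h : Mdl G J X)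
    (S : Finset W) (X0 : W → Finset W) (Γ : SimpleGraph W)
    (h1 : ∀ w ∈ S, w ∈ X0 w ∧ ∀ x ∈ X0 w, x = w ∨ J.Adj w x)
    (h2 : ∀ w ∈ S, ∀ w' ∈ S, w ≠ w' → Disjoint (X0 w) (X0 w'))
    (h3 : ∀ w ∈ S, ∀ w' ∈ S, Γ.Adj w w' → ∃ x ∈ X0 w, ∃ y ∈ X0 w', J.Adj x y) :
    Mdl G (Γ.comap (Function.Embedding.subtype (fun x => x ∈ S))) (fun i => (X0 i.1).biUnion X) := by
  refine ⟨?_, ?_, ?_⟩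
  · intro i j hij
    rw [Set.disjoint_left]
    intro x hx hx'
    simp only [mem_coe, mem_biUnion] at hx hx'
    obtain ⟨a, ha, hxa⟩ := hx
    obtain ⟨b, hb, hxb⟩ := hx'
    have := mdl_disj h hxa hxb
    subst this
    exact Finset.disjoint_left.1 (h2 i.1 i.2 j.1 j.2 (fun he => hij (Subtype.ext he))) ha hb
  · intro i
    have hi := h1 i.1 i.2
    obtain ⟨⟨u, hu⟩⟩ := (h.2.1 i.1).nonempty
    have hu' : u ∈ X i.1 := by simpa using hu
    apply SimpleGraph.induce_connected_of_patches u
    · simp only [mem_coe, mem_biUnion]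
      exact ⟨i.1, hi.1, hu'⟩
    · intro v hv
      simp only [mem_coe, mem_biUnion] at hv
      obtain ⟨x, hx, hvx⟩ := hv
      rcases hi.2 x hx with rfl | hadj
      · refine ⟨(X i.1 : Set V), ?_, by simpa using hu', by simpa using hvx, (h.2.1 i.1).preconnected _ _⟩
        intro y hy
        simp only [mem_coe, mem_biUnion] at hy ⊢
        exact ⟨_, hi.1, hy⟩
      · obtain ⟨a, ha, b, hb, hab⟩ := h.2.2 _ _ hadj
        refine ⟨(X i.1 : Set V) ∪ (X x : Set V), ?_, Or.inl (by simpa using hu'), Or.inr (by simpa using hvx), ?_⟩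
        · rintro y (hy | hy)
          · simp only [mem_coe, mem_biUnion] at hy ⊢
            exact ⟨_, hi.1, hy⟩
          · simp only [mem_coe, mem_biUnion] at hy ⊢
            exact ⟨_, hx, hy⟩
        · exact (SimpleGraph.connected_induce_union (h.2.1 i.1).preconnected (h.2.1 x).preconnected ha hb hab).preconnected _ _
  · intro i j hij
    obtain ⟨x, hx, y, hy, hxy⟩ := h3 i.1 i.2 j.1 j.2 hij
    obtain ⟨u, hu, v, hv, huv⟩ := h.2.2 _ _ hxy
    refine ⟨u, ?_, v, ?_, huv⟩
    · simp only [mem_coe, mem_biUnion] at hu ⊢; exact ⟨x, hx, hu⟩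
    · simp only [mem_coe, mem_biUnion] at hv ⊢; exact ⟨y, hy, hv⟩

lemma mdl_count {V W : Type} [Fintype V] [Fintype W] {G : SimpleGraph V} {J : SimpleGraph W} {X : W → Finset V}
    (h : Mdl G J X) (Q : Finset W) :
    ∑ x ∈ Q, (nb J x ∩ Q).card ≤ ∑ u ∈ Q.biUnion X, (nb G u ∩ Q.biUnion X).card := by
  rw [sum_biUnion]
  · apply sum_le_sum
    intro x hx
    have h1 : nb J x ∩ Q ⊆ (X x).biUnion (fun u => Q.filter (fun y => ∃ v ∈ X y, G.Adj u v)) := by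
      intro y hy
      obtain ⟨hy1, hy2⟩ := mem_inter.1 hy
      obtain ⟨u, hu, v, hv, huv⟩ := h.2.2 _ _ (mem_nb.1 hy1)
      exact mem_biUnion.2 ⟨u, by simpa using hu, mem_filter.2 ⟨hy2, v, by simpa using hv, huv⟩⟩
    refine (card_le_card h1).trans (card_biUnion_le.trans ?_)
    apply sum_le_sum
    intro u hu
    have hex : ∀ y ∈ Q.filter (fun y => ∃ v ∈ X y, G.Adj u v), ∃ v, v ∈ X y ∧ G.Adj u v :=
      fun y hy => (mem_filter.1 hy).2
    have : Nonempty V := ⟨u⟩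
    choose! φ hφ using hex
    apply card_le_card_of_injOn φ
    · intro y hy
      obtain ⟨a, b⟩ := hφ y hy
      exact mem_coe.2 (mem_inter.2 ⟨mem_nb.2 b, mem_biUnion.2 ⟨y, (mem_filter.1 hy).1, a⟩⟩)
    · intro y hy z hz he
      have a := (hφ y hy).1
      have b := (hφ z hz).1
      rw [← he] at b
      exact mdl_disj h a b
  · intro x _ y _ hxy
    exact Finset.disjoint_left.2 (fun u hu hu' => hxy (mdl_disj h hu hu'))

def St {V : Type} [Fintype V] (G : SimpleGraph V) (P : ℕ) (δ : ℝ) : Prop :=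
  ∃ (W : Type) (_ : Fintype W) (J : SimpleGraph W) (X : W → Finset V),
    Mdl G J X ∧ (∀ i, (X i).card ≤ P) ∧ Nonempty W ∧ 2 * δ * Fintype.card W ≤ E J

lemma St_minor {V : Type} [Fintype V] {G : SimpleGraph V} {P : ℕ} {δ : ℝ} (h : St G P δ) :
    ∃ (W : Type) (_ : Finite W) (J : SimpleGraph W), G.HasMinor J ∧ δ ≤ J.density := by
  obtain ⟨W, _, J, X, hM, -, hne, hE⟩ := h
  refine ⟨W, inferInstance, J, ⟨_, hM⟩, ?_⟩
  unfold SimpleGraph.density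
  have h0 : (0:ℝ) < Fintype.card W := by exact_mod_cast Fintype.card_pos
  rw [Nat.card_eq_fintype_card (α := W), le_div_iff₀ h0]
  rw [E_card] at hE
  push_cast at hE
  linarith

lemma St_self {V : Type} [Fintype V] [Nonempty V] (G : SimpleGraph V) : St G 1 G.density := by
  refine ⟨V, inferInstance, G, fun v => {v}, ⟨?_, ?_, ?_⟩, by simp, inferInstance, ?_⟩
  · intro i j hij
    simpa using hij
  · intro i
    refine (SimpleGraph.connected_iff _).2 ⟨?_, ⟨i, by simp⟩⟩
    rintro ⟨a, ha⟩ ⟨b, hb⟩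
    have ha1 : a = i := by simpa using ha
    have hb1 : b = i := by simpa using hb
    subst ha1
    subst hb1
    exact SimpleGraph.Reachable.refl _
  · intro i j hij
    exact ⟨i, by simp, j, by simp, hij⟩
  · rw [E_card]
    unfold SimpleGraph.density
    have h0 : (0:ℝ) < Fintype.card V := by exact_mod_cast Fintype.card_pos
    rw [Nat.card_eq_fintype_card (α := V)]
    push_cast
    rw [mul_assoc, div_mul_cancel₀ _ h0.ne']

lemma St_max {V : Type} [Fintype V] {G : SimpleGraph V} {P : ℕ} {δ : ℝ} (hs : St G P δ) :
    ∃ (d : ℝ) (U : Type) (_ : Fintype U) (J : SimpleGraph U) (X : U → Finset V), δ ≤ d ∧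
      Mdl G J X ∧ (∀ i, (X i).card ≤ P) ∧ Nonempty U ∧ (∀ v, d ≤ (nb J v).card) ∧
      (∀ S : Finset U, ∑ x ∈ S, ((nb J x ∩ S).card : ℝ) ≤ 2 * d * S.card) ∧
      (E J:ℝ) = 2 * d * Fintype.card U := by
  obtain ⟨W, _, J, X, hM, hP, hne, hE⟩ := hs
  obtain ⟨S, d, hS, hd1, hd2, hd3, hd4⟩ := max_sub J
  have hW0 : (0:ℝ) < Fintype.card W := by exact_mod_cast Fintype.card_pos
  have hδd : δ ≤ d := by
    have : δ * (2 * Fintype.card W : ℝ) ≤ d * (2 * Fintype.card W : ℝ) := by linarith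
    exact le_of_mul_le_mul_right this (by positivity)
  obtain ⟨U, _, ι, hU, hι⟩ : ∃ (U : Type) (_ : Fintype U) (ι : U ↪ W), Nonempty U ∧ univ.map ι = S :=
    ⟨S, inferInstance, Function.Embedding.subtype _, hS.to_subtype, by ext y; simp⟩
  have hSc : Fintype.card U = S.card := by rw [← hι, card_map, card_univ]
  refine ⟨d, U, inferInstance, J.comap ι, _, hδd, mdl_induce hM ι, fun i => hP (ι i), hU, ?_, ?_, ?_⟩
  · intro v
    have := card_nb_induce J ι univ v
    rw [inter_univ, hι] at this
    rw [this]
    exact hd4 _ (by rw [← hι]; simp)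
  · intro T
    have := hd2 (T.map ι)
    rw [sum_map, card_map] at this
    simpa only [card_nb_induce] using this
  · rw [E_induce J ι S hι, hSc, ← hd3]; push_cast; rfl

theorem St_step {V : Type} [Fintype V] {G : SimpleGraph V} {P : ℕ} {δ : ℝ} (hs : St G P δ)
    (r q : ℕ) (hr : 1 ≤ r) (hq : q = 2 ^ r) (hqr : 10 ^ 6 * r ^ 3 ≤ q)
    (hd : 10 ^ 8 * (r:ℝ) ^ 3 * (q:ℝ) ^ 3 ≤ δ) :
    (∃ δ', δ ≤ δ' ∧ St G P δ' ∧ ∃ Q : Finset V, Q.Nonempty ∧ (Q.card : ℝ) ≤ (10 ^ 12 * ((r:ℝ) * q) ^ 5) * δ' * P ∧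
      δ' * Q.card ≤ (10 ^ 12 * ((r:ℝ) * q) ^ 5) * P * ∑ x ∈ Q, ((nb G x ∩ Q).card : ℝ)) ∨
    (∃ κ : ℕ, q ≤ κ ∧ St G (κ * P) ((1 - 12 / (q:ℝ)) * κ * δ)) := by
  obtain ⟨d, W, _, J, X, hδd, hM, hP, hne, hdeg, hmax, hsum⟩ := St_max hs
  have hδ0 : 0 ≤ δ := le_trans (by positivity) hd
  have hc0 : 0 ≤ 10 ^ 12 * ((r:ℝ) * q) ^ 5 := by positivity
  rcases step J Fintype.card_pos r q hr hq hqr d (hd.trans hδd) hdeg hmax hsum with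
    ⟨Q, hQ, hQ1, hQ2⟩ | ⟨W0, X0, Γ, κ, hW0, hκ, o1, o2, o3, o4, o5⟩
  · left
    have hQc : ((Q.biUnion X).card : ℝ) ≤ Q.card * P := by
      exact_mod_cast card_biUnion_le_card_mul _ _ _ (fun i _ => hP i)
    have hP0 : (0:ℝ) ≤ P := by positivity
    refine ⟨d, hδd, ⟨W, inferInstance, J, _, hM, hP, hne, hsum.ge⟩, Q.biUnion X, ?_, ?_, ?_⟩
    · obtain ⟨x, hx⟩ := hQ
      obtain ⟨⟨u, hu⟩⟩ := (hM.2.1 x).nonempty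
      exact ⟨u, mem_biUnion.2 ⟨x, hx, by simpa using hu⟩⟩
    · exact hQc.trans (mul_le_mul_of_nonneg_right hQ1 hP0)
    · have e1 : ∑ x ∈ Q, ((nb J x ∩ Q).card : ℝ) ≤
          ∑ u ∈ Q.biUnion X, ((nb G u ∩ Q.biUnion X).card : ℝ) := by
        exact_mod_cast mdl_count hM Q
      calc d * ((Q.biUnion X).card : ℝ) ≤ d * (Q.card * P) :=
            mul_le_mul_of_nonneg_left hQc (hδ0.trans hδd)
        _ = (d * Q.card) * P := by ring
        _ ≤ (10 ^ 12 * ((r:ℝ) * q) ^ 5 * ∑ x ∈ Q, ((nb J x ∩ Q).card : ℝ)) * P := mul_le_mul_of_nonneg_right hQ2 hP0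
        _ ≤ (10 ^ 12 * ((r:ℝ) * q) ^ 5 * ∑ u ∈ Q.biUnion X, ((nb G u ∩ Q.biUnion X).card : ℝ)) * P :=
            mul_le_mul_of_nonneg_right (mul_le_mul_of_nonneg_left e1 hc0) hP0
        _ = _ := by ring
  · right
    refine ⟨κ, hκ, W0, inferInstance, _, _, mdl_comp hM W0 X0 Γ o1 o2 o4, ?_,
      hW0.to_subtype, ?_⟩
    · intro i
      exact (card_biUnion_le_card_mul _ _ _ (fun j _ => hP j)).trans (Nat.mul_le_mul_right _ (o3 i.1 i.2))
    · rw [E_induce Γ _ W0 (by ext y; simp), Fintype.card_coe]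
      push_cast
      refine le_trans ?_ o5
      apply mul_le_mul_of_nonneg_right _ (by positivity)
      have hq12 : (0:ℝ) ≤ 1 - 12 / (q:ℝ) := by
        have : r ≤ r ^ 3 := Nat.le_self_pow (by norm_num) r
        have : 12 ≤ q := by omega
        have : (12:ℝ) ≤ q := by exact_mod_cast this
        have : 12 / (q:ℝ) ≤ 1 := by rw [div_le_one (by linarith)]; exact this
        linarith
      have : (1 - 12 / (q:ℝ)) * κ * δ ≤ (1 - 12 / (q:ℝ)) * κ * d :=
        mul_le_mul_of_nonneg_left hδd (mul_nonneg hq12 (by positivity))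
      linarith

lemma mk_sub {V : Type} [Fintype V] (G : SimpleGraph V) (Q : Finset V) (hQ : Q.Nonempty) :
    ∃ H : G.Subgraph, Nat.card H.verts = Q.card ∧
      (∑ x ∈ Q, ((nb G x ∩ Q).card : ℝ)) / (2 * Q.card) ≤ H.density := by
  have hv : Nat.card ((⊤ : G.Subgraph).induce (Q : Set V)).verts = Q.card := by
    rw [SimpleGraph.Subgraph.induce_verts]; simp
  refine ⟨(⊤ : G.Subgraph).induce (Q : Set V), hv, ?_⟩
  unfold SimpleGraph.Subgraph.density
  rw [hv, ← SimpleGraph.Subgraph.edgeSet_spanningCoe]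
  set H := ((⊤ : G.Subgraph).induce (Q : Set V)).spanningCoe with hH
  have h1 := E_card H
  have h2 : ∑ x ∈ Q, (nb G x ∩ Q).card ≤ E H := by
    refine le_trans (sum_le_sum ?_) (sum_le_sum_of_subset (subset_univ Q))
    intro x hx
    apply card_le_card
    intro y hy
    obtain ⟨a, b⟩ := mem_inter.1 hy
    rw [mem_nb, hH]
    simp [mem_nb.1 a, hx, b]
  have h0 : (0:ℝ) < Q.card := by exact_mod_cast card_pos.2 hQ
  rw [div_le_div_iff₀ (by positivity) h0]
  have h3 : (∑ x ∈ Q, ((nb G x ∩ Q).card : ℝ)) ≤ 2 * Nat.card H.edgeSet := by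
    rw [h1] at h2; exact_mod_cast h2
  have := mul_le_mul_of_nonneg_right h3 h0.le
  linarith
end DI

namespace DI
open Finset Classical

lemma pow_big (r : ℕ) (hr : 40 ≤ r) : 10 ^ 6 * r ^ 3 ≤ 2 ^ r := by
  induction r, hr using Nat.le_induction with
  | base => norm_num
  | succ n hn ih =>
    have h1 : (n + 1) ^ 3 ≤ 2 * n ^ 3 := by
      have e1 : 40 * n ^ 2 ≤ n * n ^ 2 := Nat.mul_le_mul_right _ hn
      have e2 : 40 * n ≤ n * n := Nat.mul_le_mul_right _ hn
      nlinarith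
    rw [pow_succ 2 n]
    omega

lemma choose_r (L : ℝ) (hL : 1 ≤ L) : ∃ r : ℕ, 40 ≤ r ∧ L ≤ (r:ℝ) * 2 ^ r ∧ (r:ℝ) * 2 ^ r ≤ 2 ^ 46 * L := by
  have hex : ∃ r : ℕ, 40 ≤ r ∧ L ≤ (r:ℝ) * 2 ^ r := by
    obtain ⟨n, hn⟩ := exists_nat_ge L
    refine ⟨n + 40, by omega, ?_⟩
    have e1 : (1:ℝ) ≤ 2 ^ (n + 40) := one_le_pow₀ (by norm_num)
    have e2 : (0:ℝ) ≤ ((n + 40 : ℕ) : ℝ) := by positivity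
    have e3 := mul_le_mul_of_nonneg_left e1 e2
    push_cast at e3 ⊢
    linarith
  obtain ⟨h1, h2⟩ := Nat.find_spec hex
  refine ⟨Nat.find hex, h1, h2, ?_⟩
  have hmin := fun m => Nat.find_min hex (m := m)
  generalize Nat.find hex = r at h1 h2 hmin ⊢
  rcases Nat.eq_or_lt_of_le h1 with h3 | h3
  · rw [← h3]; norm_num; linarith
  · obtain ⟨m, rfl⟩ : ∃ m, r = m + 1 := ⟨r - 1, by omega⟩
    have h4 := hmin m (by omega)
    have h5 : (m:ℝ) * 2 ^ m < L := by
      by_contra hcon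
      exact h4 ⟨by omega, by linarith⟩
    have hm1 : (1:ℝ) ≤ m := by exact_mod_cast (by omega : 1 ≤ m)
    have e1 : ((m + 1 : ℕ) : ℝ) * 2 ^ (m + 1) ≤ 4 * (m * 2 ^ m) := by
      push_cast
      rw [pow_succ]
      have : (0:ℝ) < 2 ^ m := by positivity
      nlinarith
    have : 4 * L ≤ 2 ^ 46 * L := mul_le_mul_of_nonneg_right (by norm_num) (by linarith)
    linarith

lemma beta_bound (q : ℕ) (hq : 24 ≤ q) (n : ℕ) (hn : n ≤ 5 * q) :
    1 ≤ Real.exp 120 * (1 - 12 / (q:ℝ)) ^ n := by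
  have hq' : (24:ℝ) ≤ q := by exact_mod_cast hq
  have hq0 : (0:ℝ) < q := by linarith
  have hx : 12 / (q:ℝ) ≤ 1 / 2 := by rw [div_le_iff₀ hq0]; linarith
  have hx0 : 0 ≤ 12 / (q:ℝ) := by positivity
  have h1 : 1 ≤ (1 - 12 / (q:ℝ)) * Real.exp (24 / (q:ℝ)) := by
    have e1 := Real.add_one_le_exp (24 / (q:ℝ))
    have e2 : (24:ℝ) / q = 2 * (12 / q) := by ring
    have e3 := mul_le_mul_of_nonneg_left e1 (by linarith : 0 ≤ 1 - 12 / (q:ℝ))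
    refine le_trans ?_ e3
    rw [e2]
    nlinarith
  have h2 := one_le_pow₀ h1 (n := n)
  rw [mul_pow, ← Real.exp_nat_mul] at h2
  have h3 : Real.exp (n * (24 / (q:ℝ))) ≤ Real.exp 120 := by
    apply Real.exp_le_exp.2
    have : (n:ℝ) ≤ 5 * q := by exact_mod_cast hn
    rw [mul_div_assoc', div_le_iff₀ hq0]
    linarith
  have h4 : 0 ≤ (1 - 12 / (q:ℝ)) ^ n := pow_nonneg (by linarith) _
  have := mul_le_mul_of_nonneg_left h3 h4
  linarith

/-- the outcome of the iteration -/
def Good {V : Type} [Fintype V] (G : SimpleGraph V) (D μ c K : ℝ) : Prop :=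
  ∃ Q : Finset V, Q.Nonempty ∧ (Q.card : ℝ) ≤ c * K * D ^ 2 / μ ∧
    μ * Q.card ≤ c * K * ∑ x ∈ Q, ((nb G x ∩ Q).card : ℝ)

lemma iterate {V : Type} [Fintype V] {G : SimpleGraph V} (μ D : ℝ) (hμ : 0 < μ) (h0 : St G 1 μ)
    (hD : ∀ P δ, St G P δ → δ < D)
    (r q : ℕ) (hr : 1 ≤ r) (hq : q = 2 ^ r) (hqr : 10 ^ 6 * r ^ 3 ≤ q)
    (hd : 10 ^ 8 * (r:ℝ) ^ 3 * (q:ℝ) ^ 3 ≤ μ)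
    (n : ℕ) (hn : n ≤ 5 * q) :
    Good G D μ (10 ^ 12 * ((r:ℝ) * q) ^ 5) (Real.exp 120) ∨
    ∃ (P : ℕ) (δ : ℝ), St G P δ ∧ μ * P * (1 - 12 / (q:ℝ)) ^ n ≤ δ ∧ μ * ((1 - 12 / (q:ℝ)) * q) ^ n ≤ δ := by
  have hr3 : r ≤ r ^ 3 := Nat.le_self_pow (by norm_num) r
  have hq24 : 24 ≤ q := by omega
  have hq24' : (24:ℝ) ≤ q := by exact_mod_cast hq24
  have hq0 : (0:ℝ) < q := by linarith
  have hx : 12 / (q:ℝ) ≤ 1 / 2 := by rw [div_le_iff₀ hq0]; linarith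
  have hβ0 : 0 ≤ 1 - 12 / (q:ℝ) := by linarith
  have hβq : 1 ≤ (1 - 12 / (q:ℝ)) * q := by
    have : (1 - 12 / (q:ℝ)) * q = q - 12 := by field_simp
    linarith
  induction n with
  | zero => right; exact ⟨1, μ, h0, by simp, by simp⟩
  | succ n ih =>
    rcases ih (by omega) with h | ⟨P, δ, hst, hδ1, hδ2⟩
    · exact Or.inl h
    have hμδ : μ ≤ δ := le_trans (le_mul_of_one_le_right hμ.le (one_le_pow₀ hβq)) hδ2
    rcases St_step hst r q hr hq hqr (hd.trans hμδ) with ⟨δ', hδ', hst', Q, hQ, hQ1, hQ2⟩ | ⟨κ, hκ, hst'⟩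
    · left
      have hc0 : 0 ≤ 10 ^ 12 * ((r:ℝ) * q) ^ 5 := by positivity
      generalize 10 ^ 12 * ((r:ℝ) * q) ^ 5 = c at hc0 hQ1 hQ2 ⊢
      have hb := beta_bound q hq24 n (by omega)
      have hK0 := Real.exp_pos 120
      generalize Real.exp 120 = K at hb hK0 ⊢
      have hP0 : (0:ℝ) ≤ P := by positivity
      have hδD : δ' < D := hD _ _ hst'
      have hδ0 : 0 < δ := by linarith
      have hPK : μ * P ≤ K * δ := by
        have e1 := mul_le_mul_of_nonneg_left hb (mul_nonneg hμ.le hP0)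
        have e2 := mul_le_mul_of_nonneg_left hδ1 hK0.le
        linarith
      refine ⟨Q, hQ, ?_, ?_⟩
      · rw [le_div_iff₀ hμ]
        have e1 := mul_le_mul_of_nonneg_right hQ1 hμ.le
        have e2 : c * δ' * (μ * P) ≤ c * D * (K * D) := by
          apply mul_le_mul
          · exact mul_le_mul_of_nonneg_left hδD.le hc0
          · exact hPK.trans (mul_le_mul_of_nonneg_left (by linarith) hK0.le)
          · positivity
          · exact mul_nonneg hc0 (by linarith)
        calc (Q.card : ℝ) * μ ≤ c * δ' * P * μ := e1
          _ = c * δ' * (μ * P) := by ring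
          _ ≤ c * D * (K * D) := e2
          _ = _ := by ring
      · have hS0 : 0 ≤ ∑ x ∈ Q, ((nb G x ∩ Q).card : ℝ) := sum_nonneg (fun _ _ => by positivity)
        have e1 : δ * Q.card ≤ c * P * ∑ x ∈ Q, ((nb G x ∩ Q).card : ℝ) :=
          le_trans (mul_le_mul_of_nonneg_right hδ' (by positivity)) hQ2
        have e2 := mul_le_mul_of_nonneg_left e1 hμ.le
        have e3 := mul_le_mul_of_nonneg_left hPK (mul_nonneg hc0 hS0)
        have e4 : δ * (μ * Q.card) ≤ δ * (c * K * ∑ x ∈ Q, ((nb G x ∩ Q).card : ℝ)) := by linarith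
        exact le_of_mul_le_mul_left e4 hδ0
    · right
      refine ⟨κ * P, _, hst', ?_, ?_⟩
      · have := mul_le_mul_of_nonneg_left hδ1 (mul_nonneg hβ0 (by positivity : (0:ℝ) ≤ κ))
        rw [pow_succ]
        push_cast
        linarith
      · have hκ' : (q:ℝ) ≤ κ := by exact_mod_cast hκ
        have e1 : (1 - 12 / (q:ℝ)) * q * δ ≤ (1 - 12 / (q:ℝ)) * κ * δ :=
          mul_le_mul_of_nonneg_right (mul_le_mul_of_nonneg_left hκ' hβ0) (by linarith)
        have e2 := mul_le_mul_of_nonneg_left hδ2 (by linarith : 0 ≤ (1 - 12 / (q:ℝ)) * q)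
        rw [pow_succ]
        linarith

lemma growth (r q : ℕ) (hr : 40 ≤ r) (hq : q = 2 ^ r) (hq24 : 24 ≤ q) :
    Real.exp ((r:ℝ) * q) ≤ ((1 - 12 / (q:ℝ)) * q) ^ (5 * q) := by
  have hq24' : (24:ℝ) ≤ q := by exact_mod_cast hq24
  have hq0 : (0:ℝ) < q := by linarith
  have h1 : (2:ℝ) ^ (r - 1) ≤ (1 - 12 / (q:ℝ)) * q := by
    have e1 : (1 - 12 / (q:ℝ)) * q = q - 12 := by field_simp
    have e2 : (q:ℝ) = 2 * 2 ^ (r - 1) := by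
      rw [hq, ← pow_succ']
      push_cast
      congr 1; omega
    rw [e1]; linarith
  calc Real.exp ((r:ℝ) * q) = Real.exp 1 ^ (r * q) := by
        rw [← Real.exp_nat_mul]; push_cast; ring_nf
    _ ≤ (4:ℝ) ^ (r * q) := pow_le_pow_left₀ (Real.exp_pos 1).le (by linarith [Real.exp_one_lt_d9]) _
    _ = (2:ℝ) ^ (2 * (r * q)) := by rw [pow_mul (2:ℝ) 2 (r * q)]; norm_num
    _ ≤ (2:ℝ) ^ ((r - 1) * (5 * q)) := by
        apply pow_le_pow_right₀ (by norm_num)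
        have : 2 * r ≤ 5 * (r - 1) := by omega
        calc 2 * (r * q) = (2 * r) * q := by ring
          _ ≤ (5 * (r - 1)) * q := Nat.mul_le_mul_right _ this
          _ = _ := by ring
    _ = ((2:ℝ) ^ (r - 1)) ^ (5 * q) := by rw [pow_mul]
    _ ≤ _ := pow_le_pow_left₀ (by positivity) h1 _

lemma final_sub {V : Type} [Fintype V] (G : SimpleGraph V) (D μ c : ℝ) (hμ : 0 < μ) (hc : 0 < c)
    (Q : Finset V) (hQ : Q.Nonempty) (h1 : (Q.card : ℝ) ≤ c * D ^ 2 / μ)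
    (h2 : 2 * μ * Q.card ≤ c * ∑ x ∈ Q, ((nb G x ∩ Q).card : ℝ)) :
    ∃ H : G.Subgraph, (Nat.card H.verts : ℝ) ≤ c * D ^ 2 / μ ∧ μ / c ≤ H.density := by
  obtain ⟨H, hH1, hH2⟩ := mk_sub G Q hQ
  have hQ0 : (0:ℝ) < Q.card := by exact_mod_cast card_pos.2 hQ
  refine ⟨H, by rw [hH1]; exact h1, le_trans ?_ hH2⟩
  rw [div_le_div_iff₀ hc (by positivity)]
  linarith

theorem main {V : Type} [Fintype V] (G : SimpleGraph V) (D : ℝ) (C : ℝ)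
    (hC : C = 2 * Real.exp 120 * 10 ^ 12 * (2 ^ 46) ^ 5) (hG : C ≤ G.density) :
    (∃ (W : Type) (_ : Finite W) (J : SimpleGraph W), G.HasMinor J ∧ D ≤ J.density) ∨
      (∃ H : G.Subgraph,
        (Nat.card H.verts : ℝ) ≤ C * (1 + Real.log (D / G.density)) ^ 5 * D ^ 2 / G.density ∧
        G.density / (C * (1 + Real.log (D / G.density)) ^ 5) ≤ H.density) := by
  by_cases hi : ∃ (W : Type) (_ : Finite W) (J : SimpleGraph W), G.HasMinor J ∧ D ≤ J.density
  · exact Or.inl hi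
  right
  have hD : ∀ P δ, St G P δ → δ < D := by
    intro P δ hs
    by_contra hcon
    push Not at hcon
    obtain ⟨W, hW, J, h1, h2⟩ := St_minor hs
    exact hi ⟨W, hW, J, h1, hcon.trans h2⟩
  have hK1 : 1 ≤ Real.exp 120 := Real.one_le_exp (by norm_num)
  have hC2 : 2 ≤ C := by rw [hC]; norm_num; linarith
  have hμ : 0 < G.density := by linarith
  have hV : Nonempty V := by
    by_contra hcon
    rw [not_nonempty_iff] at hcon
    have : G.density = 0 := by unfold SimpleGraph.density; simp
    linarith
  have h0 := St_self G
  have hedge : ∃ u v, G.Adj u v := by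
    by_contra hcon
    push Not at hcon
    have e1 : E G = 0 := by
      unfold E
      apply sum_eq_zero
      intro v _
      rw [card_eq_zero, eq_empty_iff_forall_notMem]
      intro w hw
      exact hcon v w (mem_nb.1 hw)
    have e2 := E_card G
    have : G.density = 0 := by
      unfold SimpleGraph.density
      have : Nat.card G.edgeSet = 0 := by omega
      rw [this]; simp
    linarith
  generalize G.density = μ at *
  have hμD : μ < D := hD _ _ h0
  have hs1 : 1 < D / μ := by rw [lt_div_iff₀ hμ]; linarith
  have hlog : 0 < Real.log (D / μ) := Real.log_pos hs1
  have hsL : D / μ ≤ Real.exp (1 + Real.log (D / μ)) := by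
    rw [Real.exp_add, Real.exp_log (by linarith)]
    exact le_mul_of_one_le_left (by linarith) (Real.one_le_exp (by norm_num))
  have hL1 : 1 ≤ 1 + Real.log (D / μ) := by linarith
  generalize 1 + Real.log (D / μ) = L at hsL hL1 ⊢
  obtain ⟨r, hr40, hr1, hr2⟩ := choose_r L hL1
  have hqr := pow_big r hr40
  obtain ⟨q, hq⟩ : ∃ q, q = 2 ^ r := ⟨_, rfl⟩
  rw [← hq] at hqr
  have hqR : (q:ℝ) = 2 ^ r := by rw [hq]; push_cast; rfl
  rw [← hqR] at hr1 hr2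
  have hL5 : 1 ≤ L ^ 5 := one_le_pow₀ hL1
  have hc5 : ((r:ℝ) * q) ^ 5 ≤ (2 ^ 46) ^ 5 * L ^ 5 := by
    rw [← mul_pow]
    exact pow_le_pow_left₀ (by positivity) hr2 5
  have hgC : 2 * (10 ^ 12 * ((r:ℝ) * q) ^ 5 * Real.exp 120) ≤ C * L ^ 5 := by
    have := mul_le_mul_of_nonneg_left hc5 (by positivity : 0 ≤ 2 * 10 ^ 12 * Real.exp 120)
    rw [hC]
    linarith
  have hcp : 0 < C * L ^ 5 := by positivity
  by_cases hbig : 10 ^ 8 * (r:ℝ) ^ 3 * (q:ℝ) ^ 3 ≤ μ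
  · rcases iterate μ D hμ h0 hD r q (by omega) hq hqr hbig (5 * q) le_rfl with ⟨Q, hQ, hQ1, hQ2⟩ | ⟨P, δ, hst, -, hδ⟩
    · refine final_sub G D μ (C * L ^ 5) hμ hcp Q hQ (hQ1.trans ?_) ?_
      · apply div_le_div_of_nonneg_right _ hμ.le
        apply mul_le_mul_of_nonneg_right _ (by positivity)
        have : 0 ≤ 10 ^ 12 * ((r:ℝ) * q) ^ 5 * Real.exp 120 := by positivity
        linarith
      · have hS0 : 0 ≤ ∑ x ∈ Q, ((nb G x ∩ Q).card : ℝ) := sum_nonneg (fun _ _ => by positivity)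
        have := mul_le_mul_of_nonneg_right hgC hS0
        linarith
    · exfalso
      have hr3 : r ≤ r ^ 3 := Nat.le_self_pow (by norm_num) r
      have e1 := growth r q hr40 hq (by omega)
      have e2 : D / μ ≤ ((1 - 12 / (q:ℝ)) * q) ^ (5 * q) :=
        hsL.trans ((Real.exp_le_exp.2 hr1).trans e1)
      rw [div_le_iff₀ hμ] at e2
      have := hD _ _ hst
      linarith
  · push Not at hbig
    have hsmall : 2 * μ ≤ C * L ^ 5 := by
      have hrq1 : 1 ≤ (r:ℝ) * q := hL1.trans hr1
      have e1 : ((r:ℝ) * q) ^ 3 ≤ ((r:ℝ) * q) ^ 5 := pow_le_pow_right₀ hrq1 (by norm_num)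
      have e2 : 10 ^ 8 * (r:ℝ) ^ 3 * (q:ℝ) ^ 3 = 10 ^ 8 * ((r:ℝ) * q) ^ 3 := by ring
      have e3 : 0 ≤ ((r:ℝ) * q) ^ 5 := by positivity
      have e4 := mul_le_mul_of_nonneg_left hK1 e3
      linarith
    obtain ⟨u, v, huv⟩ := hedge
    have hcard : ({u, v} : Finset V).card = 2 := card_pair huv.ne
    refine final_sub G D μ (C * L ^ 5) hμ hcp {u, v} ⟨u, by simp⟩ ?_ ?_
    · rw [hcard, le_div_iff₀ hμ]
      have e1 : μ * 1 ≤ D * D := mul_le_mul hμD.le (by linarith) (by norm_num) (by linarith)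
      have e2 : 2 * (μ * 1) ≤ C * L ^ 5 * (D * D) := by
        apply mul_le_mul _ e1 (by linarith) hcp.le
        linarith [mul_le_mul_of_nonneg_left hL5 (by linarith : 0 ≤ C)]
      push_cast
      rw [pow_two]
      linarith
    · rw [hcard, sum_pair huv.ne]
      have e1 : (1:ℝ) ≤ (nb G u ∩ {u, v}).card := by
        have : 0 < (nb G u ∩ {u, v}).card := card_pos.2 ⟨v, by simp [mem_nb, huv]⟩
        exact_mod_cast this
      have e2 : (1:ℝ) ≤ (nb G v ∩ {u, v}).card := by
        have : 0 < (nb G v ∩ {u, v}).card := card_pos.2 ⟨u, by simp [mem_nb, huv.symm]⟩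
        exact_mod_cast this
      have e3 : (2:ℝ) ≤ (nb G u ∩ {u, v}).card + (nb G v ∩ {u, v}).card := by linarith
      have := mul_le_mul_of_nonneg_left e3 hcp.le
      push_cast
      linarith
end DI

theorem density_increment :
    ∃ C : ℝ, 0 < C ∧ ∀ (V : Type) [Fintype V] (G : SimpleGraph V) (D : ℝ), 0 < D →
      C ≤ G.density →
      (∃ (W : Type) (_ : Finite W) (J : SimpleGraph W), G.HasMinor J ∧ D ≤ J.density) ∨
      (∃ H : G.Subgraph,
        (Nat.card H.verts : ℝ) ≤ C * (1 + Real.log (D / G.density)) ^ 5 * D ^ 2 / G.density ∧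
        G.density / (C * (1 + Real.log (D / G.density)) ^ 5) ≤ H.density) := by
  exact ⟨2 * Real.exp 120 * 10 ^ 12 * (2 ^ 46) ^ 5, by positivity, fun V _ G D _ hG => DI.main G D _ rfl hG⟩
end

section
/- For all reals K, d ≥ 1, all ε₁, ε₂ ∈ (0,1), and every graph G, at least one of the following holds: (i) there exists a subgraph H of G with v(H) ≤ 3Kd and e(H) ≥ ε₁·ε₂·d²/2, or (ii) G is (K, ε₁, ε₂, d)-unmated. -/
open SimpleGraph

/-- Two (distinct) vertices are `(ε, d)`-mates if they have at least `ε * d` common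
neighbours. -/
def SimpleGraph.IsMate {V : Type*} (G : SimpleGraph V) (ε d : ℝ) (u v : V) : Prop :=
  u ≠ v ∧ ε * d ≤ (Nat.card ↥(G.neighborSet u ∩ G.neighborSet v) : ℝ)

/-- `G` is `(K, ε₁, ε₂, d)`-unmated if every `(K, d)`-small vertex (one of degree at most
`K * d`) has strictly fewer than `ε₁ * d` vertices that are its `(ε₂, d)`-mates. -/
def SimpleGraph.Unmated {V : Type*} (G : SimpleGraph V) (K ε₁ ε₂ d : ℝ) : Prop :=
  ∀ v : V, (Nat.card (G.neighborSet v) : ℝ) ≤ K * d →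
    (Nat.card {u : V | G.IsMate ε₂ d u v} : ℝ) < ε₁ * d

/-- For all reals `K, d ≥ 1`, all `ε₁, ε₂ ∈ (0,1)` and every graph `G`, either (i) `G` has a
subgraph `H` with `v(H) ≤ 3 K d` and `e(H) ≥ ε₁ ε₂ d² / 2`, or (ii) `G` is
`(K, ε₁, ε₂, d)`-unmated. -/
theorem small_dense_or_unmated (K d ε₁ ε₂ : ℝ) (hK : 1 ≤ K) (hd : 1 ≤ d)
    (hε₁ : ε₁ ∈ Set.Ioo (0 : ℝ) 1) (hε₂ : ε₂ ∈ Set.Ioo (0 : ℝ) 1)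
    (V : Type) [Fintype V] (G : SimpleGraph V) :
    (∃ H : G.Subgraph, (Nat.card H.verts : ℝ) ≤ 3 * K * d ∧
        ε₁ * ε₂ * d ^ 2 / 2 ≤ (Nat.card H.edgeSet : ℝ)) ∨
    G.Unmated K ε₁ ε₂ d := by
  classical
  by_cases hU : G.Unmated K ε₁ ε₂ d
  · exact Or.inr hU
  left
  unfold SimpleGraph.Unmated at hU
  push Not at hU
  obtain ⟨v, hv, hm⟩ := hU
  obtain ⟨h1, h1'⟩ := hε₁
  obtain ⟨h2, h2'⟩ := hε₂
  have hpos : 0 ≤ ε₁ * d := by positivity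
  set M : Finset V := Finset.univ.filter (fun u => G.IsMate ε₂ d u v) with hM
  have hMc : Nat.card {u : V | G.IsMate ε₂ d u v} = M.card := by
    rw [Nat.card_coe_set_eq, ← Set.ncard_coe_finset]
    congr 1
    ext x
    simp [hM]
  rw [hMc] at hm
  obtain ⟨S, hSM, hSc⟩ := Finset.exists_subset_card_eq (Nat.ceil_le.2 hm)
  have hN : Nat.card (G.neighborSet v) = (G.neighborFinset v).card := by
    rw [Nat.card_coe_set_eq, ← Set.ncard_coe_finset]
    congr 1
    ext x
    simp
  set N := G.neighborFinset v with hNdef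
  have hS1 : ε₁ * d ≤ (S.card : ℝ) := by rw [hSc]; exact Nat.le_ceil _
  have hS2 : (S.card : ℝ) ≤ ε₁ * d + 1 := by rw [hSc]; exact (Nat.ceil_lt_add_one hpos).le
  refine ⟨(⊤ : G.Subgraph).induce ((S ∪ N : Finset V) : Set V), ?_, ?_⟩
  · have : Nat.card ((⊤ : G.Subgraph).induce ((S ∪ N : Finset V) : Set V)).verts
        = (S ∪ N).card := by
      rw [Nat.card_coe_set_eq, ← Set.ncard_coe_finset]
      rfl
    rw [this]
    have h3 : ((S ∪ N).card : ℝ) ≤ S.card + N.card := by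
      exact_mod_cast Finset.card_union_le S N
    rw [hN] at hv
    nlinarith
  · set H := (⊤ : G.Subgraph).induce ((S ∪ N : Finset V) : Set V) with hH
    let P : Finset (Σ _ : V, V) := S.sigma (fun u => N.filter (fun w => G.Adj u w))
    let f : (Σ _ : V, V) → Sym2 V := fun p => s(p.1, p.2)
    have hP : ε₁ * ε₂ * d ^ 2 ≤ (P.card : ℝ) := by
      have hs : (S.card : ℝ) * (ε₂ * d) ≤ (P.card : ℝ) := by
        rw [Finset.card_sigma]
        push_cast
        rw [← nsmul_eq_mul]
        refine Finset.card_nsmul_le_sum _ _ _ ?_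
        intro u hu
        have hu' := hSM hu
        rw [hM, Finset.mem_filter] at hu'
        have h4 := hu'.2.2
        have h5 : Nat.card ↥(G.neighborSet u ∩ G.neighborSet v)
            = (N.filter (fun w => G.Adj u w)).card := by
          rw [Nat.card_coe_set_eq, ← Set.ncard_coe_finset]
          congr 1
          ext x
          simp [hNdef, and_comm]
        rw [h5] at h4
        exact h4
      have : ε₁ * d * (ε₂ * d) ≤ (S.card : ℝ) * (ε₂ * d) :=
        mul_le_mul_of_nonneg_right hS1 (by positivity)
      nlinarith
    have hc : P.card ≤ 2 * (P.image f).card := by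
      refine Finset.card_le_mul_card_image _ _ ?_
      intro b hb
      induction b using Sym2.ind with
      | _ x y =>
        refine le_trans (Finset.card_le_card (t := {⟨x, y⟩, ⟨y, x⟩}) ?_) Finset.card_le_two
        rintro ⟨a, c⟩ hp
        have h6 := (Finset.mem_filter.1 hp).2
        simp only [f, Sym2.eq_iff] at h6
        rcases h6 with ⟨rfl, rfl⟩ | ⟨rfl, rfl⟩ <;> simp
    have hi : (P.image f).card ≤ Nat.card H.edgeSet := by
      rw [Nat.card_coe_set_eq, ← Set.ncard_coe_finset]
      refine Set.ncard_le_ncard ?_ (Set.toFinite _)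
      intro e he
      rw [Finset.mem_coe, Finset.mem_image] at he
      obtain ⟨⟨a, c⟩, hp, rfl⟩ := he
      simp only [P, Finset.mem_sigma, Finset.mem_filter] at hp
      simp only [f, Subgraph.mem_edgeSet, hH, Subgraph.induce_adj, Subgraph.top_adj]
      refine ⟨?_, ?_, hp.2.2⟩
      · exact Finset.mem_coe.2 (Finset.mem_union_left _ hp.1)
      · exact Finset.mem_coe.2 (Finset.mem_union_right _ hp.2.1)
    have : (P.card : ℝ) ≤ 2 * (Nat.card H.edgeSet : ℝ) := by
      exact_mod_cast hc.trans (Nat.mul_le_mul_left 2 hi)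
    linarith
end
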